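/- arXiv:1301.2221 — 9 statements merged into one kernel-verified Lean document; each statement's English description precedes it below -/
import Mathlib

section
/- For every λ₀ ∈ U, the shifted kernel extends continuously to the diagonal: S(λ₀,μ) tends to F(λ₀)·( x·p′(λ₀) + 2/c )/(2π) as μ → λ₀ with μ ≠ λ₀ (here p′ denotes the complex derivative of the holomorphic function p). -/
/-!
Write `l = l₀` and let `g m` be the bracket in `S l m`. At `m = l` the two terms are `1 / (i c)` and
`-1 / (i c)`, so `g l = 0`, and `S l m = -(c F(l) / 2π) * slope g l m` for `m ≠ l`. Hence the limit
is `-(c F(l) / 2π) * g'(l)`, and differentiating `g` (with `e' = (i x p' / 2) e`) gives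
`g'(l) = -x p'(l) / c - 2 / c ^ 2`.
-/


open Complex MeasureTheory Filter

/-- The shifted kernel extends continuously to the diagonal:
`S(λ₀,μ) → F(λ₀)(x p'(λ₀) + 2/c)/(2π)` as `μ → λ₀`, `μ ≠ λ₀`. -/
theorem shifted_kernel_diagonal_limit
    (a b c x : ℝ) (hab : a < b) (hc : 0 < c)
    (U : Set ℂ) (hU : IsOpen U)
    (hsub : ∀ t ∈ Set.Icc a b, (t : ℂ) ∈ U)
    (F p : ℂ → ℂ) (hF : DifferentiableOn ℂ F U) (hp : DifferentiableOn ℂ p U)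
    (e : ℂ → ℂ) (he : ∀ z, e z = Complex.exp (Complex.I * (x : ℂ) * p z / 2))
    (S : ℂ → ℂ → ℂ)
    (hS : ∀ l m, S l m =
      (Complex.I * (c : ℂ) * F l) / (2 * (Real.pi : ℂ) * Complex.I * (l - m)) *
        (e l * (e m)⁻¹ / (l - m + Complex.I * (c : ℂ)) +
          e m * (e l)⁻¹ / (l - m - Complex.I * (c : ℂ)))) :
    ∀ l₀ ∈ U,
      Tendsto (fun m => S l₀ m) (nhdsWithin l₀ {l₀}ᶜ)
        (nhds (F l₀ * ((x : ℂ) * deriv p l₀ + 2 / (c : ℂ)) / (2 * (Real.pi : ℂ)))) := by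
  intro l hl
  have hcC : (c : ℂ) ≠ 0 := by exact_mod_cast hc.ne'
  have hpi : (Real.pi : ℂ) ≠ 0 := by exact_mod_cast Real.pi_ne_zero
  have he0 : ∀ z, e z ≠ 0 := fun z => by rw [he]; exact Complex.exp_ne_zero _
  have hpd : HasDerivAt p (deriv p l) l := (hp.differentiableAt (hU.mem_nhds hl)).hasDerivAt
  have hed : HasDerivAt e (e l * (I * x * deriv p l / 2)) l := by
    rw [funext he]
    exact ((hpd.const_mul (I * (x : ℂ))).div_const 2).cexp
  have hd : HasDerivAt (fun m : ℂ => l - m) (-1) l := by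
    simpa using (hasDerivAt_id l).const_sub l
  have hIc : I * (c : ℂ) ≠ 0 := mul_ne_zero I_ne_zero hcC
  have hg : HasDerivAt (fun m => e l * (e m)⁻¹ / (l - m + I * (c : ℂ)) +
      e m * (e l)⁻¹ / (l - m - I * (c : ℂ))) (-(x : ℂ) * deriv p l / c - 2 / (c : ℂ) ^ 2) l := by
    have h1 := ((hed.fun_inv (he0 l)).const_mul (e l)).fun_div (hd.add_const (I * (c : ℂ)))
      (by simpa using hIc)
    have h2 := (hed.mul_const (e l)⁻¹).fun_div (hd.sub_const (I * (c : ℂ)))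
      (by simpa using hIc)
    refine (h1.fun_add h2).congr_deriv ?_
    have hel := he0 l
    have hI := I_ne_zero
    simp only [sub_self, zero_add, zero_sub]
    field_simp
    simp only [I_sq]
    ring
  have hlim := (hasDerivAt_iff_tendsto_slope.mp hg).const_mul (-((c : ℂ) * F l / (2 * Real.pi)))
  have hval : -((c : ℂ) * F l / (2 * Real.pi)) * (-(x : ℂ) * deriv p l / c - 2 / (c : ℂ) ^ 2) =
      F l * ((x : ℂ) * deriv p l + 2 / (c : ℂ)) / (2 * (Real.pi : ℂ)) := by
    field_simp
    ring
  rw [hval] at hlim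
  refine hlim.congr' ?_
  filter_upwards [self_mem_nhdsWithin] with m hm
  have hml : m - l ≠ 0 := sub_ne_zero.mpr hm
  have hlm : l - m = -(m - l) := by ring
  -- The bracket vanishes on the diagonal, so the slope is the bracket divided by `m - l`.
  have hzero : e l * (e l)⁻¹ / (l - l + I * (c : ℂ)) + e l * (e l)⁻¹ / (l - l - I * (c : ℂ)) = 0 := by
    rw [mul_inv_cancel₀ (he0 l), sub_self, zero_add, zero_sub, div_neg, add_neg_cancel]
  rw [hS, slope_def_field, hzero, sub_zero]
  generalize e l * (e m)⁻¹ / (l - m + I * (c : ℂ)) + e m * (e l)⁻¹ / (l - m - I * (c : ℂ)) = G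
  rw [hlm]
  have hI := I_ne_zero
  field_simp
end

section
/- Under the IIKS context, the two matrix-valued functions are mutual inverses: χ(z)·Ψ(z) = Ψ(z)·χ(z) = I_N for every z ∈ ℂ∖[a,b]. In particular χ(z) is invertible with χ(z)^{-1} = Ψ(z). -/
open Complex MeasureTheory

/-!
Write `χ = 1 - A` and `Ψ = 1 + B`, so that `χ Ψ = 1` amounts to `A B = B - A`. By Fubini, an entry
of `A B` is the double integral of `F_R(μ)_j ⟨E_L(μ), E_R(ν)⟩ F_L(ν)_k / ((μ - z)(ν - z))`.
The kernel identity replaces the pairing by `(μ - ν) V(μ, ν)`, and the partial fractions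
`(μ - ν) / ((μ - z)(ν - z)) = 1 / (ν - z) - 1 / (μ - z)` split this into two double integrals.
In the first the `μ`-integral is evaluated by the equation for `F_R`, in the second the
`ν`-integral by the equation for `F_L`; the terms in `F_R F_L` cancel, leaving `B - A`
(`cauchy_mul_cauchy`). The product in the other order follows since the matrices are square.
-/

/-- The entry `A B = B - A` of the matrix identity: the sum on the left is the `(j, k)` entry of the
product of the Cauchy transforms of `F_R E_L^T` and `E_R F_L^T`; here `f` and `g` are the entries
`F_R(·)_j` and `F_L(·)_k`, and `e`, `h` are `E_R(·)_j` and `E_L(·)_k`. -/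
lemma cauchy_mul_cauchy {a b : ℝ} {N : ℕ} {EL ER : ℝ → Fin N → ℂ} {f g e h : ℝ → ℂ}
    {V : ℝ → ℝ → ℂ} {z : ℂ}
    (hEL : ContinuousOn EL (Set.Icc a b)) (hER : ContinuousOn ER (Set.Icc a b))
    (hf : ContinuousOn f (Set.Icc a b)) (hg : ContinuousOn g (Set.Icc a b))
    (he : ContinuousOn e (Set.Icc a b)) (hh : ContinuousOn h (Set.Icc a b))
    (hVcont : ContinuousOn (fun q : ℝ × ℝ => V q.1 q.2) (Set.Icc a b ×ˢ Set.Icc a b))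
    (hVker : ∀ l ∈ Set.Icc a b, ∀ m ∈ Set.Icc a b,
      ((l : ℂ) - (m : ℂ)) * V l m = ∑ i, EL l i * ER m i)
    (hfe : ∀ l ∈ Set.Icc a b, f l + ∫ μ in Set.Icc a b, V μ l * f μ = e l)
    (hgh : ∀ l ∈ Set.Icc a b, g l + ∫ μ in Set.Icc a b, V l μ * g μ = h l)
    (hz : ∀ t ∈ Set.Icc a b, (t : ℂ) - z ≠ 0) :
    ∑ i, (∫ μ in Set.Icc a b, f μ * EL μ i / ((μ : ℂ) - z)) *
        (∫ μ in Set.Icc a b, ER μ i * g μ / ((μ : ℂ) - z)) =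
      (∫ μ in Set.Icc a b, e μ * g μ / ((μ : ℂ) - z)) -
        ∫ μ in Set.Icc a b, f μ * h μ / ((μ : ℂ) - z) := by
  have hw : ContinuousOn (fun t : ℝ => (t : ℂ) - z) (Set.Icc a b) := by fun_prop
  have hint : ∀ {u v : ℝ → ℂ}, ContinuousOn u (Set.Icc a b) → ContinuousOn v (Set.Icc a b) →
      Integrable (fun t => u t * v t / ((t : ℂ) - z)) (volume.restrict (Set.Icc a b)) :=
    fun hu hv => ((hu.mul hv).div hw hz).integrableOn_compact isCompact_Icc
  have hELi : ∀ i, ContinuousOn (fun t => EL t i) (Set.Icc a b) := continuousOn_pi.1 hEL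
  have hERi : ∀ i, ContinuousOn (fun t => ER t i) (Set.Icc a b) := continuousOn_pi.1 hER
  have hm1 : Set.MapsTo (Prod.fst : ℝ × ℝ → ℝ) (Set.Icc a b ×ˢ Set.Icc a b) (Set.Icc a b) :=
    fun p hp => hp.1
  have hm2 : Set.MapsTo (Prod.snd : ℝ × ℝ → ℝ) (Set.Icc a b ×ˢ Set.Icc a b) (Set.Icc a b) :=
    fun p hp => hp.2
  have hK : ContinuousOn (fun p : ℝ × ℝ => f p.1 * V p.1 p.2 * g p.2)
      (Set.Icc a b ×ˢ Set.Icc a b) :=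
    ((hf.comp continuousOn_fst hm1).mul hVcont).mul (hg.comp continuousOn_snd hm2)
  have hprod : (volume.restrict (Set.Icc a b)).prod (volume.restrict (Set.Icc a b)) =
      (volume : Measure (ℝ × ℝ)).restrict (Set.Icc a b ×ˢ Set.Icc a b) := by
    rw [Measure.prod_restrict]; rfl
  have hcpt : IsCompact (Set.Icc a b ×ˢ Set.Icc a b) := isCompact_Icc.prod isCompact_Icc
  have hI1 : Integrable (fun p : ℝ × ℝ => f p.1 * V p.1 p.2 * g p.2 / ((p.1 : ℂ) - z))
      ((volume.restrict (Set.Icc a b)).prod (volume.restrict (Set.Icc a b))) := by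
    rw [hprod]
    exact (hK.div (hw.comp continuousOn_fst hm1) fun p hp => hz _ hp.1).integrableOn_compact hcpt
  have hI2 : Integrable (fun p : ℝ × ℝ => f p.1 * V p.1 p.2 * g p.2 / ((p.2 : ℂ) - z))
      ((volume.restrict (Set.Icc a b)).prod (volume.restrict (Set.Icc a b))) := by
    rw [hprod]
    exact (hK.div (hw.comp continuousOn_snd hm2) fun p hp => hz _ hp.2).integrableOn_compact hcpt
  -- Fubini, the kernel identity and partial fractions.
  have key : ∑ i, (∫ μ in Set.Icc a b, f μ * EL μ i / ((μ : ℂ) - z)) *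
        (∫ μ in Set.Icc a b, ER μ i * g μ / ((μ : ℂ) - z)) =
      ∫ p, (f p.1 * V p.1 p.2 * g p.2 / ((p.2 : ℂ) - z) -
          f p.1 * V p.1 p.2 * g p.2 / ((p.1 : ℂ) - z))
        ∂((volume.restrict (Set.Icc a b)).prod (volume.restrict (Set.Icc a b))) := by
    simp_rw [← integral_prod_mul]
    rw [← integral_finsetSum _ fun i _ =>
      (hint hf (hELi i)).mul_prod (hint (hERi i) hg), hprod]
    refine setIntegral_congr_fun (measurableSet_Icc.prod measurableSet_Icc) fun p hp => ?_
    have h1 := hz _ hp.1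
    have h2 := hz _ hp.2
    calc ∑ i, f p.1 * EL p.1 i / ((p.1 : ℂ) - z) * (ER p.2 i * g p.2 / ((p.2 : ℂ) - z))
        = (∑ i, EL p.1 i * ER p.2 i) *
            (f p.1 * g p.2 / (((p.1 : ℂ) - z) * ((p.2 : ℂ) - z))) := by
          rw [Finset.sum_mul]
          refine Finset.sum_congr rfl fun i _ => ?_
          field_simp
      _ = _ := by
          rw [← hVker _ hp.1 _ hp.2]
          field_simp
          ring
  have hfst : ∫ p, f p.1 * V p.1 p.2 * g p.2 / ((p.2 : ℂ) - z)
        ∂((volume.restrict (Set.Icc a b)).prod (volume.restrict (Set.Icc a b))) =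
      (∫ μ in Set.Icc a b, e μ * g μ / ((μ : ℂ) - z)) -
        ∫ μ in Set.Icc a b, f μ * g μ / ((μ : ℂ) - z) := by
    rw [integral_prod_symm _ hI2, ← integral_sub (hint he hg) (hint hf hg)]
    refine setIntegral_congr_fun measurableSet_Icc fun l hl => ?_
    calc ∫ μ in Set.Icc a b, f μ * V μ l * g l / ((l : ℂ) - z)
        = ∫ μ in Set.Icc a b, V μ l * f μ * (g l / ((l : ℂ) - z)) := by
          congr 1; ext μ; ring
      _ = _ := by
          rw [integral_mul_const, eq_sub_of_add_eq' (hfe l hl)]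
          ring
  have hsnd : ∫ p, f p.1 * V p.1 p.2 * g p.2 / ((p.1 : ℂ) - z)
        ∂((volume.restrict (Set.Icc a b)).prod (volume.restrict (Set.Icc a b))) =
      (∫ μ in Set.Icc a b, f μ * h μ / ((μ : ℂ) - z)) -
        ∫ μ in Set.Icc a b, f μ * g μ / ((μ : ℂ) - z) := by
    rw [integral_prod _ hI1, ← integral_sub (hint hf hh) (hint hf hg)]
    refine setIntegral_congr_fun measurableSet_Icc fun l hl => ?_
    calc ∫ μ in Set.Icc a b, f l * V l μ * g μ / ((l : ℂ) - z)
        = ∫ μ in Set.Icc a b, V l μ * g μ * (f l / ((l : ℂ) - z)) := by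
          congr 1; ext μ; ring
      _ = _ := by
          rw [integral_mul_const, eq_sub_of_add_eq' (hgh l hl)]
          ring
  rw [key, integral_sub hI2 hI1, hfst, hsnd]
  ring

/-- IIKS setting: the matrices `χ(z) = I - ∫_a^b F_R E_L^T/(μ-z) dμ` and
`Ψ(z) = I + ∫_a^b E_R F_L^T/(μ-z) dμ` are mutual inverses on `ℂ ∖ [a,b]`. -/
theorem iiks_chi_psi_mutual_inverses
    (a b : ℝ) (hab : a < b) (N : ℕ) (hN : 1 ≤ N)
    (EL ER FL FR : ℝ → Fin N → ℂ)
    (hEL : ContinuousOn EL (Set.Icc a b)) (hER : ContinuousOn ER (Set.Icc a b))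
    (hFL : ContinuousOn FL (Set.Icc a b)) (hFR : ContinuousOn FR (Set.Icc a b))
    (V : ℝ → ℝ → ℂ)
    (hVcont : ContinuousOn (fun q : ℝ × ℝ => V q.1 q.2) (Set.Icc a b ×ˢ Set.Icc a b))
    (hVker : ∀ l ∈ Set.Icc a b, ∀ m ∈ Set.Icc a b,
      ((l : ℂ) - (m : ℂ)) * V l m = ∑ i, EL l i * ER m i)
    (hFRe : ∀ l ∈ Set.Icc a b, ∀ i,
      FR l i + ∫ μ in a..b, V μ l * FR μ i = ER l i)
    (hFLe : ∀ l ∈ Set.Icc a b, ∀ i,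
      FL l i + ∫ μ in a..b, V l μ * FL μ i = EL l i)
    (χ Ψ : ℂ → Matrix (Fin N) (Fin N) ℂ)
    (hχ : ∀ z ∉ (fun t : ℝ => (t : ℂ)) '' Set.Icc a b, ∀ j k,
      χ z j k = (1 : Matrix (Fin N) (Fin N) ℂ) j k -
        ∫ μ in a..b, FR μ j * EL μ k / ((μ : ℂ) - z))
    (hΨ : ∀ z ∉ (fun t : ℝ => (t : ℂ)) '' Set.Icc a b, ∀ j k,
      Ψ z j k = (1 : Matrix (Fin N) (Fin N) ℂ) j k +
        ∫ μ in a..b, ER μ j * FL μ k / ((μ : ℂ) - z)) :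
    ∀ z ∉ (fun t : ℝ => (t : ℂ)) '' Set.Icc a b,
      χ z * Ψ z = 1 ∧ Ψ z * χ z = 1 := by
  intro z hz
  have hz' : ∀ t ∈ Set.Icc a b, (t : ℂ) - z ≠ 0 := fun t ht h0 =>
    hz ⟨t, ht, sub_eq_zero.1 h0⟩
  simp only [intervalIntegral.integral_of_le hab.le, ← integral_Icc_eq_integral_Ioc]
    at hFRe hFLe hχ hΨ
  have hmain : χ z * Ψ z = 1 := by
    set A : Matrix (Fin N) (Fin N) ℂ :=
      Matrix.of fun j k => ∫ μ in Set.Icc a b, FR μ j * EL μ k / ((μ : ℂ) - z) with hA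
    set B : Matrix (Fin N) (Fin N) ℂ :=
      Matrix.of fun j k => ∫ μ in Set.Icc a b, ER μ j * FL μ k / ((μ : ℂ) - z) with hB
    have h1 : χ z = 1 - A := by ext j k; exact hχ z hz j k
    have h2 : Ψ z = 1 + B := by ext j k; exact hΨ z hz j k
    have hAB : A * B = B - A := by
      ext j k
      exact cauchy_mul_cauchy hEL hER (continuousOn_pi.1 hFR j) (continuousOn_pi.1 hFL k)
        (continuousOn_pi.1 hER j) (continuousOn_pi.1 hEL k) hVcont hVker
        (fun l hl => hFRe l hl j) (fun l hl => hFLe l hl k) hz'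
    rw [h1, h2, sub_mul, one_mul, mul_add, mul_one, hAB]
    abel
  exact ⟨hmain, mul_eq_one_comm.1 hmain⟩
end

section
/- Let c′ be a nonzero real number, n ∈ {1,…,N}, and let e_n ∈ ℂ^N be the n-th standard basis vector. Define U(λ,μ) = ⟨F_L(λ), χ(μ−ic′)·e_n⟩/(λ−μ+ic′) for λ, μ ∈ [a,b] (note μ−ic′ ∉ [a,b]). Then U solves the shifted integral equation: for all λ, μ ∈ [a,b], U(λ,μ) + ∫_a^b Ṽ(λ,τ)·U(τ,μ) dτ = ⟨E_L(λ), e_n⟩/(λ−μ+ic′). -/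
/-!
Write `z = m - ic'`, so that `l - m + ic' = l - z`. The identity
`1/(τ-z) = 1/(l-z) + (l-τ)/((l-z)(τ-z))`, the kernel relation for `(l-τ) V(l,τ)` and the integral
equation for `F_L` turn the left-hand side of the claim into `⟨E_L(l), Ψ(z) χ(z) e_n⟩/(l-z)`
(`shifted_kernel_integral`). It remains to know `Ψ(z) χ(z) = 1`.

No resolvent kernel, hence no invertibility of `1 + V`, is needed for this: inserting the two
integral equations into `∫ E_R F_Lᵀ/(μ-z) - ∫ F_R E_Lᵀ/(μ-z)`, the terms `F_R F_Lᵀ` cancel and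
what remains is a double integral which factors, by
`1/(μ-z) - 1/(ν-z) = (ν-μ)/((μ-z)(ν-z))` and the kernel relation (`cauchy_transform_sub`). This is
exactly `χ(z) Ψ(z) = 1`, and one-sided inverses of square matrices are two-sided.
-/

open Complex MeasureTheory

section IIKS

variable {a b : ℝ} {N : ℕ}

theorem sub_ne_zero_of_notMem_segment {z : ℂ}
    (hz : z ∉ (fun t : ℝ => (t : ℂ)) '' Set.Icc a b) {t : ℝ} (ht : t ∈ Set.Icc a b) :
    (t : ℂ) - z ≠ 0 :=
  fun h => hz ⟨t, ht, sub_eq_zero.mp h⟩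

theorem continuousOn_inv_sub {z : ℂ} (hz : z ∉ (fun t : ℝ => (t : ℂ)) '' Set.Icc a b) :
    ContinuousOn (fun t : ℝ => ((t : ℂ) - z)⁻¹) (Set.Icc a b) :=
  ContinuousOn.inv₀ (by fun_prop) fun _ ht => sub_ne_zero_of_notMem_segment hz ht

theorem integrable_prod_restrict_Icc {f : ℝ × ℝ → ℂ}
    (hf : ContinuousOn f (Set.Icc a b ×ˢ Set.Icc a b)) :
    Integrable f ((volume.restrict (Set.Icc a b)).prod (volume.restrict (Set.Icc a b))) := by
  rw [Measure.prod_restrict]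
  exact hf.integrableOn_compact (isCompact_Icc.prod isCompact_Icc)

/-- With `X = ∫ F_R E_Lᵀ/(μ-z)` and `Y = ∫ E_R F_Lᵀ/(μ-z)`, this is `Y - X = X Y`, that is
`(1 - X)(1 + Y) = 1`. -/
theorem cauchy_transform_sub
    {EL ER FL FR : ℝ → Fin N → ℂ}
    (hEL : ContinuousOn EL (Set.Icc a b)) (hER : ContinuousOn ER (Set.Icc a b))
    (hFL : ContinuousOn FL (Set.Icc a b)) (hFR : ContinuousOn FR (Set.Icc a b))
    {V : ℝ → ℝ → ℂ}
    (hVcont : ContinuousOn (fun q : ℝ × ℝ => V q.1 q.2) (Set.Icc a b ×ˢ Set.Icc a b))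
    (hVker : ∀ l ∈ Set.Icc a b, ∀ m ∈ Set.Icc a b,
      ((l : ℂ) - (m : ℂ)) * V l m = ∑ i, EL l i * ER m i)
    (hFRe : ∀ l ∈ Set.Icc a b, ∀ i,
      FR l i + ∫ μ in Set.Icc a b, V μ l * FR μ i = ER l i)
    (hFLe : ∀ l ∈ Set.Icc a b, ∀ i,
      FL l i + ∫ μ in Set.Icc a b, V l μ * FL μ i = EL l i)
    {z : ℂ} (hz : z ∉ (fun t : ℝ => (t : ℂ)) '' Set.Icc a b) (j k : Fin N) :
    (∫ μ in Set.Icc a b, ER μ j * FL μ k / ((μ : ℂ) - z)) -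
        (∫ μ in Set.Icc a b, FR μ j * EL μ k / ((μ : ℂ) - z)) =
      ∑ i, (∫ μ in Set.Icc a b, FR μ j * EL μ i / ((μ : ℂ) - z)) *
        ∫ μ in Set.Icc a b, ER μ i * FL μ k / ((μ : ℂ) - z) := by
  have hELc := fun i => (continuous_apply i).comp_continuousOn hEL
  have hERc := fun i => (continuous_apply i).comp_continuousOn hER
  have hFLc := fun i => (continuous_apply i).comp_continuousOn hFL
  have hFRc := fun i => (continuous_apply i).comp_continuousOn hFR
  have hw := continuousOn_inv_sub hz
  set ρ : Measure ℝ := volume.restrict (Set.Icc a b) with hρ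
  have fst {f : ℝ → ℂ} (hf : ContinuousOn f (Set.Icc a b)) :
      ContinuousOn (fun q : ℝ × ℝ => f q.1) (Set.Icc a b ×ˢ Set.Icc a b) :=
    hf.comp continuousOn_fst fun _ h => h.1
  have snd {f : ℝ → ℂ} (hf : ContinuousOn f (Set.Icc a b)) :
      ContinuousOn (fun q : ℝ × ℝ => f q.2) (Set.Icc a b ×ˢ Set.Icc a b) :=
    hf.comp continuousOn_snd fun _ h => h.2
  have hInt {f : ℝ → ℂ} (hf : ContinuousOn f (Set.Icc a b)) : Integrable f ρ :=
    hf.integrableOn_compact isCompact_Icc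
  have hK : ContinuousOn (fun q : ℝ × ℝ => FR q.1 j * V q.1 q.2 * FL q.2 k)
      (Set.Icc a b ×ˢ Set.Icc a b) :=
    ((fst (hFRc j)).mul hVcont).mul (snd (hFLc k))
  have hK1 : Integrable (fun q : ℝ × ℝ => FR q.1 j * V q.1 q.2 * FL q.2 k * ((q.1 : ℂ) - z)⁻¹)
      (ρ.prod ρ) := integrable_prod_restrict_Icc (hK.mul (fst hw))
  have hK2 : Integrable (fun q : ℝ × ℝ => FR q.1 j * V q.1 q.2 * FL q.2 k * ((q.2 : ℂ) - z)⁻¹)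
      (ρ.prod ρ) := integrable_prod_restrict_Icc (hK.mul (snd hw))
  have hFF : Integrable (fun μ : ℝ => FR μ j * FL μ k * ((μ : ℂ) - z)⁻¹) ρ :=
    hInt (((hFRc j).mul (hFLc k)).mul hw)
  have hY : (∫ μ, ER μ j * FL μ k / ((μ : ℂ) - z) ∂ρ) =
      (∫ μ, FR μ j * FL μ k * ((μ : ℂ) - z)⁻¹ ∂ρ) +
        ∫ q, FR q.1 j * V q.1 q.2 * FL q.2 k * ((q.2 : ℂ) - z)⁻¹ ∂(ρ.prod ρ) := by
    rw [← sub_eq_iff_eq_add', integral_prod_symm _ hK2, ← integral_sub ?_ hFF]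
    · refine setIntegral_congr_fun measurableSet_Icc fun μ hμ => ?_
      simp only [← hFRe μ hμ j]
      rw [add_mul, add_div, ← div_eq_mul_inv, add_sub_cancel_left, div_eq_mul_inv, mul_assoc,
        ← integral_mul_const]
      congr 1
      ext ν
      ring
    · simp only [div_eq_mul_inv]
      exact hInt (((hERc j).mul (hFLc k)).mul hw)
  have hX : (∫ ν, FR ν j * EL ν k / ((ν : ℂ) - z) ∂ρ) =
      (∫ ν, FR ν j * FL ν k * ((ν : ℂ) - z)⁻¹ ∂ρ) +
        ∫ q, FR q.1 j * V q.1 q.2 * FL q.2 k * ((q.1 : ℂ) - z)⁻¹ ∂(ρ.prod ρ) := by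
    rw [← sub_eq_iff_eq_add', integral_prod _ hK1, ← integral_sub ?_ hFF]
    · refine setIntegral_congr_fun measurableSet_Icc fun ν hν => ?_
      simp only [← hFLe ν hν k]
      rw [mul_add, add_div, ← div_eq_mul_inv, add_sub_cancel_left, mul_div_right_comm,
        ← integral_const_mul]
      congr 1
      ext μ
      ring
    · simp only [div_eq_mul_inv]
      exact hInt (((hFRc j).mul (hELc k)).mul hw)
  rw [hY, hX, add_sub_add_left_eq_sub, ← integral_sub hK2 hK1]
  simp_rw [← integral_prod_mul]
  rw [← integral_finsetSum]
  · rw [hρ, Measure.prod_restrict]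
    refine setIntegral_congr_fun (measurableSet_Icc.prod measurableSet_Icc) fun q hq => ?_
    have h1 := sub_ne_zero_of_notMem_segment hz hq.1
    have h2 := sub_ne_zero_of_notMem_segment hz hq.2
    have h3 := hVker q.1 hq.1 q.2 hq.2
    calc _ = FR q.1 j * FL q.2 k * (((q.1 : ℂ) - q.2) * V q.1 q.2) *
          (((q.1 : ℂ) - z)⁻¹ * ((q.2 : ℂ) - z)⁻¹) := by field_simp; ring
      _ = _ := by
        rw [h3, Finset.mul_sum, Finset.sum_mul]
        exact Finset.sum_congr rfl fun i _ => by simp only [div_eq_mul_inv]; ring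
  · intro i _
    simp only [div_eq_mul_inv]
    exact integrable_prod_restrict_Icc ((((fst (hFRc j)).mul (fst (hELc i))).mul (fst hw)).mul
      (((snd (hERc i)).mul (snd (hFLc k))).mul (snd hw)))

/-- The `i`-th entry of `(1 + V) (F_L/(· - z)) = Ψ(z)ᵀ E_L/(· - z)`. -/
theorem shifted_kernel_integral
    {EL ER FL : ℝ → Fin N → ℂ}
    (hER : ContinuousOn ER (Set.Icc a b)) (hFL : ContinuousOn FL (Set.Icc a b))
    {V : ℝ → ℝ → ℂ}
    (hVcont : ContinuousOn (fun q : ℝ × ℝ => V q.1 q.2) (Set.Icc a b ×ˢ Set.Icc a b))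
    (hVker : ∀ l ∈ Set.Icc a b, ∀ m ∈ Set.Icc a b,
      ((l : ℂ) - (m : ℂ)) * V l m = ∑ i, EL l i * ER m i)
    (hFLe : ∀ l ∈ Set.Icc a b, ∀ i,
      FL l i + ∫ μ in Set.Icc a b, V l μ * FL μ i = EL l i)
    {z : ℂ} (hz : z ∉ (fun t : ℝ => (t : ℂ)) '' Set.Icc a b)
    {l : ℝ} (hl : l ∈ Set.Icc a b) (i : Fin N) :
    FL l i / ((l : ℂ) - z) + ∫ τ in Set.Icc a b, V l τ * (FL τ i / ((τ : ℂ) - z)) =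
      (EL l i + ∑ j, EL l j * ∫ μ in Set.Icc a b, ER μ j * FL μ i / ((μ : ℂ) - z)) /
        ((l : ℂ) - z) := by
  have hERc := fun i => (continuous_apply i).comp_continuousOn hER
  have hFLc := fun i => (continuous_apply i).comp_continuousOn hFL
  have hw := continuousOn_inv_sub hz
  have hVl : ContinuousOn (fun τ => V l τ) (Set.Icc a b) :=
    hVcont.comp (f := fun τ : ℝ => (l, τ)) (by fun_prop) fun _ h => ⟨hl, h⟩
  have hlz := sub_ne_zero_of_notMem_segment hz hl
  have hj (j : Fin N) : Integrable (fun τ : ℝ => EL l j * (ER τ j * FL τ i / ((τ : ℂ) - z)))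
      (volume.restrict (Set.Icc a b)) := by
    simp only [div_eq_mul_inv]
    exact ((((hERc j).mul (hFLc i)).mul hw).integrableOn_compact isCompact_Icc).const_mul _
  have hVF : Integrable (fun τ : ℝ => V l τ * FL τ i) (volume.restrict (Set.Icc a b)) :=
    (hVl.mul (hFLc i)).integrableOn_compact isCompact_Icc
  have key : (∫ τ in Set.Icc a b, V l τ * (FL τ i / ((τ : ℂ) - z))) * ((l : ℂ) - z) =
      (∫ τ in Set.Icc a b, V l τ * FL τ i) +
        ∑ j, EL l j * ∫ μ in Set.Icc a b, ER μ j * FL μ i / ((μ : ℂ) - z) := by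
    simp_rw [← integral_const_mul]
    rw [← integral_finsetSum _ fun j _ => hj j, ← integral_mul_const,
      ← integral_add hVF (integrable_finsetSum _ fun j _ => hj j)]
    refine setIntegral_congr_fun measurableSet_Icc fun τ hτ => ?_
    have h2 := sub_ne_zero_of_notMem_segment hz hτ
    have h3 := hVker l hl τ hτ
    have h4 : ∑ j, EL l j * (ER τ j * FL τ i / ((τ : ℂ) - z)) =
        ((l : ℂ) - τ) * V l τ * (FL τ i / ((τ : ℂ) - z)) := by
      rw [h3, Finset.sum_mul]
      exact Finset.sum_congr rfl fun j _ => by ring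
    simp only [h4]
    field_simp
    ring
  rw [eq_div_iff hlz, add_mul, div_mul_cancel₀ _ hlz, key, ← add_assoc, hFLe l hl i]

end IIKS

/-- IIKS setting: the kernel `U(λ,μ) = ⟨F_L(λ), χ(μ-ic')e_n⟩/(λ-μ+ic')` solves the
shifted integral equation `U(λ,μ) + ∫_a^b Ṽ(λ,τ)U(τ,μ) dτ = ⟨E_L(λ),e_n⟩/(λ-μ+ic')`. -/
theorem iiks_shifted_resolvent_equation
    (a b : ℝ) (hab : a < b) (N : ℕ) (hN : 1 ≤ N)
    (EL ER FL FR : ℝ → Fin N → ℂ)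
    (hEL : ContinuousOn EL (Set.Icc a b)) (hER : ContinuousOn ER (Set.Icc a b))
    (hFL : ContinuousOn FL (Set.Icc a b)) (hFR : ContinuousOn FR (Set.Icc a b))
    (V : ℝ → ℝ → ℂ)
    (hVcont : ContinuousOn (fun q : ℝ × ℝ => V q.1 q.2) (Set.Icc a b ×ˢ Set.Icc a b))
    (hVker : ∀ l ∈ Set.Icc a b, ∀ m ∈ Set.Icc a b,
      ((l : ℂ) - (m : ℂ)) * V l m = ∑ i, EL l i * ER m i)
    (hFRe : ∀ l ∈ Set.Icc a b, ∀ i,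
      FR l i + ∫ μ in a..b, V μ l * FR μ i = ER l i)
    (hFLe : ∀ l ∈ Set.Icc a b, ∀ i,
      FL l i + ∫ μ in a..b, V l μ * FL μ i = EL l i)
    (χ Ψ : ℂ → Matrix (Fin N) (Fin N) ℂ)
    (hχ : ∀ z ∉ (fun t : ℝ => (t : ℂ)) '' Set.Icc a b, ∀ j k,
      χ z j k = (1 : Matrix (Fin N) (Fin N) ℂ) j k -
        ∫ μ in a..b, FR μ j * EL μ k / ((μ : ℂ) - z))
    (hΨ : ∀ z ∉ (fun t : ℝ => (t : ℂ)) '' Set.Icc a b, ∀ j k,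
      Ψ z j k = (1 : Matrix (Fin N) (Fin N) ℂ) j k +
        ∫ μ in a..b, ER μ j * FL μ k / ((μ : ℂ) - z))
    (c' : ℝ) (hc' : c' ≠ 0) (n : Fin N)
    (Uk : ℝ → ℝ → ℂ)
    (hUk : ∀ l m : ℝ, Uk l m =
      (∑ i, FL l i * (χ ((m : ℂ) - Complex.I * (c' : ℂ))).mulVec (Pi.single n 1) i) /
        ((l : ℂ) - (m : ℂ) + Complex.I * (c' : ℂ))) :
    ∀ l ∈ Set.Icc a b, ∀ m ∈ Set.Icc a b,
      Uk l m + ∫ τ in a..b, V l τ * Uk τ m =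
        EL l n / ((l : ℂ) - (m : ℂ) + Complex.I * (c' : ℂ)) := by
  simp only [intervalIntegral.integral_of_le hab.le, ← integral_Icc_eq_integral_Ioc] at *
  intro l hl m hm
  set z : ℂ := (m : ℂ) - Complex.I * (c' : ℂ) with hzdef
  have hz : z ∉ (fun t : ℝ => (t : ℂ)) '' Set.Icc a b := by
    rintro ⟨t, -, ht⟩
    have := congrArg Complex.im ht
    simp [hzdef] at this
    exact hc' this
  have hlz := sub_ne_zero_of_notMem_segment hz hl
  have hshift (t : ℝ) : (t : ℂ) - (m : ℂ) + Complex.I * (c' : ℂ) = (t : ℂ) - z := by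
    rw [hzdef]; ring
  have hU (t : ℝ) : Uk t m = ∑ i, χ z i n * (FL t i / ((t : ℂ) - z)) := by
    rw [hUk, hshift, Finset.sum_div]
    refine Finset.sum_congr rfl fun i _ => ?_
    rw [Matrix.mulVec_single_one, Matrix.col_apply]
    ring
  have hχΨ : χ z * Ψ z = 1 := by
    let X : Matrix (Fin N) (Fin N) ℂ :=
      Matrix.of fun j k => ∫ μ in Set.Icc a b, FR μ j * EL μ k / ((μ : ℂ) - z)
    let Y : Matrix (Fin N) (Fin N) ℂ :=
      Matrix.of fun j k => ∫ μ in Set.Icc a b, ER μ j * FL μ k / ((μ : ℂ) - z)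
    have hX : χ z = 1 - X := Matrix.ext fun j k => hχ z hz j k
    have hY : Ψ z = 1 + Y := Matrix.ext fun j k => hΨ z hz j k
    have hXY : Y - X = X * Y := Matrix.ext fun j k =>
      cauchy_transform_sub hEL hER hFL hFR hVcont hVker hFRe hFLe hz j k
    rw [hX, hY, sub_mul, one_mul, mul_add, mul_one, ← hXY]
    abel
  have hΨχ : Ψ z * χ z = 1 := mul_eq_one_comm.mp hχΨ
  have hVl : ContinuousOn (fun τ => V l τ) (Set.Icc a b) :=
    hVcont.comp (f := fun τ : ℝ => (l, τ)) (by fun_prop) fun _ h => ⟨hl, h⟩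
  have hInt (i : Fin N) : Integrable (fun τ : ℝ => χ z i n * (V l τ * (FL τ i / ((τ : ℂ) - z))))
      (volume.restrict (Set.Icc a b)) := by
    simp only [div_eq_mul_inv]
    exact ((hVl.mul (((continuous_apply i).comp_continuousOn hFL).mul
      (continuousOn_inv_sub hz))).integrableOn_compact isCompact_Icc).const_mul _
  have hVU : ∫ τ in Set.Icc a b, V l τ * Uk τ m =
      ∑ i, χ z i n * ∫ τ in Set.Icc a b, V l τ * (FL τ i / ((τ : ℂ) - z)) := by
    simp_rw [← integral_const_mul]
    rw [← integral_finsetSum _ fun i _ => hInt i]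
    congr 1
    ext τ
    rw [hU, Finset.mul_sum]
    exact Finset.sum_congr rfl fun i _ => by ring
  have hrow (i : Fin N) :
      EL l i + ∑ j, EL l j * ∫ μ in Set.Icc a b, ER μ j * FL μ i / ((μ : ℂ) - z) =
        Matrix.vecMul (EL l) (Ψ z) i := by
    simp only [Matrix.vecMul, dotProduct, hΨ z hz, mul_add, Finset.sum_add_distrib,
      Matrix.one_apply, mul_ite, mul_one, mul_zero, Finset.sum_ite_eq', Finset.mem_univ, if_true]
  rw [hVU, hU, hshift, ← Finset.sum_add_distrib]
  calc _ = (∑ i, Matrix.vecMul (EL l) (Ψ z) i * χ z i n) / ((l : ℂ) - z) := by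
        rw [Finset.sum_div]
        refine Finset.sum_congr rfl fun i _ => ?_
        rw [← mul_add, shifted_kernel_integral hER hFL hVcont hVker hFLe hz hl i, hrow]
        ring
    _ = Matrix.vecMul (Matrix.vecMul (EL l) (Ψ z)) (χ z) n / ((l : ℂ) - z) := rfl
    _ = EL l n / ((l : ℂ) - z) := by rw [Matrix.vecMul_vecMul, hΨχ, Matrix.vecMul_one]
end

section
/- Kernel form of the factorization (I+V) = (I+Ṽ)(I+W): let γ_1,…,γ_N ∈ ℂ, let c_1,…,c_N be nonzero reals, let v : {1,…,N} → {1,…,N}, and let e_k ∈ ℂ^N denote the k-th standard basis vector. Define W(λ,μ) = − Σ_{n=1}^{N} γ_n · ⟨F_L(λ), χ(μ−ic_n)·e_n⟩ · ⟨e_{v(n)}, E_R(μ)⟩ / (λ−μ+ic_n) for λ, μ ∈ [a,b]. Then for all λ, μ ∈ [a,b]: Ṽ(λ,μ) + W(λ,μ) + ∫_a^b Ṽ(λ,τ)·W(τ,μ) dτ = Ṽ(λ,μ) − Σ_{n=1}^{N} γ_n · ⟨E_L(λ), e_n⟩ · ⟨e_{v(n)}, E_R(μ)⟩ / (λ−μ+ic_n);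 that is, the composed kernel of (I+Ṽ)(I+W) equals the kernel V(λ,μ) of the operator with shifts. -/
/-!
Write `K = I + Ṽ` and let `ρ` be multiplication by `1 / (λ - z)`. Everything rests on the rank-`N`
commutator `(λ - μ) Ṽ(λ, μ) = ⟨E_L(λ), E_R(μ)⟩`. Splitting `λ - z = (λ - ν) + (ν - z)` under the
integral and using `K F_L = E_L` gives (`kernel_apply_div`)
`(λ - z) ∫ Ṽ(λ, ν) F_L(ν)_k / (ν - z) dν = (E_L(λ)ᵀ Ψ(z))_k - F_L(λ)_k`,
that is, `K ρ F_Lᵀ = ρ E_Lᵀ Ψ(z)`. Pairing this with `F_R` and moving `K` to the other side by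
Fubini, where `F_R K = E_R`, gives `Ψ(z) - I = (I - χ(z)) Ψ(z)`, that is, `χ(z) Ψ(z) = I`
(`chi_mul_psi`). No invertibility of `K` is needed. The matrices being square, also
`Ψ(z) χ(z) = I`, hence `K ρ ⟨F_L, χ(z) e_n⟩ = ρ ⟨E_L, Ψ(z) χ(z) e_n⟩ = ρ ⟨E_L, e_n⟩`
(`kernel_apply_dressed`). Taking `z = μ - i c_n` and summing over `n` yields the claim.
-/
open Complex MeasureTheory

section Factorization

variable {a b : ℝ} {N : ℕ} {EL ER FL FR : ℝ → Fin N → ℂ} {V : ℝ → ℝ → ℂ} {z : ℂ}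

lemma ofReal_sub_ne_zero_of_notMem_segment
    (hz : z ∉ (fun t : ℝ => (t : ℂ)) '' Set.Icc a b) {t : ℝ}
    (ht : t ∈ Set.Icc a b) : (t : ℂ) - z ≠ 0 :=
  fun h => hz ⟨t, ht, sub_eq_zero.mp h⟩

lemma continuousOn_div_sub (hz : z ∉ (fun t : ℝ => (t : ℂ)) '' Set.Icc a b) {f : ℝ → ℂ}
    (hf : ContinuousOn f (Set.Icc a b)) :
    ContinuousOn (fun t : ℝ => f t / ((t : ℂ) - z)) (Set.Icc a b) :=
  hf.div (by fun_prop) fun _ ht => ofReal_sub_ne_zero_of_notMem_segment hz ht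

lemma continuousOn_kernel_right
    (hV : ContinuousOn (fun q : ℝ × ℝ => V q.1 q.2) (Set.Icc a b ×ˢ Set.Icc a b))
    {l : ℝ} (hl : l ∈ Set.Icc a b) : ContinuousOn (fun t => V l t) (Set.Icc a b) :=
  hV.comp (f := fun t : ℝ => (l, t)) (by fun_prop) fun _ ht => ⟨hl, ht⟩

lemma integral_congr_Icc (hab : a ≤ b) {f g : ℝ → ℂ} (h : ∀ t ∈ Set.Icc a b, f t = g t) :
    ∫ t in a..b, f t = ∫ t in a..b, g t :=
  intervalIntegral.integral_congr fun t ht => h t (by rwa [Set.uIcc_of_le hab] at ht)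

/-- The commutator of the kernel with multiplication by `1 / (λ - z)`, evaluated on a solution of
the integral equation: `K ρ F_L = ρ E_Lᵀ Ψ(z)` in coordinates. -/
lemma kernel_apply_div (hab : a ≤ b)
    (hER : ContinuousOn ER (Set.Icc a b)) (hFL : ContinuousOn FL (Set.Icc a b))
    (hV : ContinuousOn (fun q : ℝ × ℝ => V q.1 q.2) (Set.Icc a b ×ˢ Set.Icc a b))
    (hVker : ∀ l ∈ Set.Icc a b, ∀ m ∈ Set.Icc a b,
      ((l : ℂ) - (m : ℂ)) * V l m = ∑ i, EL l i * ER m i)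
    (hFLe : ∀ l ∈ Set.Icc a b, ∀ i, FL l i + ∫ μ in a..b, V l μ * FL μ i = EL l i)
    (hz : z ∉ (fun t : ℝ => (t : ℂ)) '' Set.Icc a b) {Ψ : Matrix (Fin N) (Fin N) ℂ}
    (hΨ : ∀ j k, Ψ j k = (1 : Matrix (Fin N) (Fin N) ℂ) j k +
      ∫ μ in a..b, ER μ j * FL μ k / ((μ : ℂ) - z))
    {l : ℝ} (hl : l ∈ Set.Icc a b) (k : Fin N) :
    ((l : ℂ) - z) * ∫ t in a..b, V l t * (FL t k / ((t : ℂ) - z)) =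
      ∑ i, EL l i * Ψ i k - FL l k := by
  have hERi := continuousOn_pi.mp hER
  have hFLi := continuousOn_pi.mp hFL
  have hVl := continuousOn_kernel_right hV hl
  have hVF : ContinuousOn (fun t => V l t * FL t k) (Set.Icc a b) := hVl.mul (hFLi k)
  have hint : ∀ i, ContinuousOn (fun t => EL l i * (ER t i * FL t k / ((t : ℂ) - z)))
      (Set.Icc a b) := fun i =>
    continuousOn_const.mul (continuousOn_div_sub hz ((hERi i).mul (hFLi k)))
  have h1 : ((l : ℂ) - z) * ∫ t in a..b, V l t * (FL t k / ((t : ℂ) - z)) =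
      ∫ t in a..b, (V l t * FL t k + ∑ i, EL l i * (ER t i * FL t k / ((t : ℂ) - z))) := by
    rw [← intervalIntegral.integral_const_mul]
    refine integral_congr_Icc hab fun t ht => ?_
    have hne := ofReal_sub_ne_zero_of_notMem_segment hz ht
    have hs : ∑ i, EL l i * (ER t i * FL t k / ((t : ℂ) - z)) =
        ((l : ℂ) - t) * V l t * (FL t k / ((t : ℂ) - z)) := by
      rw [hVker l hl t ht, Finset.sum_mul]
      exact Finset.sum_congr rfl fun i _ => by ring
    rw [hs]
    field_simp
    ring
  rw [h1, intervalIntegral.integral_add (hVF.intervalIntegrable_of_Icc hab)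
      ((continuousOn_finsetSum _ fun i _ => hint i).intervalIntegrable_of_Icc hab),
    intervalIntegral.integral_finsetSum fun i _ => (hint i).intervalIntegrable_of_Icc hab]
  simp only [intervalIntegral.integral_const_mul, hΨ, mul_add, Finset.sum_add_distrib,
    Matrix.one_apply, mul_ite, mul_one, mul_zero, Finset.sum_ite_eq', Finset.mem_univ, if_true]
  rw [← hFLe l hl k]
  ring

/-- `χ(z)` is a left inverse of `Ψ(z)`. -/
lemma chi_mul_psi (hab : a ≤ b)
    (hEL : ContinuousOn EL (Set.Icc a b)) (hER : ContinuousOn ER (Set.Icc a b))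
    (hFL : ContinuousOn FL (Set.Icc a b)) (hFR : ContinuousOn FR (Set.Icc a b))
    (hV : ContinuousOn (fun q : ℝ × ℝ => V q.1 q.2) (Set.Icc a b ×ˢ Set.Icc a b))
    (hVker : ∀ l ∈ Set.Icc a b, ∀ m ∈ Set.Icc a b,
      ((l : ℂ) - (m : ℂ)) * V l m = ∑ i, EL l i * ER m i)
    (hFRe : ∀ l ∈ Set.Icc a b, ∀ i, FR l i + ∫ μ in a..b, V μ l * FR μ i = ER l i)
    (hFLe : ∀ l ∈ Set.Icc a b, ∀ i, FL l i + ∫ μ in a..b, V l μ * FL μ i = EL l i)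
    (hz : z ∉ (fun t : ℝ => (t : ℂ)) '' Set.Icc a b) {χ Ψ : Matrix (Fin N) (Fin N) ℂ}
    (hχ : ∀ j k, χ j k = (1 : Matrix (Fin N) (Fin N) ℂ) j k -
      ∫ μ in a..b, FR μ j * EL μ k / ((μ : ℂ) - z))
    (hΨ : ∀ j k, Ψ j k = (1 : Matrix (Fin N) (Fin N) ℂ) j k +
      ∫ μ in a..b, ER μ j * FL μ k / ((μ : ℂ) - z)) :
    χ * Ψ = 1 := by
  have hELi := continuousOn_pi.mp hEL
  have hERi := continuousOn_pi.mp hER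
  have hFLi := continuousOn_pi.mp hFL
  have hFRi := continuousOn_pi.mp hFR
  have key : ∀ j k, ∫ t in a..b, ER t j * FL t k / ((t : ℂ) - z) =
      ∑ i, (∫ t in a..b, FR t j * EL t i / ((t : ℂ) - z)) * Ψ i k := by
    intro j k
    have hsum : ∀ i, ContinuousOn (fun t => FR t j * EL t i / ((t : ℂ) - z) * Ψ i k)
        (Set.Icc a b) := fun i =>
      (continuousOn_div_sub hz ((hFRi j).mul (hELi i))).mul continuousOn_const
    have hRL : ContinuousOn (fun t => FR t j * FL t k / ((t : ℂ) - z)) (Set.Icc a b) :=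
      continuousOn_div_sub hz ((hFRi j).mul (hFLi k))
    have hERL : ContinuousOn (fun t => ER t j * FL t k / ((t : ℂ) - z)) (Set.Icc a b) :=
      continuousOn_div_sub hz ((hERi j).mul (hFLi k))
    have hswap : ∫ s in a..b, ∫ t in a..b, V t s * FR t j * (FL s k / ((s : ℂ) - z)) =
        ∫ t in a..b, ∫ s in a..b, V t s * FR t j * (FL s k / ((s : ℂ) - z)) := by
      refine (intervalIntegral_intervalIntegral_swap
        (F := fun t s => V t s * FR t j * (FL s k / ((s : ℂ) - z))) ?_).symm
      have hc : ContinuousOn (fun q : ℝ × ℝ => V q.1 q.2 * FR q.1 j * (FL q.2 k / ((q.2 : ℂ) - z)))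
          (Set.Icc a b ×ˢ Set.Icc a b) :=
        (hV.mul ((hFRi j).comp continuousOn_fst fun q hq => hq.1)).mul
          ((continuousOn_div_sub hz (hFLi k)).comp continuousOn_snd fun q hq => hq.2)
      rw [Set.uIoc_of_le hab]
      exact (hc.integrableOn_compact (isCompact_Icc.prod isCompact_Icc)).mono_set
        (Set.prod_mono Set.Ioc_subset_Icc_self Set.Ioc_subset_Icc_self)
    have hleft : ∫ s in a..b, ∫ t in a..b, V t s * FR t j * (FL s k / ((s : ℂ) - z)) =
        (∫ s in a..b, ER s j * FL s k / ((s : ℂ) - z)) -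
          ∫ s in a..b, FR s j * FL s k / ((s : ℂ) - z) := by
      rw [← intervalIntegral.integral_sub (hERL.intervalIntegrable_of_Icc hab)
        (hRL.intervalIntegrable_of_Icc hab)]
      refine integral_congr_Icc hab fun s hs => ?_
      rw [intervalIntegral.integral_mul_const, ← hFRe s hs j]
      ring
    have hright : ∫ t in a..b, ∫ s in a..b, V t s * FR t j * (FL s k / ((s : ℂ) - z)) =
        (∑ i, (∫ t in a..b, FR t j * EL t i / ((t : ℂ) - z)) * Ψ i k) -
          ∫ s in a..b, FR s j * FL s k / ((s : ℂ) - z) := by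
      simp only [← intervalIntegral.integral_mul_const]
      rw [← intervalIntegral.integral_finsetSum
          fun i _ => (hsum i).intervalIntegrable_of_Icc hab,
        ← intervalIntegral.integral_sub
          ((continuousOn_finsetSum _ fun i _ => hsum i).intervalIntegrable_of_Icc hab)
          (hRL.intervalIntegrable_of_Icc hab)]
      refine integral_congr_Icc hab fun t ht => ?_
      have hne := ofReal_sub_ne_zero_of_notMem_segment hz ht
      have hk := kernel_apply_div hab hER hFL hV hVker hFLe hz hΨ ht k
      have h1 : ∫ s in a..b, V t s * FR t j * (FL s k / ((s : ℂ) - z)) =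
          FR t j * ∫ s in a..b, V t s * (FL s k / ((s : ℂ) - z)) := by
        rw [← intervalIntegral.integral_const_mul]
        exact integral_congr_Icc hab fun s _ => by ring
      have h2 : ∑ i, FR t j * EL t i / ((t : ℂ) - z) * Ψ i k =
          FR t j / ((t : ℂ) - z) * ∑ i, EL t i * Ψ i k := by
        rw [Finset.mul_sum]
        exact Finset.sum_congr rfl fun i _ => by ring
      rw [h1, h2, eq_add_of_sub_eq hk.symm]
      field_simp
      ring
    exact sub_left_injective (hleft.symm.trans (hswap.trans hright))
  have hmat : (1 - χ) * Ψ = Ψ - 1 := by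
    ext j k
    rw [Matrix.mul_apply, Matrix.sub_apply, hΨ j k, key j k, add_sub_cancel_left]
    exact Finset.sum_congr rfl fun i _ => by rw [Matrix.sub_apply, hχ j i, sub_sub_cancel]
  rw [sub_mul, one_mul] at hmat
  exact sub_right_injective hmat

/-- `I + Ṽ` maps `⟨F_L, χ(z) eₙ⟩ / (λ - z)` to `⟨E_L, eₙ⟩ / (λ - z)`. -/
lemma kernel_apply_dressed (hab : a ≤ b)
    (hER : ContinuousOn ER (Set.Icc a b)) (hFL : ContinuousOn FL (Set.Icc a b))
    (hV : ContinuousOn (fun q : ℝ × ℝ => V q.1 q.2) (Set.Icc a b ×ˢ Set.Icc a b))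
    (hVker : ∀ l ∈ Set.Icc a b, ∀ m ∈ Set.Icc a b,
      ((l : ℂ) - (m : ℂ)) * V l m = ∑ i, EL l i * ER m i)
    (hFLe : ∀ l ∈ Set.Icc a b, ∀ i, FL l i + ∫ μ in a..b, V l μ * FL μ i = EL l i)
    (hz : z ∉ (fun t : ℝ => (t : ℂ)) '' Set.Icc a b) {χ Ψ : Matrix (Fin N) (Fin N) ℂ}
    (hΨ : ∀ j k, Ψ j k = (1 : Matrix (Fin N) (Fin N) ℂ) j k +
      ∫ μ in a..b, ER μ j * FL μ k / ((μ : ℂ) - z))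
    (hΨχ : Ψ * χ = 1) {l : ℝ} (hl : l ∈ Set.Icc a b) (n : Fin N) :
    (∑ i, FL l i * χ i n) / ((l : ℂ) - z) +
      ∫ t in a..b, V l t * ((∑ i, FL t i * χ i n) / ((t : ℂ) - z)) =
      EL l n / ((l : ℂ) - z) := by
  have hFLi := continuousOn_pi.mp hFL
  have hne := ofReal_sub_ne_zero_of_notMem_segment hz hl
  have hint : ∀ i, ContinuousOn (fun t => V l t * (FL t i / ((t : ℂ) - z)) * χ i n)
      (Set.Icc a b) := fun i =>
    ((continuousOn_kernel_right hV hl).mul (continuousOn_div_sub hz (hFLi i))).mul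
      continuousOn_const
  have h1 : ∫ t in a..b, V l t * ((∑ i, FL t i * χ i n) / ((t : ℂ) - z)) =
      ∑ i, (∫ t in a..b, V l t * (FL t i / ((t : ℂ) - z))) * χ i n := by
    simp only [← intervalIntegral.integral_mul_const]
    rw [← intervalIntegral.integral_finsetSum fun i _ => (hint i).intervalIntegrable_of_Icc hab]
    refine integral_congr_Icc hab fun t _ => ?_
    simp only [Finset.sum_div, Finset.mul_sum]
    exact Finset.sum_congr rfl fun i _ => by ring
  have h2 : ((l : ℂ) - z) * ∑ i, (∫ t in a..b, V l t * (FL t i / ((t : ℂ) - z))) * χ i n =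
      EL l n - ∑ i, FL l i * χ i n := by
    have h3 : ∑ k, (∑ i, EL l i * Ψ i k) * χ k n = EL l n := by
      have h4 : Matrix.vecMul (Matrix.vecMul (EL l) Ψ) χ n = EL l n := by
        rw [Matrix.vecMul_vecMul, hΨχ, Matrix.vecMul_one]
      simpa only [Matrix.vecMul, dotProduct] using h4
    rw [← h3, ← Finset.sum_sub_distrib, Finset.mul_sum]
    refine Finset.sum_congr rfl fun i _ => ?_
    rw [← mul_assoc, kernel_apply_div hab hER hFL hV hVker hFLe hz hΨ hl i]
    ring
  rw [h1, div_add' _ _ _ hne, mul_comm _ ((l : ℂ) - z), h2, add_sub_cancel]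

end Factorization

/-- IIKS setting: kernel form of the factorization `(I+V) = (I+Ṽ)(I+W)` where
`W(λ,μ) = -Σₙ γₙ ⟨F_L(λ), χ(μ-icₙ)eₙ⟩⟨e_{v(n)}, E_R(μ)⟩/(λ-μ+icₙ)`: the composed
kernel of `(I+Ṽ)(I+W)` equals the kernel of the operator with shifts. -/
theorem iiks_factorization_kernel_identity
    (a b : ℝ) (hab : a < b) (N : ℕ) (hN : 1 ≤ N)
    (EL ER FL FR : ℝ → Fin N → ℂ)
    (hEL : ContinuousOn EL (Set.Icc a b)) (hER : ContinuousOn ER (Set.Icc a b))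
    (hFL : ContinuousOn FL (Set.Icc a b)) (hFR : ContinuousOn FR (Set.Icc a b))
    (V : ℝ → ℝ → ℂ)
    (hVcont : ContinuousOn (fun q : ℝ × ℝ => V q.1 q.2) (Set.Icc a b ×ˢ Set.Icc a b))
    (hVker : ∀ l ∈ Set.Icc a b, ∀ m ∈ Set.Icc a b,
      ((l : ℂ) - (m : ℂ)) * V l m = ∑ i, EL l i * ER m i)
    (hFRe : ∀ l ∈ Set.Icc a b, ∀ i,
      FR l i + ∫ μ in a..b, V μ l * FR μ i = ER l i)
    (hFLe : ∀ l ∈ Set.Icc a b, ∀ i,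
      FL l i + ∫ μ in a..b, V l μ * FL μ i = EL l i)
    (χ Ψ : ℂ → Matrix (Fin N) (Fin N) ℂ)
    (hχ : ∀ z ∉ (fun t : ℝ => (t : ℂ)) '' Set.Icc a b, ∀ j k,
      χ z j k = (1 : Matrix (Fin N) (Fin N) ℂ) j k -
        ∫ μ in a..b, FR μ j * EL μ k / ((μ : ℂ) - z))
    (hΨ : ∀ z ∉ (fun t : ℝ => (t : ℂ)) '' Set.Icc a b, ∀ j k,
      Ψ z j k = (1 : Matrix (Fin N) (Fin N) ℂ) j k +
        ∫ μ in a..b, ER μ j * FL μ k / ((μ : ℂ) - z))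
    (γ : Fin N → ℂ) (cs : Fin N → ℝ) (hcs : ∀ k, cs k ≠ 0) (v : Fin N → Fin N)
    (W : ℝ → ℝ → ℂ)
    (hW : ∀ l m : ℝ, W l m =
      -∑ k, γ k *
        (∑ i, FL l i * (χ ((m : ℂ) - Complex.I * (cs k : ℂ))).mulVec (Pi.single k 1) i) *
          ER m (v k) / ((l : ℂ) - (m : ℂ) + Complex.I * (cs k : ℂ))) :
    ∀ l ∈ Set.Icc a b, ∀ m ∈ Set.Icc a b,
      V l m + W l m + ∫ τ in a..b, V l τ * W τ m =
        V l m - ∑ k, γ k * EL l k * ER m (v k) /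
          ((l : ℂ) - (m : ℂ) + Complex.I * (cs k : ℂ)) := by
  intro l hl m hm
  have hFLi := continuousOn_pi.mp hFL
  have hz : ∀ n, (m : ℂ) - Complex.I * (cs n : ℂ) ∉ (fun t : ℝ => (t : ℂ)) '' Set.Icc a b := by
    rintro n ⟨t, -, ht⟩
    have := congrArg Complex.im ht
    simp [hcs n] at this
  set z : Fin N → ℂ := fun n => (m : ℂ) - Complex.I * (cs n : ℂ) with hzdef
  have hden : ∀ (t : ℝ) n, (t : ℂ) - (m : ℂ) + Complex.I * (cs n : ℂ) = (t : ℂ) - z n :=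
    fun t n => by rw [hzdef]; ring
  have hWm : ∀ t, W t m =
      -∑ n, γ n * ER m (v n) * ((∑ i, FL t i * χ (z n) i n) / ((t : ℂ) - z n)) := by
    intro t
    rw [hW]
    congr 1
    refine Finset.sum_congr rfl fun n _ => ?_
    rw [hden, Matrix.mulVec_single_one]
    simp only [Matrix.col_apply]
    ring
  have hint : ∀ n, ContinuousOn (fun t => γ n * ER m (v n) *
      (V l t * ((∑ i, FL t i * χ (z n) i n) / ((t : ℂ) - z n)))) (Set.Icc a b) := fun n =>
    continuousOn_const.mul ((continuousOn_kernel_right hVcont hl).mul (continuousOn_div_sub (hz n)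
      (continuousOn_finsetSum _ fun i _ => (hFLi i).mul continuousOn_const)))
  have hI : ∫ τ in a..b, V l τ * W τ m = -∑ n, γ n * ER m (v n) *
      ∫ t in a..b, V l t * ((∑ i, FL t i * χ (z n) i n) / ((t : ℂ) - z n)) := by
    simp only [← intervalIntegral.integral_const_mul]
    rw [← intervalIntegral.integral_finsetSum
        fun n _ => (hint n).intervalIntegrable_of_Icc hab.le, ← intervalIntegral.integral_neg]
    refine integral_congr_Icc hab.le fun t _ => ?_
    rw [hWm, mul_neg, Finset.mul_sum]
    congr 1
    exact Finset.sum_congr rfl fun n _ => by ring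
  rw [hI, hWm, add_assoc, ← neg_add, ← Finset.sum_add_distrib, ← sub_eq_add_neg]
  congr 1
  refine Finset.sum_congr rfl fun n _ => ?_
  have hχΨ := chi_mul_psi hab.le hEL hER hFL hFR hVcont hVker hFRe hFLe (hz n)
    (hχ _ (hz n)) (hΨ _ (hz n))
  rw [← mul_add, kernel_apply_dressed hab.le hER hFL hVcont hVker hFLe (hz n) (hΨ _ (hz n))
    (mul_eq_one_comm.mp hχΨ) hl n, hden]
  ring
end

section
/- Trace identity moving the determinant to a contour (kernel-level content of the identity det_{[a,b]}[I+W] = det_Γ[I+M]): with the cyclic conventions λ_{n+1} = λ_1, z_{n+1} = z_1 and τ_0 = τ_n, one has ∫_{[a,b]} … ∫_{[a,b]} ∏_{p=1}^{n} [ ⟨F_L(λ_p), χ(λ_{p+1} − i c_{τ_p})·e_{τ_p}⟩ · ⟨e_{v(τ_p)}, E_R(λ_{p+1})⟩ / (λ_p − λ_{p+1} + i c_{τ_p}) ] dλ_1 ⋯ dλ_n = (−1)^n (2πi)^{−n} ∮_Γ … ∮_Γ ∏_{p=1}^{n} [ ⟨e_{v(τ_{p−1})}, Ψ(z_p)·χ(z_{p+1}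 − i c_{τ_p})·e_{τ_p}⟩ / (z_p − z_{p+1} + i c_{τ_p}) ] dz_1 ⋯ dz_n, where both sides are iterated (respectively contour) integrals of continuous functions. -/
open Complex MeasureTheory

/-!
For a single variable, let `φ z = δ + ∫ h μ / (μ - z) dμ` (an entry of `Ψ`) and let `g` be
holomorphic on the closed disc `K` bounded by `Γ`. Then `∮ φ g = -2πi ∫ h g`, the second integral
being over `[a, b]`: the constant `δ` contributes nothing by Cauchy's theorem, and in the other
term Fubini's theorem and Cauchy's formula at `μ`, which lies inside `Γ`, give the result
(`circle_integral_cauchyTransform`).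

Expanding the matrix products, both integrands become sums over the intermediate indices
`k : Fin (n+1) → Fin N` of `∏ p, w p (z p) * G k z` with the same function `G k`, the product of
`χ (z (p+1) - i c) / (z p - z (p+1) + i c)`. The bound `2 R < |c|` makes `G k` jointly
holomorphic on the polydisc `K ^ (n+1)`. The one-variable identity is then applied in each
variable successively, by induction on the number of variables (`integral_prod_transfer`), so each
term picks up the factor `(-2πi) ^ (n+1)`, which cancels the prefactor.
-/

/-- Fubini on a cube: the first coordinate is split off. -/
lemma setIntegral_pi_succ {m : ℕ} {S : Set ℝ} (hS : IsCompact S) (f : (Fin (m+1) → ℝ) → ℂ)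
    (hf : ContinuousOn f (Set.univ.pi fun _ => S)) :
    ∫ x in Set.univ.pi fun _ : Fin (m+1) => S, f x =
      ∫ t in S, ∫ y in Set.univ.pi fun _ : Fin m => S, f (Fin.cons t y) := by
  have hpi : IsCompact (Set.univ.pi fun _ : Fin m => S) := isCompact_univ_pi fun _ => hS
  have hcons : ContinuousOn (fun q : ℝ × (Fin m → ℝ) => f (Fin.cons q.1 q.2))
      (S ×ˢ Set.univ.pi fun _ : Fin m => S) := by
    refine hf.comp (Continuous.continuousOn (by fun_prop)) ?_
    rintro ⟨t, y⟩ ⟨ht, hy⟩ i -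
    refine Fin.cases ?_ (fun j => ?_) i
    · simpa using ht
    · simpa using hy j trivial
  have hmp := (volume_preserving_piFinSuccAbove (fun _ : Fin (m+1) => ℝ) 0).symm
  rw [← hmp.setIntegral_preimage_emb (MeasurableEquiv.measurableEmbedding _),
    ← setIntegral_prod (fun q : ℝ × (Fin m → ℝ) => f (Fin.cons q.1 q.2))
      (hcons.integrableOn_compact (hS.prod hpi))]
  have hpre : (MeasurableEquiv.piFinSuccAbove (fun _ : Fin (m+1) => ℝ) 0).symm ⁻¹'
      (Set.univ.pi fun _ : Fin (m+1) => S) = S ×ˢ Set.univ.pi fun _ : Fin m => S := by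
    ext ⟨t, y⟩
    simp [MeasurableEquiv.piFinSuccAbove, Set.mem_pi, Fin.forall_fin_succ]
  rw [hpre]
  simp [MeasurableEquiv.piFinSuccAbove, Fin.consEquiv, Measure.volume_eq_prod]

lemma continuousOn_prod_mul_comp {m : ℕ} {Q : Set ℝ} {K : Set ℂ} {G : (Fin m → ℂ) → ℂ}
    (hG : ContinuousOn G (Set.univ.pi fun _ => K)) {e : ℝ → ℂ} {V : Fin m → ℝ → ℂ}
    (he : ContinuousOn e Q) (heK : Set.MapsTo e Q K) (hV : ∀ p, ContinuousOn (V p) Q) :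
    ContinuousOn (fun θ : Fin m → ℝ => (∏ p, V p (θ p)) * G (fun p => e (θ p)))
      (Set.univ.pi fun _ => Q) := by
  refine ContinuousOn.mul (continuousOn_finsetProd _ fun p _ => ?_) ?_
  · exact (hV p).comp (continuous_apply p).continuousOn fun θ hθ => hθ p trivial
  · refine hG.comp (continuousOn_pi.2 fun p => ?_) ?_
    · exact he.comp (continuous_apply p).continuousOn fun θ hθ => hθ p trivial
    · exact fun θ hθ p _ => heK (hθ p trivial)

/-- If integration against `W p` along the curve `c` agrees, up to the factor `κ`, with
integration against `H p` along `d` on every function holomorphic on `K`, then the same holds for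
the product weights on every function jointly holomorphic on `K ^ m`, with the factor `κ ^ m`. -/
lemma integral_prod_transfer {S T : Set ℝ} (hS : IsCompact S) (hT : IsCompact T) {K : Set ℂ}
    {c d : ℝ → ℂ} (hc : ContinuousOn c S) (hd : ContinuousOn d T)
    (hcK : Set.MapsTo c S K) (hdK : Set.MapsTo d T K) (κ : ℂ) {m : ℕ}
    (W H : Fin m → ℝ → ℂ) (hW : ∀ p, ContinuousOn (W p) S) (hH : ∀ p, ContinuousOn (H p) T)
    (hone : ∀ p, ∀ g : ℂ → ℂ, DifferentiableOn ℂ g K →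
      ∫ θ in S, W p θ * g (c θ) = κ * ∫ l in T, H p l * g (d l))
    (G : (Fin m → ℂ) → ℂ) (hG : DifferentiableOn ℂ G (Set.univ.pi fun _ => K)) :
    ∫ θ in Set.univ.pi fun _ : Fin m => S, (∏ p, W p (θ p)) * G (fun p => c (θ p)) =
      κ ^ m * ∫ l in Set.univ.pi fun _ : Fin m => T,
        (∏ p, H p (l p)) * G (fun p => d (l p)) := by
  induction m with
  | zero =>
    have hGeq : ∀ l : Fin 0 → ℝ, G (fun p => c (l p)) = G (fun p => d (l p)) := fun l =>
      congrArg G (Subsingleton.elim _ _)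
    have hpi : (Set.univ.pi fun _ : Fin 0 => S) = Set.univ.pi fun _ => T := by
      ext; simp [Set.mem_pi]
    simp [hGeq, hpi]
  | succ m ih =>
    rw [setIntegral_pi_succ hS _ (continuousOn_prod_mul_comp hG.continuousOn hc hcK hW),
      setIntegral_pi_succ hT _ (continuousOn_prod_mul_comp hG.continuousOn hd hdK hH)]
    have hcons : ∀ (e : ℝ → ℂ) (t : ℝ) (y : Fin m → ℝ),
        (fun p => e ((Fin.cons t y : Fin (m+1) → ℝ) p)) =
          (Fin.cons (e t) fun p => e (y p) : Fin (m+1) → ℂ) := by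
      intro e t y
      ext p
      refine Fin.cases ?_ (fun j => ?_) p <;> simp
    have hGcons : DifferentiableOn ℂ (fun q : ℂ × (Fin m → ℂ) => G (Fin.cons q.1 q.2))
        (K ×ˢ Set.univ.pi fun _ => K) := by
      refine hG.comp (Differentiable.differentiableOn ?_) ?_
      · refine differentiable_pi.2 fun p => ?_
        refine Fin.cases ?_ (fun j => ?_) p
        · simp only [Fin.cons_zero]; fun_prop
        · simp only [Fin.cons_succ]; fun_prop
      · rintro ⟨t, y⟩ ⟨ht, hy⟩ i -
        refine Fin.cases ?_ (fun j => ?_) i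
        · simpa using ht
        · simpa using hy j trivial
    have hslice1 : ∀ z ∈ K, DifferentiableOn ℂ (fun y : Fin m → ℂ => G (Fin.cons z y))
        (Set.univ.pi fun _ => K) := fun z hz =>
      hGcons.comp (f := fun y => (z, y)) (by fun_prop) fun y hy => ⟨hz, hy⟩
    have hslice2 : ∀ y ∈ Set.univ.pi fun _ : Fin m => K,
        DifferentiableOn ℂ (fun z : ℂ => G (Fin.cons z y)) K := fun y hy =>
      hGcons.comp (f := fun z => (z, y)) (by fun_prop) fun z hz => ⟨hz, hy⟩
    have hTpi : IsCompact (Set.univ.pi fun _ : Fin m => T) := isCompact_univ_pi fun _ => hT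
    -- The inner `m` variables are moved first, by the induction hypothesis applied to the slice of
    -- `G` at `c t`; after exchanging the integrals, the remaining variable is moved by `hone`.
    have hstep : ∀ t ∈ S,
        ∫ y in Set.univ.pi fun _ : Fin m => S,
          (∏ p, W p ((Fin.cons t y : Fin (m+1) → ℝ) p)) *
            G (fun p => c ((Fin.cons t y : Fin (m+1) → ℝ) p)) =
        κ ^ m * ∫ y in Set.univ.pi fun _ : Fin m => T,
          W 0 t * (∏ p : Fin m, H p.succ (y p)) * G (Fin.cons (c t) fun p => d (y p)) := by
      intro t ht
      have := ih (fun p => W p.succ) (fun p => H p.succ) (fun p => hW _) (fun p => hH _)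
        (fun p => hone _) _ (hslice1 (c t) (hcK ht))
      simp only [hcons, Fin.prod_univ_succ, Fin.cons_zero, Fin.cons_succ, mul_assoc,
        integral_const_mul]
      rw [this]
      ring
    have hswap : ∀ (Q : Set ℝ) (e V : ℝ → ℂ), IsCompact Q → ContinuousOn e Q →
        Set.MapsTo e Q K → ContinuousOn V Q →
        Integrable (Function.uncurry fun (t : ℝ) (y : Fin m → ℝ) =>
          V t * (∏ p : Fin m, H p.succ (y p)) * G (Fin.cons (e t) fun p => d (y p)))
        ((volume.restrict Q).prod (volume.restrict (Set.univ.pi fun _ : Fin m => T))) := by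
      intro Q e V hQ he heK hV
      rw [Measure.prod_restrict, ← IntegrableOn]
      refine ContinuousOn.integrableOn_compact (hQ.prod hTpi) ?_
      have hfst : Set.MapsTo (fun q : ℝ × (Fin m → ℝ) => q.1)
          (Q ×ˢ Set.univ.pi fun _ : Fin m => T) Q := fun q hq => hq.1
      have hsnd : ∀ p : Fin m, Set.MapsTo (fun q : ℝ × (Fin m → ℝ) => q.2 p)
          (Q ×ˢ Set.univ.pi fun _ : Fin m => T) T := fun p q hq => hq.2 p trivial
      refine ((((hV).comp continuousOn_fst hfst).mul
        (continuousOn_finsetProd _ fun p _ => (hH p.succ).comp (by fun_prop) (hsnd p))).mul ?_)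
      refine hGcons.continuousOn.comp (f := fun q : ℝ × (Fin m → ℝ) => (e q.1, fun p => d (q.2 p)))
        (ContinuousOn.prodMk (he.comp continuousOn_fst hfst)
          (continuousOn_pi.2 fun p => hd.comp (by fun_prop) (hsnd p))) ?_
      exact fun q hq => ⟨heK hq.1, fun p _ => hdK (hq.2 p trivial)⟩
    rw [setIntegral_congr_fun hS.measurableSet hstep, integral_const_mul,
      integral_integral_swap (hswap S c (W 0) hS hc hcK (hW 0))]
    have hinner : ∀ y ∈ Set.univ.pi fun _ : Fin m => T,
        ∫ t in S, W 0 t * (∏ p : Fin m, H p.succ (y p)) * G (Fin.cons (c t) fun p => d (y p)) =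
        κ * ∫ t in T, H 0 t * (∏ p : Fin m, H p.succ (y p)) *
          G (Fin.cons (d t) fun p => d (y p)) := by
      intro y hy
      have := hone 0 _ (hslice2 (fun p => d (y p)) fun p _ => hdK (hy p trivial))
      simp only [mul_right_comm _ (∏ p : Fin m, H p.succ (y p)), integral_mul_const]
      rw [this]
      ring
    rw [setIntegral_congr_fun hTpi.measurableSet hinner, integral_const_mul,
      ← integral_integral_swap (hswap T d (H 0) hT hd hdK (hH 0))]
    simp only [hcons, Fin.prod_univ_succ, Fin.cons_zero, Fin.cons_succ]
    ring

lemma ofReal_mem_ball {a b R μ : ℝ} (hR : (b - a) / 2 < R) (hμ : μ ∈ Set.Icc a b) :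
    (μ : ℂ) ∈ Metric.ball (((a + b) / 2 : ℝ) : ℂ) R := by
  rw [Metric.mem_ball, Complex.dist_of_im_eq (by simp), Complex.ofReal_re,
    Complex.ofReal_re, Real.dist_eq, abs_lt]
  constructor <;> linarith [hμ.1, hμ.2]

lemma ofReal_sub_circleMap_ne_zero {a b R μ : ℝ} (hR : (b - a) / 2 < R)
    (hμ : μ ∈ Set.Icc a b) (θ : ℝ) :
    (μ : ℂ) - circleMap (((a + b) / 2 : ℝ) : ℂ) R θ ≠ 0 := by
  intro h0
  have h1 := ofReal_mem_ball hR hμ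
  have h2 := circleMap_mem_sphere (((a + b) / 2 : ℝ) : ℂ)
    (by linarith [hμ.1.trans hμ.2] : 0 ≤ R) θ
  rw [sub_eq_zero.1 h0] at h1
  rw [Metric.mem_sphere] at h2
  rw [Metric.mem_ball] at h1
  linarith

/-- On functions `g` holomorphic on the closed disc, integrating against a constant plus the Cauchy
transform of `h` along the circle amounts to integrating against `-2πi h` over `[a, b]`. -/
lemma circle_integral_cauchyTransform {a b R : ℝ} (hab : a < b) (hR : (b - a) / 2 < R) (δ : ℂ) {h : ℝ → ℂ}
    (hh : ContinuousOn h (Set.Icc a b)) {g : ℂ → ℂ}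
    (hg : DifferentiableOn ℂ g (Metric.closedBall (((a + b) / 2 : ℝ) : ℂ) R)) :
    ∫ θ in Set.Icc (0 : ℝ) (2 * Real.pi),
      deriv (circleMap (((a + b) / 2 : ℝ) : ℂ) R) θ *
        (δ + ∫ μ in a..b, h μ / ((μ : ℂ) - circleMap (((a + b) / 2 : ℝ) : ℂ) R θ)) *
        g (circleMap (((a + b) / 2 : ℝ) : ℂ) R θ) =
    -(2 * (Real.pi : ℂ) * Complex.I) * ∫ l in Set.Icc a b, h l * g l := by
  have hR0 : 0 < R := by linarith
  set c : ℂ := (((a + b) / 2 : ℝ) : ℂ) with hc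
  have hmem : ∀ θ, circleMap c R θ ∈ Metric.closedBall c R := fun θ =>
    circleMap_mem_closedBall c hR0.le θ
  have hgc : Continuous fun θ => g (circleMap c R θ) :=
    hg.continuousOn.comp_continuous (continuous_circleMap c R) hmem
  have hdc : Continuous fun θ => deriv (circleMap c R) θ := by
    simp only [deriv_circleMap]; fun_prop
  have hker : ContinuousOn (Function.uncurry fun (θ μ : ℝ) =>
      deriv (circleMap c R) θ * g (circleMap c R θ) * (h μ / ((μ : ℂ) - circleMap c R θ)))
      (Set.Icc 0 (2 * Real.pi) ×ˢ Set.Icc a b) := by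
    refine ContinuousOn.mul ((hdc.mul hgc).comp continuous_fst).continuousOn ?_
    refine ContinuousOn.div (hh.comp continuousOn_snd fun q hq => hq.2)
      (Continuous.continuousOn ?_) fun q hq => ofReal_sub_circleMap_ne_zero hR hq.2 _
    exact (Complex.continuous_ofReal.comp continuous_snd).sub
      ((continuous_circleMap c R).comp continuous_fst)
  have hint : Integrable (Function.uncurry fun (θ μ : ℝ) =>
      deriv (circleMap c R) θ * g (circleMap c R θ) * (h μ / ((μ : ℂ) - circleMap c R θ)))
      ((volume.restrict (Set.Icc 0 (2 * Real.pi))).prod (volume.restrict (Set.Icc a b))) := by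
    rw [Measure.prod_restrict, ← IntegrableOn]
    exact hker.integrableOn_compact (isCompact_Icc.prod isCompact_Icc)
  have hcirc : ∀ f : ℂ → ℂ, ∮ z in C(c, R), f z =
      ∫ θ in Set.Icc (0 : ℝ) (2 * Real.pi), deriv (circleMap c R) θ * f (circleMap c R θ) := by
    intro f
    rw [circleIntegral, intervalIntegral.integral_of_le Real.two_pi_pos.le,
      integral_Icc_eq_integral_Ioc]
    rfl
  have hzero : ∫ θ in Set.Icc (0 : ℝ) (2 * Real.pi),
      deriv (circleMap c R) θ * g (circleMap c R θ) = 0 := by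
    rw [← hcirc]
    exact (hg.mono Metric.closure_ball_subset_closedBall).diffContOnCl.circleIntegral_eq_zero hR0.le
  have hcauchy : ∀ μ ∈ Set.Icc a b, ∫ θ in Set.Icc (0 : ℝ) (2 * Real.pi),
      deriv (circleMap c R) θ * g (circleMap c R θ) * (h μ / ((μ : ℂ) - circleMap c R θ)) =
      -(2 * (Real.pi : ℂ) * Complex.I) * (h μ * g μ) := by
    intro μ hμ
    have := hg.circleIntegral_sub_inv_smul (ofReal_mem_ball hR hμ)
    rw [hcirc] at this
    simp only [smul_eq_mul] at this
    have e : ∀ θ, deriv (circleMap c R) θ * g (circleMap c R θ) *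
        (h μ / ((μ : ℂ) - circleMap c R θ)) =
        -h μ * (deriv (circleMap c R) θ * ((circleMap c R θ - μ)⁻¹ * g (circleMap c R θ))) := by
      intro θ
      rw [← neg_sub (circleMap c R θ) (μ : ℂ), div_neg, div_eq_mul_inv]
      ring
    simp only [e, integral_const_mul, this]
    ring
  have hsplit : ∀ θ, deriv (circleMap c R) θ *
        (δ + ∫ μ in a..b, h μ / ((μ : ℂ) - circleMap c R θ)) * g (circleMap c R θ) =
      δ * (deriv (circleMap c R) θ * g (circleMap c R θ)) + ∫ μ in Set.Icc a b,
      deriv (circleMap c R) θ * g (circleMap c R θ) * (h μ / ((μ : ℂ) - circleMap c R θ)) := by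
    intro θ
    rw [integral_const_mul, intervalIntegral.integral_of_le hab.le, integral_Icc_eq_integral_Ioc]
    ring
  simp only [hsplit]
  have h1 : Integrable (fun θ => δ * (deriv (circleMap c R) θ * g (circleMap c R θ)))
      (volume.restrict (Set.Icc 0 (2 * Real.pi))) :=
    (hdc.mul hgc).continuousOn.integrableOn_Icc.const_mul δ
  have h2 : Integrable (fun θ => ∫ μ in Set.Icc a b, deriv (circleMap c R) θ *
      g (circleMap c R θ) * (h μ / ((μ : ℂ) - circleMap c R θ)))
      (volume.restrict (Set.Icc 0 (2 * Real.pi))) := hint.integral_prod_left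
  rw [integral_add h1 h2,
    integral_const_mul, hzero, integral_integral_swap hint,
    setIntegral_congr_fun measurableSet_Icc hcauchy, integral_const_mul]
  ring

lemma continuous_cauchyTransform_circleMap {a b R : ℝ} (hab : a < b) (hR : (b - a) / 2 < R) {h : ℝ → ℂ}
    (hh : ContinuousOn h (Set.Icc a b)) :
    Continuous fun θ =>
      ∫ μ in a..b, h μ / ((μ : ℂ) - circleMap (((a + b) / 2 : ℝ) : ℂ) R θ) := by
  -- Clamping `μ` to `[a, b]` makes the integrand jointly continuous on all of `ℝ × ℝ`.
  have hc : Continuous (Function.uncurry fun (θ μ : ℝ) =>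
      Set.IccExtend hab.le (Set.domRestrict (Set.Icc a b) h) μ /
        (((Set.projIcc a b hab.le μ : ℝ) : ℂ) - circleMap (((a + b) / 2 : ℝ) : ℂ) R θ)) := by
    refine Continuous.div ?_ ?_ fun q =>
      ofReal_sub_circleMap_ne_zero hR (Set.projIcc a b hab.le q.2).2 q.1
    · exact (hh.domRestrict.Icc_extend' (h := hab.le)).comp continuous_snd
    · exact (Complex.continuous_ofReal.comp (continuous_subtype_val.comp
        (continuous_projIcc.comp continuous_snd))).sub
        ((continuous_circleMap _ R).comp continuous_fst)
  convert intervalIntegral.continuous_parametric_intervalIntegral_of_continuous'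
    (μ := volume) hc a b using 2 with θ
  refine intervalIntegral.integral_congr fun μ hμ => ?_
  rw [Set.uIcc_of_le hab.le] at hμ
  simp [Set.IccExtend_of_mem hab.le _ hμ, Set.projIcc_of_mem hab.le hμ]

lemma sub_I_mul_notMem {a b R x c : ℝ} {z : ℂ} (hz : z ∈ Metric.closedBall (x : ℂ) R)
    (hc : 2 * R < |c|) : z - Complex.I * (c : ℂ) ∉ (fun t : ℝ => (t : ℂ)) '' Set.Icc a b := by
  rintro ⟨t, -, ht⟩
  have h1 := congrArg Complex.im ht
  simp at h1
  have h2 := (Complex.abs_im_le_norm (z - x)).trans (mem_closedBall_iff_norm.1 hz)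
  have h3 := (norm_nonneg _).trans (mem_closedBall_iff_norm.1 hz)
  simp at h2
  rw [show z.im = c by linarith] at h2
  linarith

lemma sub_add_I_mul_ne_zero {R c : ℝ} {x z w : ℂ} (hz : z ∈ Metric.closedBall x R)
    (hw : w ∈ Metric.closedBall x R) (hc : 2 * R < |c|) :
    z - w + Complex.I * (c : ℂ) ≠ 0 := by
  intro h
  have h1 : ‖z - w‖ = |c| := by
    rw [eq_neg_of_add_eq_zero_left h]; simp
  have h2 := dist_triangle_right z w x
  rw [dist_eq_norm z w, h1] at h2
  linarith [Metric.mem_closedBall.1 hz, Metric.mem_closedBall.1 hw]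

/-- Kernel-level trace identity moving the determinant of `I+W` to a contour: the cyclic
iterated integral over `[a,b]ⁿ` of the product of `W`-type factors equals
`(-1)ⁿ(2πi)⁻ⁿ` times the cyclic iterated contour integral over `Γⁿ` (the circle `Γ` of
center `(a+b)/2` and radius `R` being parametrized by `circleMap`).  Here the number of
variables is `n+1` (so that it is an arbitrary integer `≥ 1`), indices are taken
cyclically in `Fin (n+1)`. -/
theorem trace_identity_contour
    (a b R : ℝ) (hab : a < b) (N : ℕ) (hN : 1 ≤ N) (n : ℕ)
    (ER FL : ℝ → Fin N → ℂ)
    (hER : ContinuousOn ER (Set.Icc a b)) (hFL : ContinuousOn FL (Set.Icc a b))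
    (χ Ψ : ℂ → Matrix (Fin N) (Fin N) ℂ)
    (hχ : ∀ z ∉ (fun t : ℝ => (t : ℂ)) '' Set.Icc a b, ∀ j k,
      DifferentiableAt ℂ (fun w => χ w j k) z)
    (hΨ : ∀ z ∉ (fun t : ℝ => (t : ℂ)) '' Set.Icc a b, ∀ j k,
      Ψ z j k = (1 : Matrix (Fin N) (Fin N) ℂ) j k +
        ∫ μ in a..b, ER μ j * FL μ k / ((μ : ℂ) - z))
    (cs : Fin N → ℝ) (hcs : ∀ k, cs k ≠ 0)
    (v : Fin N → Fin N) (τ : Fin (n+1) → Fin N)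
    (hR1 : (b - a) / 2 < R) (hR2 : ∀ k, 2 * R < |cs k|) :
    (∫ l in Set.univ.pi fun _ : Fin (n+1) => Set.Icc a b,
        ∏ p : Fin (n+1),
          (∑ i, FL (l p) i *
              (χ ((l (p+1) : ℂ) - Complex.I * (cs (τ p) : ℂ))).mulVec (Pi.single (τ p) 1) i) *
            ER (l (p+1)) (v (τ p)) /
              ((l p : ℂ) - (l (p+1) : ℂ) + Complex.I * (cs (τ p) : ℂ)))
    = (-1) ^ (n+1) * ((2 * (Real.pi : ℂ) * Complex.I)⁻¹) ^ (n+1) *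
      ∫ θ in Set.univ.pi fun _ : Fin (n+1) => Set.Icc (0 : ℝ) (2 * Real.pi),
        (∏ p : Fin (n+1), deriv (circleMap (((a + b) / 2 : ℝ) : ℂ) R) (θ p)) *
        ∏ p : Fin (n+1),
          (Ψ (circleMap (((a + b) / 2 : ℝ) : ℂ) R (θ p)) *
              χ (circleMap (((a + b) / 2 : ℝ) : ℂ) R (θ (p+1)) -
                Complex.I * (cs (τ p) : ℂ))) (v (τ (p-1))) (τ p) /
            (circleMap (((a + b) / 2 : ℝ) : ℂ) R (θ p) -
              circleMap (((a + b) / 2 : ℝ) : ℂ) R (θ (p+1)) +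
              Complex.I * (cs (τ p) : ℂ)) := by
  have hR0 : 0 < R := by linarith
  set c : ℂ := (((a + b) / 2 : ℝ) : ℂ) with hc
  have hmem : ∀ θ, circleMap c R θ ∈ Metric.closedBall c R := fun θ =>
    circleMap_mem_closedBall c hR0.le θ
  have hΨc : ∀ θ j k, Ψ (circleMap c R θ) j k = (1 : Matrix (Fin N) (Fin N) ℂ) j k +
      ∫ μ in a..b, ER μ j * FL μ k / ((μ : ℂ) - circleMap c R θ) := by
    intro θ j k
    refine hΨ _ ?_ j k
    rintro ⟨t, ht, h⟩
    exact ofReal_sub_circleMap_ne_zero hR1 ht θ (sub_eq_zero.2 h)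
  have hEF : ∀ j k, ContinuousOn (fun μ => ER μ j * FL μ k) (Set.Icc a b) := fun j k =>
    (continuousOn_pi.1 hER j).mul (continuousOn_pi.1 hFL k)
  let G : (Fin (n+1) → Fin N) → (Fin (n+1) → ℂ) → ℂ := fun k z =>
    ∏ p, χ (z (p+1) - Complex.I * (cs (τ p) : ℂ)) (k p) (τ p) /
      (z p - z (p+1) + Complex.I * (cs (τ p) : ℂ))
  have hG : ∀ k, DifferentiableOn ℂ (G k) (Set.univ.pi fun _ => Metric.closedBall c R) := by
    intro k z hz
    have hfac : ∀ p, DifferentiableAt ℂ (fun z : Fin (n+1) → ℂ =>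
        χ (z (p+1) - Complex.I * (cs (τ p) : ℂ)) (k p) (τ p) /
          (z p - z (p+1) + Complex.I * (cs (τ p) : ℂ))) z := by
      intro p
      have hden : DifferentiableAt ℂ (fun z : Fin (n+1) → ℂ =>
          z p - z (p+1) + Complex.I * (cs (τ p) : ℂ)) z := by fun_prop
      have hnum : DifferentiableAt ℂ (fun z : Fin (n+1) → ℂ =>
          χ (z (p+1) - Complex.I * (cs (τ p) : ℂ)) (k p) (τ p)) z :=
        DifferentiableAt.comp (g := fun w => χ w (k p) (τ p))
          (f := fun z : Fin (n+1) → ℂ => z (p+1) - Complex.I * (cs (τ p) : ℂ)) z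
          (hχ _ (sub_I_mul_notMem (hz _ trivial) (hR2 _)) (k p) (τ p)) (by fun_prop)
      simp only [div_eq_mul_inv]
      exact hnum.mul (hden.inv
        (sub_add_I_mul_ne_zero (hz _ trivial) (hz _ trivial) (hR2 _)))
    exact (HasFDerivAt.finsetProd fun p _ =>
      (hfac p).hasFDerivAt).differentiableAt.differentiableWithinAt
  let W : (Fin (n+1) → Fin N) → Fin (n+1) → ℝ → ℂ := fun k p θ =>
    deriv (circleMap c R) θ * ((1 : Matrix (Fin N) (Fin N) ℂ) (v (τ (p-1))) (k p) +
      ∫ μ in a..b, ER μ (v (τ (p-1))) * FL μ (k p) / ((μ : ℂ) - circleMap c R θ))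
  let H : (Fin (n+1) → Fin N) → Fin (n+1) → ℝ → ℂ := fun k p l =>
    ER l (v (τ (p-1))) * FL l (k p)
  have hW : ∀ k p, ContinuousOn (W k p) (Set.Icc 0 (2 * Real.pi)) := by
    intro k p
    have hdc : Continuous fun θ => deriv (circleMap c R) θ := by
      simp only [deriv_circleMap]; fun_prop
    exact (hdc.mul (continuous_const.add (continuous_cauchyTransform_circleMap hab hR1 (hEF _ _)))).continuousOn
  have hH : ∀ k p, ContinuousOn (H k p) (Set.Icc a b) := fun k p => hEF _ _
  have hball : Set.MapsTo (fun l : ℝ => (l : ℂ)) (Set.Icc a b) (Metric.closedBall c R) :=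
    fun l hl => Metric.ball_subset_closedBall (ofReal_mem_ball hR1 hl)
  have hkey : ∀ k, ∫ θ in Set.univ.pi fun _ : Fin (n+1) => Set.Icc 0 (2 * Real.pi),
      (∏ p, W k p (θ p)) * G k (fun p => circleMap c R (θ p)) =
      (-(2 * (Real.pi : ℂ) * Complex.I)) ^ (n+1) *
        ∫ l in Set.univ.pi fun _ : Fin (n+1) => Set.Icc a b,
          (∏ p, H k p (l p)) * G k (fun p => (l p : ℂ)) := fun k =>
    integral_prod_transfer isCompact_Icc isCompact_Icc
      (continuous_circleMap c R).continuousOn Complex.continuous_ofReal.continuousOn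
      (fun θ _ => hmem θ) hball _ (W k) (H k) (hW k) (hH k)
      (fun p g hg => circle_integral_cauchyTransform hab hR1 _ (hEF _ _) hg) (G k) (hG k)
  have hintegrable : ∀ (Q : Set ℝ) (e : ℝ → ℂ) (V : Fin (n+1) → ℝ → ℂ) (k : Fin (n+1) → Fin N),
      IsCompact Q → ContinuousOn e Q → Set.MapsTo e Q (Metric.closedBall c R) →
      (∀ p, ContinuousOn (V p) Q) →
      Integrable (fun θ : Fin (n+1) → ℝ => (∏ p, V p (θ p)) * G k (fun p => e (θ p)))
        (volume.restrict (Set.univ.pi fun _ => Q)) := fun Q e V k hQ he heK hV =>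
    (continuousOn_prod_mul_comp (hG k).continuousOn he heK hV).integrableOn_compact
      (isCompact_univ_pi fun _ => hQ)
  have hleft : ∀ l : Fin (n+1) → ℝ, ∏ p : Fin (n+1),
          (∑ i, FL (l p) i *
              (χ ((l (p+1) : ℂ) - Complex.I * (cs (τ p) : ℂ))).mulVec (Pi.single (τ p) 1) i) *
            ER (l (p+1)) (v (τ p)) /
              ((l p : ℂ) - (l (p+1) : ℂ) + Complex.I * (cs (τ p) : ℂ)) =
      ∑ k : Fin (n+1) → Fin N, (∏ p, H k p (l p)) * G k (fun p => (l p : ℂ)) := by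
    intro l
    -- Cyclic shift of the `ER` factors, so that all weights in the variable `l p` come together.
    have hshift : ∏ p, ER (l (p+1)) (v (τ p)) = ∏ p, ER (l p) (v (τ (p-1))) := by
      rw [← Equiv.prod_comp (Equiv.addRight (1 : Fin (n+1)))
        fun p => ER (l p) (v (τ (p-1)))]
      simp
    simp only [Finset.prod_div_distrib, Finset.prod_mul_distrib, G, H, hshift]
    rw [Fintype.prod_sum, Finset.sum_mul, Finset.sum_div]
    refine Finset.sum_congr rfl fun k _ => ?_
    simp only [Matrix.mulVec_single_one, Matrix.col_apply, Finset.prod_mul_distrib]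
    ring
  have hright : ∀ θ : Fin (n+1) → ℝ,
      (∏ p : Fin (n+1), deriv (circleMap c R) (θ p)) *
        ∏ p : Fin (n+1),
          (Ψ (circleMap c R (θ p)) *
              χ (circleMap c R (θ (p+1)) - Complex.I * (cs (τ p) : ℂ))) (v (τ (p-1))) (τ p) /
            (circleMap c R (θ p) - circleMap c R (θ (p+1)) + Complex.I * (cs (τ p) : ℂ)) =
      ∑ k : Fin (n+1) → Fin N, (∏ p, W k p (θ p)) * G k (fun p => circleMap c R (θ p)) := by
    intro θ
    simp only [Matrix.mul_apply, hΨc, Finset.prod_div_distrib, Finset.prod_mul_distrib, G, W]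
    rw [Fintype.prod_sum, Finset.sum_div, Finset.mul_sum]
    refine Finset.sum_congr rfl fun k _ => ?_
    simp only [Finset.prod_mul_distrib]
    ring
  simp only [hleft, hright]
  rw [integral_finsetSum _ fun k _ => hintegrable _ _ _ k isCompact_Icc
      Complex.continuous_ofReal.continuousOn hball (hH k),
    integral_finsetSum _ fun k _ => hintegrable _ _ _ k isCompact_Icc
      (continuous_circleMap c R).continuousOn (fun θ _ => hmem θ) (hW k)]
  simp only [hkey, ← Finset.mul_sum]
  rw [← mul_assoc, ← mul_pow, ← mul_pow]
  have : (-1 : ℂ) * (2 * (Real.pi : ℂ) * Complex.I)⁻¹ * -(2 * (Real.pi : ℂ) * Complex.I) = 1 := by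
    have := Complex.two_pi_I_ne_zero
    field_simp
  rw [this, one_pow, one_mul]
end

section
/- Equality of the two contour forms of the trace ('replacing I_N by 0'): with the cyclic conventions z_{n+1} = z_1 and τ_0 = τ_n, one has ∮_Γ … ∮_Γ ∏_{p=1}^{n} [ ⟨e_{v(τ_{p−1})}, (I_N − Ψ(z_p)·χ(z_{p+1} − i c_{τ_p}))·e_{τ_p}⟩ / (z_p − z_{p+1} + i c_{τ_p}) ] dz_1 ⋯ dz_n = (−1)^n ∮_Γ … ∮_Γ ∏_{p=1}^{n} [ ⟨e_{v(τ_{p−1})}, Ψ(z_p)·χ(z_{p+1} − i c_{τ_p})·e_{τ_p}⟩ / (z_p − z_{p+1} + i c_{τ_p}) ] dz_1 ⋯ dz_n. -/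
/-! Expand each factor `(1 - Ψχ)ⱼₖ / D` as `δⱼₖ / D - (Ψχ)ⱼₖ / D` and multiply out over subsets
`s` of indices at which the identity term is chosen.  If `p₀ ∈ s`, then `z_{p₀}` enters the
resulting integrand only through the denominators and through
`χ (z_{p₀} - i c_{τ_{p₀-1}})`, both of which are holomorphic for `z_{p₀}` in the closed disc:
`Ψ (z_{p₀})`, the only factor that is singular inside `Γ`, is absent.  By Cauchy's theorem the
`z_{p₀}`-integral vanishes, and with Fubini (`torus_integral_eq_zero`) so does the whole term.
Only `s = ∅` survives (`torus_integral_prod_sub`), which is the right-hand side. -/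

open Complex MeasureTheory

/-- Fubini with Cauchy's theorem: if `Φ` is holomorphic in its `p₀`-th variable on the closed disc,
with the other variables on the circle, then its integral over the torus vanishes. -/
theorem torus_integral_eq_zero {n : ℕ} {c : ℂ} {R : ℝ} (hR : 0 ≤ R)
    (Φ : (Fin (n + 1) → ℂ) → ℂ) (p₀ : Fin (n + 1))
    (hc : Continuous fun θ : Fin (n + 1) → ℝ => Φ fun p => circleMap c R (θ p))
    (hd : ∀ z : Fin (n + 1) → ℂ, (∀ p, z p ∈ Metric.sphere c R) →
      ∀ w ∈ Metric.closedBall c R,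
        DifferentiableAt ℂ (fun w => Φ (Function.update z p₀ w)) w) :
    ∫ θ in Set.univ.pi fun _ : Fin (n + 1) => Set.Icc (0 : ℝ) (2 * Real.pi),
      (∏ p, deriv (circleMap c R) (θ p)) * Φ (fun p => circleMap c R (θ p)) = 0 := by
  set G : (Fin (n + 1) → ℝ) → ℂ := fun θ =>
    (∏ p, deriv (circleMap c R) (θ p)) * Φ (fun p => circleMap c R (θ p)) with hG
  have hGc : Continuous G := by
    simp only [hG, deriv_circleMap]
    refine Continuous.mul (continuous_finsetProd _ fun p _ => ?_) hc
    exact ((continuous_circleMap 0 R).comp (continuous_apply p)).mul continuous_const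
  set e := MeasurableEquiv.piFinSuccAbove (fun _ : Fin (n + 1) => ℝ) p₀
  have hem : MeasurePreserving e := volume_preserving_piFinSuccAbove (fun _ => ℝ) p₀
  have hset : (Set.univ.pi fun _ : Fin (n + 1) => Set.Icc (0 : ℝ) (2 * Real.pi)) =
      e ⁻¹' (Set.Icc (0 : ℝ) (2 * Real.pi) ×ˢ
        Set.univ.pi fun _ : Fin n => Set.Icc (0 : ℝ) (2 * Real.pi)) := by
    ext θ
    simp only [Set.mem_univ_pi, Set.mem_preimage, Set.mem_prod]
    exact Fin.forall_iff_succAbove p₀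
  have hGe : ∀ x, G (e.symm x) = G (p₀.insertNth x.1 x.2) := fun x => rfl
  have hcont : Continuous fun x : ℝ × (Fin n → ℝ) => G (p₀.insertNth x.1 x.2) :=
    hGc.comp (Continuous.finInsertNth (A := fun _ => ℝ) p₀ continuous_fst continuous_snd)
  have hbox : IsCompact (Set.Icc (0 : ℝ) (2 * Real.pi) ×ˢ
        Set.univ.pi fun _ : Fin n => Set.Icc (0 : ℝ) (2 * Real.pi)) :=
    isCompact_Icc.prod (isCompact_univ_pi fun _ => isCompact_Icc)
  have key : ∀ y : Fin n → ℝ,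
      ∫ t in Set.Icc (0 : ℝ) (2 * Real.pi), G (p₀.insertNth t y) = 0 := by
    intro y
    set z : Fin (n + 1) → ℂ := fun p => circleMap c R ((p₀.insertNth 0 y : Fin (n + 1) → ℝ) p)
    have hz : ∀ t : ℝ, (fun p => circleMap c R ((p₀.insertNth t y : Fin (n + 1) → ℝ) p)) =
        Function.update z p₀ (circleMap c R t) := by
      intro t
      funext p
      refine Fin.succAboveCases p₀ ?_ (fun j => ?_) p
      · simp
      · simp [z]
    have hcirc : (∮ w in C(c, R), Φ (Function.update z p₀ w)) = 0 := by
      have hz' := hd z fun p => circleMap_mem_sphere c hR _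
      refine circleIntegral_eq_zero_of_differentiable_on_off_countable hR Set.countable_empty
        (fun w hw => (hz' w hw).continuousAt.continuousWithinAt)
        (fun w hw => hz' w (Metric.ball_subset_closedBall hw.1))
    rw [circleIntegral, intervalIntegral.integral_of_le Real.two_pi_pos.le] at hcirc
    rw [integral_Icc_eq_integral_Ioc]
    have : ∀ t, G (p₀.insertNth t y) = (∏ j, deriv (circleMap c R) (y j)) *
        (deriv (circleMap c R) t • Φ (Function.update z p₀ (circleMap c R t))) := by
      intro t
      simp only [hG, hz, Fin.prod_univ_succAbove _ p₀, Fin.insertNth_apply_same,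
        Fin.insertNth_apply_succAbove, smul_eq_mul]
      ring
    simp_rw [this]
    rw [integral_const_mul, hcirc, mul_zero]
  have h1 := (hem.symm e).setIntegral_preimage_emb e.symm.measurableEmbedding G
    (Set.univ.pi fun _ : Fin (n + 1) => Set.Icc (0 : ℝ) (2 * Real.pi))
  rw [← h1, hset, ← Set.preimage_comp]
  simp only [MeasurableEquiv.self_comp_symm, Set.preimage_id, hGe]
  rw [Measure.volume_eq_prod, ← Measure.prod_restrict, integral_prod_symm]
  · simp [key]
  · rw [Measure.prod_restrict, ← Measure.volume_eq_prod]
    exact hcont.continuousOn.integrableOn_compact hbox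

/-- Every `A p` is holomorphic in each variable, and every `B p` in each variable but the `p`-th;
then every term of the expansion of `∏ (A p - B p)` containing some `A p` integrates to zero. -/
theorem torus_integral_prod_sub {n : ℕ} {c : ℂ} {R : ℝ} (hR : 0 ≤ R)
    (A B : Fin (n + 1) → (Fin (n + 1) → ℂ) → ℂ)
    (hA : ∀ p, Continuous fun θ : Fin (n + 1) → ℝ => A p fun q => circleMap c R (θ q))
    (hB : ∀ p, Continuous fun θ : Fin (n + 1) → ℝ => B p fun q => circleMap c R (θ q))
    (hAd : ∀ p p₀, ∀ z : Fin (n + 1) → ℂ, (∀ q, z q ∈ Metric.sphere c R) →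
      ∀ w ∈ Metric.closedBall c R,
        DifferentiableAt ℂ (fun w => A p (Function.update z p₀ w)) w)
    (hBd : ∀ p p₀, p ≠ p₀ → ∀ z : Fin (n + 1) → ℂ, (∀ q, z q ∈ Metric.sphere c R) →
      ∀ w ∈ Metric.closedBall c R,
        DifferentiableAt ℂ (fun w => B p (Function.update z p₀ w)) w) :
    ∫ θ in Set.univ.pi fun _ : Fin (n + 1) => Set.Icc (0 : ℝ) (2 * Real.pi),
      (∏ p, deriv (circleMap c R) (θ p)) *
        ∏ p, (A p (fun q => circleMap c R (θ q)) - B p (fun q => circleMap c R (θ q))) =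
    (-1) ^ (n + 1) *
      ∫ θ in Set.univ.pi fun _ : Fin (n + 1) => Set.Icc (0 : ℝ) (2 * Real.pi),
        (∏ p, deriv (circleMap c R) (θ p)) * ∏ p, B p (fun q => circleMap c R (θ q)) := by
  classical
  set Φ : Finset (Fin (n + 1)) → (Fin (n + 1) → ℂ) → ℂ := fun s z =>
    (∏ p ∈ s, A p z) * ∏ p ∈ Finset.univ \ s, -B p z with hΦ
  have hΦc : ∀ s, Continuous fun θ : Fin (n + 1) → ℝ => Φ s fun q => circleMap c R (θ q) :=
    fun s => (continuous_finsetProd _ fun p _ => hA p).mul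
      (continuous_finsetProd _ fun p _ => (hB p).neg)
  have hexp : ∀ θ : Fin (n + 1) → ℝ, (∏ p, deriv (circleMap c R) (θ p)) *
        ∏ p, (A p (fun q => circleMap c R (θ q)) - B p (fun q => circleMap c R (θ q))) =
      ∑ s ∈ Finset.univ.powerset, (∏ p, deriv (circleMap c R) (θ p)) *
        Φ s (fun q => circleMap c R (θ q)) := by
    intro θ
    simp only [sub_eq_add_neg, Finset.prod_add, hΦ, Finset.mul_sum]
  simp_rw [hexp]
  rw [integral_finsetSum, Finset.sum_eq_single ∅]
  · rw [← integral_const_mul]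
    congr 1
    funext θ
    simp only [hΦ, Finset.prod_empty, Finset.sdiff_empty, Finset.prod_neg, Finset.card_univ,
      Fintype.card_fin]
    ring
  · intro s _ hs
    obtain ⟨p₀, hp₀⟩ := Finset.nonempty_iff_ne_empty.mpr hs
    refine torus_integral_eq_zero hR (Φ s) p₀ (hΦc s) fun z hz w hw => ?_
    refine (DifferentiableAt.fun_finsetProd fun p _ => hAd p p₀ z hz w hw).mul
      (DifferentiableAt.fun_finsetProd fun p hp => (hBd p p₀ ?_ z hz w hw).neg)
    rintro rfl
    exact (Finset.mem_sdiff.mp hp).2 hp₀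
  · intro h
    exact absurd (Finset.empty_mem_powerset _) h
  · intro s _
    have hJ : Continuous fun θ : Fin (n + 1) → ℝ => ∏ p, deriv (circleMap c R) (θ p) := by
      simp only [deriv_circleMap]
      exact continuous_finsetProd _ fun p _ =>
        ((continuous_circleMap 0 R).comp (continuous_apply p)).mul continuous_const
    exact (hJ.mul (hΦc s)).continuousOn.integrableOn_compact
      (isCompact_univ_pi fun _ => isCompact_Icc)

/-- Equality of the two contour forms of the trace ("replacing `I_N` by `0`"): the cyclic
iterated contour integral of the product of factors with numerators
`⟨e_{v(τ_{p-1})}, (I - Ψ(z_p)χ(z_{p+1} - ic_{τ_p}))e_{τ_p}⟩` equals `(-1)ⁿ` times the one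
with numerators `⟨e_{v(τ_{p-1})}, Ψ(z_p)χ(z_{p+1} - ic_{τ_p})e_{τ_p}⟩`.  The circle `Γ` of
center `(a+b)/2` and radius `R` is parametrized by `circleMap`; the number of variables
is `n+1` and indices are cyclic in `Fin (n+1)`. -/
theorem trace_identity_replace_identity_by_zero
    (a b R : ℝ) (hab : a < b) (N : ℕ) (hN : 1 ≤ N) (n : ℕ)
    (χ Ψ : ℂ → Matrix (Fin N) (Fin N) ℂ)
    (hχ : ∀ z ∉ (fun t : ℝ => (t : ℂ)) '' Set.Icc a b, ∀ j k,
      DifferentiableAt ℂ (fun w => χ w j k) z)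
    (hΨ : ∀ z ∉ (fun t : ℝ => (t : ℂ)) '' Set.Icc a b, ∀ j k,
      DifferentiableAt ℂ (fun w => Ψ w j k) z)
    (cs : Fin N → ℝ) (hcs : ∀ k, cs k ≠ 0)
    (v : Fin N → Fin N) (τ : Fin (n+1) → Fin N)
    (hR1 : (b - a) / 2 < R) (hR2 : ∀ k, 2 * R < |cs k|) :
    (∫ θ in Set.univ.pi fun _ : Fin (n+1) => Set.Icc (0 : ℝ) (2 * Real.pi),
        (∏ p : Fin (n+1), deriv (circleMap (((a + b) / 2 : ℝ) : ℂ) R) (θ p)) *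
        ∏ p : Fin (n+1),
          ((1 : Matrix (Fin N) (Fin N) ℂ) -
              Ψ (circleMap (((a + b) / 2 : ℝ) : ℂ) R (θ p)) *
                χ (circleMap (((a + b) / 2 : ℝ) : ℂ) R (θ (p+1)) -
                  Complex.I * (cs (τ p) : ℂ))) (v (τ (p-1))) (τ p) /
            (circleMap (((a + b) / 2 : ℝ) : ℂ) R (θ p) -
              circleMap (((a + b) / 2 : ℝ) : ℂ) R (θ (p+1)) +
              Complex.I * (cs (τ p) : ℂ)))
    = (-1) ^ (n+1) *
      ∫ θ in Set.univ.pi fun _ : Fin (n+1) => Set.Icc (0 : ℝ) (2 * Real.pi),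
        (∏ p : Fin (n+1), deriv (circleMap (((a + b) / 2 : ℝ) : ℂ) R) (θ p)) *
        ∏ p : Fin (n+1),
          (Ψ (circleMap (((a + b) / 2 : ℝ) : ℂ) R (θ p)) *
              χ (circleMap (((a + b) / 2 : ℝ) : ℂ) R (θ (p+1)) -
                Complex.I * (cs (τ p) : ℂ))) (v (τ (p-1))) (τ p) /
            (circleMap (((a + b) / 2 : ℝ) : ℂ) R (θ p) -
              circleMap (((a + b) / 2 : ℝ) : ℂ) R (θ (p+1)) +
              Complex.I * (cs (τ p) : ℂ)) := by
  have hR : 0 < R := by linarith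
  set c : ℂ := (((a + b) / 2 : ℝ) : ℂ) with hc
  have him : ∀ z ∈ Metric.closedBall c R, |z.im| ≤ R := by
    intro z hz
    have h := (Complex.abs_im_le_norm (z - c)).trans (mem_closedBall_iff_norm.mp hz)
    simpa [hc, -ofReal_div, -ofReal_add] using h
  -- the denominators do not vanish
  have hD : ∀ k, ∀ x ∈ Metric.closedBall c R, ∀ y ∈ Metric.closedBall c R,
      x - y + Complex.I * (cs k : ℂ) ≠ 0 := by
    intro k x hx y hy h
    have h' := congrArg Complex.im h
    simp at h'
    have h1 := abs_le.mp (him x hx)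
    have h2 := abs_le.mp (him y hy)
    have := hR2 k
    have h3 : |cs k| ≤ 2 * R := abs_le.mpr ⟨by linarith, by linarith⟩
    linarith
  -- the shifted arguments of `χ` avoid the cut
  have hχ' : ∀ k, ∀ z ∈ Metric.closedBall c R, ∀ i j,
      DifferentiableAt ℂ (fun w => χ w i j) (z - Complex.I * (cs k : ℂ)) := by
    intro k z hz
    refine hχ _ ?_
    rintro ⟨t, -, ht⟩
    have h' := congrArg Complex.im ht
    simp at h'
    have h1 := him z hz
    have := hR2 k
    rw [show z.im = cs k by linarith] at h1
    linarith
  -- the circle avoids the cut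
  have hΨ' : ∀ z ∈ Metric.sphere c R, ∀ i j, DifferentiableAt ℂ (fun w => Ψ w i j) z := by
    intro z hz
    refine hΨ _ ?_
    rintro ⟨t, ht, rfl⟩
    have h := mem_sphere_iff_norm.mp hz
    rw [hc] at h
    dsimp only at h
    rw [← Complex.ofReal_sub, Complex.norm_real, Real.norm_eq_abs] at h
    have h3 : |t - (a + b) / 2| ≤ (b - a) / 2 :=
      abs_le.mpr ⟨by linarith [ht.1], by linarith [ht.2]⟩
    linarith
  have hs : ∀ t, circleMap c R t ∈ Metric.sphere c R := circleMap_mem_sphere c hR.le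
  have hsb : ∀ t, circleMap c R t ∈ Metric.closedBall c R := circleMap_mem_closedBall c hR.le
  have hu : ∀ (z : Fin (n + 1) → ℂ), (∀ q, z q ∈ Metric.sphere c R) → ∀ p₀,
      ∀ w ∈ Metric.closedBall c R, ∀ q, Function.update z p₀ w q ∈ Metric.closedBall c R := by
    intro z hz p₀ w hw q
    rcases eq_or_ne q p₀ with rfl | hq
    · simpa using hw
    · rw [Function.update_of_ne hq]
      exact Metric.sphere_subset_closedBall (hz q)
  have hud : ∀ (z : Fin (n + 1) → ℂ) p₀ q (w : ℂ),
      DifferentiableAt ℂ (fun w => Function.update z p₀ w q) w := by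
    intro z p₀ q w
    rcases eq_or_ne q p₀ with rfl | hq
    · simp
    · simp [Function.update_of_ne hq]
  have hz : ∀ q : Fin (n + 1), Continuous fun θ : Fin (n + 1) → ℝ => circleMap c R (θ q) :=
    fun q => (continuous_circleMap c R).comp (continuous_apply q)
  have hDc : ∀ p : Fin (n + 1), Continuous fun θ : Fin (n + 1) → ℝ =>
      circleMap c R (θ p) - circleMap c R (θ (p + 1)) + Complex.I * (cs (τ p) : ℂ) := by
    exact fun p => ((hz p).sub (hz (p + 1))).add continuous_const
  have hDd : ∀ (p p₀ : Fin (n + 1)) (z : Fin (n + 1) → ℂ) (w : ℂ),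
      DifferentiableAt ℂ (fun w => Function.update z p₀ w p - Function.update z p₀ w (p + 1) +
        Complex.I * (cs (τ p) : ℂ)) w :=
    fun p p₀ z w => ((hud z p₀ p w).sub (hud z p₀ (p + 1) w)).add_const _
  have main := torus_integral_prod_sub (c := c) hR.le
    (fun p z => (1 : Matrix (Fin N) (Fin N) ℂ) (v (τ (p - 1))) (τ p) /
      (z p - z (p + 1) + Complex.I * (cs (τ p) : ℂ)))
    (fun p z => (Ψ (z p) * χ (z (p + 1) - Complex.I * (cs (τ p) : ℂ))) (v (τ (p - 1))) (τ p) /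
      (z p - z (p + 1) + Complex.I * (cs (τ p) : ℂ)))
    (fun p => continuous_const.div (hDc p) fun θ => hD _ _ (hsb _) _ (hsb _))
    (fun p => by
      refine Continuous.div ?_ (hDc p) fun θ => hD _ _ (hsb _) _ (hsb _)
      simp only [Matrix.mul_apply]
      refine continuous_finsetSum _ fun j _ => Continuous.mul ?_ ?_
      · refine continuous_iff_continuousAt.mpr fun θ => ?_
        exact ContinuousAt.comp (f := fun θ : Fin (n + 1) → ℝ => circleMap c R (θ p))
          (g := fun w => Ψ w (v (τ (p - 1))) j) (hΨ' _ (hs _) _ _).continuousAt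
          (hz p).continuousAt
      · refine continuous_iff_continuousAt.mpr fun θ => ?_
        exact ContinuousAt.comp (f := fun θ : Fin (n + 1) → ℝ =>
            circleMap c R (θ (p + 1)) - Complex.I * (cs (τ p) : ℂ))
          (g := fun w => χ w j (τ p)) (hχ' _ _ (hsb _) _ _).continuousAt
          ((hz (p + 1)).sub continuous_const).continuousAt)
    (fun p p₀ z hz w hw => (differentiableAt_const _).div (hDd p p₀ z w)
      (hD _ _ (hu z hz p₀ w hw _) _ (hu z hz p₀ w hw _)))
    (fun p p₀ hp z hz w hw => by
      refine DifferentiableAt.fun_div ?_ (hDd p p₀ z w)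
        (hD _ _ (hu z hz p₀ w hw _) _ (hu z hz p₀ w hw _))
      simp only [Matrix.mul_apply]
      refine DifferentiableAt.fun_sum fun j _ => DifferentiableAt.mul ?_ ?_
      · simp only [Function.update_of_ne hp]
        exact differentiableAt_const _
      · exact DifferentiableAt.comp (g := fun w => χ w j (τ p))
          (f := fun w => Function.update z p₀ w (p + 1) - Complex.I * (cs (τ p) : ℂ)) w
          (hχ' _ _ (hu z hz p₀ w hw _) _ _) ((hud z p₀ (p + 1) w).sub_const _))
  simpa only [Matrix.sub_apply, sub_div] using main
end

section
/- Deformation of the contour traces to the real line (kernel-level content of det_Γ[I+M] = det_ℝ[I+N]): with the cyclic conventions z_{n+1} = z_1, t_{n+1} = t_1 and τ_0 = τ_n, and writing sgn for the sign of a nonzero real, one has (2πi)^{−n} ∮_Γ … ∮_Γ ∏_{p=1}^{n} [ ⟨e_{v(τ_{p−1})}, (I_N − Ψ(z_p)·χ(z_{p+1} − i c_{τ_p}))·e_{τ_p}⟩ / (z_p − z_{p+1} + i c_{τ_p}) ] dz_1 ⋯ dz_n = (2πi)^{−n} ∫_{ℝ^n} ∏_{p=1}^{n} [ ⟨e_{v(τ_{p−1})},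 (I_N − Ψ(t_p + i c_{τ_{p−1}}/2)·χ(t_{p+1} − i c_{τ_p}/2))·e_{τ_p}⟩ / ( −sgn(c_{τ_p})·(t_p − t_{p+1} + i (c_{τ_{p−1}} + c_{τ_p})/2) ) ] dt_1 ⋯ dt_n, where the integrand on the right is absolutely integrable over ℝ^n (on the measure-zero set where c_{τ_{p−1}} + c_{τ_p} = 0 and t_p = t_{p+1}, the numerator vanishes since I_N − Ψ(w)χ(w) = 0, and the integrand may be defined arbitrarily there). -/
open Complex MeasureTheory

/-!
Since `Ψ χ = 1`, the kernel has no singularity on the diagonal: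
`(1 - Ψ(z) χ(w)) / (z - w) = -Ψ(z) ∫ F_R(s) E_L(s)ᵀ / ((s - z)(s - w)) ds`
(`resolvent_kernel`).  Inserting this formula in each factor of the cyclic product and applying
Fubini's theorem (`cyclic_fubini`), the integrals over the `z_p` decouple: for fixed integration
points `s_p ∈ [a, b]`, the variable `z_p` only enters through
`Ψ(z_p) / ((s_p - z_p)(s_{p-1} + i c_{p-1} - z_p))`, where `c_{p-1}` stands for `c_{τ_{p-1}}`.

The deformation is thus a statement in one variable.  Writing `Ψ` as a Cauchy transform over
`[a, b]`, using Fubini again and a partial fraction decomposition, it reduces to the two-pole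
integral of `1 / ((s - z)(m + ic - z))`, `s, m ∈ [a, b]`, which must be
`-2πi / (m + ic - s)`.  On the circle this is Cauchy's formula (`goodCurve_circle`); on the line
`ℝ + ic/2`, weighted by `-sgn c`, it is computed with logarithms (`goodCurve_line`).
A curve with this property and suitable bounds is called a `GoodCurve`; for every such curve the
one-variable integral is the residue `-2πi Ψ(m + ic) / (m + ic - s)`
(`GoodCurve.stieltjes_residue`), so the traces over the circles and over the lines have the same
value (`trace_value`).  On the lines each factor is `O(1/(|z||w|))`, which gives absolute
integrability, every variable occurring in exactly two factors.
-/

/-! ### Decoupling of cyclic products -/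

/-- Decoupling of a cyclic product of factorized kernels `∫ U p m x * W p m y dρ(m)`: after
interchanging the integrations, the variable `x p` occurs only in `U p` and in the `W` of the
preceding index.  The integrability comes from `∏ g (x p) * g (x (σ p)) = ∏ g (x p) ^ 2`. -/
theorem cyclic_fubini {ι : Type*} [Fintype ι] (σ : Equiv.Perm ι) (ν ρ : Measure ℝ)
    [SigmaFinite ν] [IsFiniteMeasure ρ] (U W : ι → ℝ → ℝ → ℂ)
    (hU : ∀ p, Measurable (Function.uncurry (U p)))
    (hW : ∀ p, Measurable (Function.uncurry (W p)))
    (g : ℝ → ℝ) (hg : Integrable (fun x => g x ^ 2) ν) (C D : ι → ℝ)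
    (bU : ∀ p m x, ‖U p m x‖ ≤ C p * g x) (bW : ∀ p m x, ‖W p m x‖ ≤ D p * g x) :
    Integrable (fun x : ι → ℝ => ∏ p, ∫ m, U p m (x p) * W p m (x (σ p)) ∂ρ)
        (Measure.pi fun _ => ν) ∧
    ∫ x : ι → ℝ, ∏ p, ∫ m, U p m (x p) * W p m (x (σ p)) ∂ρ ∂(Measure.pi fun _ => ν) =
      ∫ m : ι → ℝ, ∏ p, ∫ x, U p (m p) x * W (σ.symm p) (m (σ.symm p)) x ∂ν
        ∂(Measure.pi fun _ => ρ) := by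
  let F : (ι → ℝ) → (ι → ℝ) → ℂ := fun x m => ∏ p, U p (m p) (x p) * W p (m p) (x (σ p))
  have hFm : Measurable (Function.uncurry F) := by
    refine Finset.measurable_fun_prod _ fun p _ => ?_
    refine Measurable.mul ?_ ?_
    · exact (hU p).comp (Measurable.prodMk ((measurable_pi_apply p).comp measurable_snd)
        ((measurable_pi_apply p).comp measurable_fst))
    · exact (hW p).comp (Measurable.prodMk ((measurable_pi_apply p).comp measurable_snd)
        ((measurable_pi_apply (σ p)).comp measurable_fst))
  have hFb : ∀ z : (ι → ℝ) × (ι → ℝ), ‖Function.uncurry F z‖ ≤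
      (∏ p, C p * D p) * ∏ p, g (z.1 p) ^ 2 := by
    rintro ⟨x, m⟩
    have e1 : ∏ p, g (x p) ^ 2 = ∏ p, g (x p) * g (x (σ p)) := by
      rw [Finset.prod_mul_distrib, Equiv.prod_comp σ (fun p => g (x p)),
        ← Finset.prod_mul_distrib]
      exact Finset.prod_congr rfl fun p _ => by ring
    simp only [Function.uncurry, F]
    rw [e1, ← Finset.prod_mul_distrib, norm_prod]
    refine Finset.prod_le_prod (fun p _ => norm_nonneg _) fun p _ => ?_
    rw [norm_mul]
    calc _ ≤ (C p * g (x p)) * (D p * g (x (σ p))) :=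
          mul_le_mul (bU _ _ _) (bW _ _ _) (norm_nonneg _) ((norm_nonneg _).trans (bU p (m p) _))
      _ = _ := by ring
  have hFi : Integrable (Function.uncurry F)
      ((Measure.pi fun _ : ι => ν).prod (Measure.pi fun _ : ι => ρ)) := by
    refine Integrable.mono' ?_ hFm.aestronglyMeasurable (Filter.Eventually.of_forall hFb)
    exact Integrable.comp_fst
      ((Integrable.fintype_prod (μ := fun _ : ι => ν) (f := fun (_ : ι) x => g x ^ 2)
        (fun _ => hg)).const_mul (∏ p, C p * D p)) _
  have hL : (fun x : ι → ℝ => ∏ p, ∫ m, U p m (x p) * W p m (x (σ p)) ∂ρ) =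
      fun x => ∫ m, F x m ∂(Measure.pi fun _ => ρ) := by
    funext x
    exact (integral_fintype_prod_eq_prod (fun p m => U p m (x p) * W p m (x (σ p)))).symm
  rw [hL]
  refine ⟨hFi.integral_prod_left, ?_⟩
  rw [integral_integral_swap hFi]
  congr 1
  funext m
  have hF2 : ∀ x, F x m = ∏ p, U p (m p) (x p) * W (σ.symm p) (m (σ.symm p)) (x p) := by
    intro x
    simp only [F, Finset.prod_mul_distrib]
    congr 1
    rw [← Equiv.prod_comp σ (fun p => W (σ.symm p) (m (σ.symm p)) (x p))]
    simp
  simp only [hF2]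
  exact integral_fintype_prod_eq_prod
    (fun p x => U p (m p) x * W (σ.symm p) (m (σ.symm p)) x)

/-! ### Two-pole integrals on the real line -/

theorem resolvent_bound (M h : ℝ) (hh : h ≠ 0) :
    ∃ C : ℝ, ∀ m : ℝ, |m| ≤ M → ∀ t : ℝ,
      ‖((m : ℂ) + I * h - t)⁻¹‖ ≤ C * Real.sqrt ((1 + t ^ 2)⁻¹) := by
  refine ⟨Real.sqrt (2 + (1 + 2 * M ^ 2) / h ^ 2), fun m hm t => ?_⟩
  rw [← Real.sqrt_mul (by positivity), norm_inv]
  have hn : ‖(m : ℂ) + I * h - t‖ ^ 2 = (m - t) ^ 2 + h ^ 2 := by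
    rw [Complex.sq_norm, normSq_apply]; simp; ring
  have hpos : 0 < (m - t) ^ 2 + h ^ 2 := by positivity
  apply Real.le_sqrt_of_sq_le
  rw [inv_pow, hn, ← div_eq_mul_inv, inv_eq_one_div, div_le_div_iff₀ hpos (by positivity)]
  have hm2 : m ^ 2 ≤ M ^ 2 := sq_le_sq' (by linarith [abs_le.1 hm]) (abs_le.1 hm).2
  have e : (2 + (1 + 2 * M ^ 2) / h ^ 2) * ((m - t) ^ 2 + h ^ 2) =
      2 * (m - t) ^ 2 + 2 * h ^ 2 + (1 + 2 * M ^ 2) / h ^ 2 * (m - t) ^ 2 + (1 + 2 * M ^ 2) := by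
    field_simp; ring
  rw [e]
  have : 0 ≤ (1 + 2 * M ^ 2) / h ^ 2 * (m - t) ^ 2 := by positivity
  nlinarith [sq_nonneg (2 * m - t), sq_nonneg h]

/-- Behaviour of `log (w * (t - A))` at an end of the real line; `s = ±1` is the sign of `t` there. -/
theorem tendsto_log_aux (w A : ℂ) (s : ℝ) (hw : s * w ∈ slitPlane) (l : Filter ℝ)
    (hl : Filter.Tendsto (fun t : ℝ => (t : ℂ)⁻¹) l (nhds 0)) (hs : ∀ᶠ t in l, 0 < s * t)
    (hs1 : s * s = 1) :
    Filter.Tendsto (fun t : ℝ => log (w * (t - A)) - Real.log (s * t)) l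
      (nhds (log (s * w))) := by
  have h1 : Filter.Tendsto (fun t : ℝ => (s : ℂ) * w * (1 - A * (t : ℂ)⁻¹)) l (nhds (s * w)) := by
    have := ((hl.const_mul A).const_sub 1).const_mul ((s : ℂ) * w)
    simpa using this
  have h2 := h1.clog hw
  refine h2.congr' ?_
  have hne : (s : ℂ) * w ≠ 0 := slitPlane_ne_zero hw
  have h0 : ∀ᶠ t : ℝ in l, (s : ℂ) * w * (1 - A * (t : ℂ)⁻¹) ≠ 0 := h1.eventually_ne hne
  filter_upwards [h0, hs] with t ht hst
  have ht0 : (t : ℂ) ≠ 0 := by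
    rintro h
    rw [ofReal_eq_zero] at h
    simp [h] at hst
  have : w * (t - A) = ((s * t : ℝ) : ℂ) * ((s : ℂ) * w * (1 - A * (t : ℂ)⁻¹)) := by
    have hsc : (s : ℂ) * s = 1 := by exact_mod_cast hs1
    push_cast
    field_simp
    linear_combination (-w * (t - A)) * hsc
  rw [this, log_ofReal_mul hst ht]
  ring

/-- The two-pole integral along the real line, for poles on opposite sides. -/
theorem integral_line {A B : ℂ} (hA : A.im < 0) (hB : 0 < B.im)
    (hi : Integrable fun t : ℝ => (A - t)⁻¹ * (B - t)⁻¹) :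
    ∫ t : ℝ, (A - t)⁻¹ * (B - t)⁻¹ = 2 * Real.pi * I / (B - A) := by
  have hAt : ∀ t : ℝ, A - t ≠ 0 := fun t h => by
    have := congrArg im h; simp at this; linarith
  have hBt : ∀ t : ℝ, B - t ≠ 0 := fun t h => by
    have := congrArg im h; simp at this; linarith
  have hBA : B - A ≠ 0 := fun h => by
    have := congrArg im h; simp at this; linarith
  -- The factors `±I` rotate both arguments into the right half-plane, away from the branch cut.
  let P : ℝ → ℂ := fun t => (log (I * (t - B)) - log (-I * (t - A))) / (B - A)
  have hP : ∀ t : ℝ, HasDerivAt P ((A - t)⁻¹ * (B - t)⁻¹) t := by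
    intro t
    have h1 : HasDerivAt (fun t : ℝ => I * ((t : ℂ) - B)) (I * 1) t :=
      ((ofRealCLM.hasDerivAt (x := t)).sub_const B).const_mul I
    have h2 : HasDerivAt (fun t : ℝ => -I * ((t : ℂ) - A)) (-I * 1) t :=
      ((ofRealCLM.hasDerivAt (x := t)).sub_const A).const_mul (-I)
    have h3 := h1.clog_real (by left; simpa using hB)
    have h4 := h2.clog_real (by left; simpa using hA)
    refine ((h3.sub h4).div_const (B - A)).congr_deriv ?_
    have := hAt t
    have := hBt t
    have e1 : (t : ℂ) - A ≠ 0 := by rw [← neg_sub]; exact neg_ne_zero.2 (hAt t)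
    have e2 : (t : ℂ) - B ≠ 0 := by rw [← neg_sub]; exact neg_ne_zero.2 (hBt t)
    have := I_ne_zero
    field_simp
    ring
  have hinv : ∀ l : Filter ℝ, Filter.Tendsto (fun t : ℝ => t⁻¹) l (nhds 0) →
      Filter.Tendsto (fun t : ℝ => (t : ℂ)⁻¹) l (nhds 0) := by
    intro l hl
    have := (continuous_ofReal.tendsto 0).comp hl
    simpa [Function.comp_def] using this
  have key : ∀ (s : ℝ) (l : Filter ℝ), s * s = 1 →
      Filter.Tendsto (fun t : ℝ => t⁻¹) l (nhds 0) → (∀ᶠ t in l, 0 < s * t) →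
      Filter.Tendsto P l (nhds ((log (s * I) - log (s * -I)) / (B - A))) := by
    intro s l hs hl hst
    have hs0 : s ≠ 0 := by rintro rfl; simp at hs
    have h1 := tendsto_log_aux I B s (by right; simpa using hs0) l (hinv l hl) hst hs
    have h2 := tendsto_log_aux (-I) A s (by right; simpa using hs0) l (hinv l hl) hst hs
    refine ((h1.sub h2).div_const (B - A)).congr fun t => ?_
    simp only [P]
    ring
  have hbot := key (-1) Filter.atBot (by norm_num) tendsto_inv_atBot_zero
    (by filter_upwards [Filter.eventually_lt_atBot 0] with t ht; linarith)
  have htop := key 1 Filter.atTop (by norm_num) tendsto_inv_atTop_zero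
    (by filter_upwards [Filter.eventually_gt_atTop 0] with t ht; linarith)
  rw [integral_of_hasDerivAt_of_tendsto hP hi hbot htop]
  simp [log_I, log_neg_I]
  field_simp
  ring

/-! ### Good curves and one-variable residues -/

/-- A bounded measurable function supported in `[a, b]`.  The entries of `E_L, E_R, F_L, F_R` are
extended by zero outside `[a, b]` to be of this kind, so that all bounds hold on the whole line. -/
structure Amplitude (a b : ℝ) (f : ℝ → ℂ) : Prop where
  meas : Measurable f
  bdd : ∃ M, ∀ t, ‖f t‖ ≤ M
  supp : ∀ t ∉ Set.Icc a b, f t = 0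

theorem Amplitude.mul {a b : ℝ} {f f' : ℝ → ℂ} (hf : Amplitude a b f) (hf' : Amplitude a b f') :
    Amplitude a b (fun t => f t * f' t) := by
  obtain ⟨M, hM⟩ := hf.bdd
  obtain ⟨M', hM'⟩ := hf'.bdd
  refine ⟨hf.meas.mul hf'.meas, ⟨M * M', fun t => ?_⟩, fun t ht => by simp [hf.supp t ht]⟩
  rw [norm_mul]
  exact mul_le_mul (hM t) (hM' t) (norm_nonneg _) ((norm_nonneg _).trans (hM t))

theorem amplitude_indicator {a b : ℝ} {N : ℕ} {E : ℝ → Fin N → ℂ}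
    (hE : ContinuousOn E (Set.Icc a b)) (k : Fin N) :
    Amplitude a b ((Set.Icc a b).indicator fun t => E t k) := by
  classical
  have hc : ContinuousOn (fun t => E t k) (Set.Icc a b) :=
    (continuous_apply k).comp_continuousOn hE
  refine ⟨?_, ?_, fun t ht => Set.indicator_of_notMem ht _⟩
  · rw [← Set.piecewise_eq_indicator]
    exact hc.measurable_piecewise continuousOn_const measurableSet_Icc
  · obtain ⟨M, hM⟩ := isCompact_Icc.exists_bound_of_continuousOn hc
    refine ⟨max M 0, fun t => ?_⟩
    by_cases ht : t ∈ Set.Icc a b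
    · rw [Set.indicator_of_mem ht]; exact (hM t ht).trans (le_max_left _ _)
    · rw [Set.indicator_of_notMem ht]; simp

/-- A measurable curve `γ` with weight `ω` (playing the role of `dz/dx`, orientation included), which
separates `[a, b]` from `[a, b] + ic` in the sense that the two-pole integral has the value
`-2πi / (m + ic - s)` (field `cauchy`).  The distances from `γ x` to both segments are bounded
below by a multiple of `1 / g x`, where `g ≤ 1` is square integrable. -/
structure GoodCurve (a b c : ℝ) (ν : Measure ℝ) (g : ℝ → ℝ) (γ ω : ℝ → ℂ) : Prop where
  measγ : Measurable γ
  measω : Measurable ω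
  off : ∀ m ∈ Set.Icc a b, ∀ x, γ x ≠ m
  off' : ∀ m ∈ Set.Icc a b, ∀ x, γ x ≠ m + I * c
  bddω : ∃ C, ∀ x, ‖ω x‖ ≤ C
  bound : ∃ C, ∀ m ∈ Set.Icc a b, ∀ x, ‖((m : ℂ) - γ x)⁻¹‖ ≤ C * g x
  bound' : ∃ C, ∀ m ∈ Set.Icc a b, ∀ x, ‖((m : ℂ) + I * c - γ x)⁻¹‖ ≤ C * g x
  g0 : ∀ x, 0 ≤ g x
  g1 : ∀ x, g x ≤ 1
  sq : Integrable (fun x => g x ^ 2) ν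
  cauchy : ∀ s ∈ Set.Icc a b, ∀ m ∈ Set.Icc a b,
    ∫ x, ω x * ((s : ℂ) - γ x)⁻¹ * ((m : ℂ) + I * c - γ x)⁻¹ ∂ν =
      -(2 * Real.pi * I) / ((m : ℂ) + I * c - s)

/-- `δ` plus the Cauchy transform of `f` over `[a, b]`; the entries of `χ` and `Ψ` are of this form. -/
noncomputable def stieltjes (a b : ℝ) (δ : ℂ) (f : ℝ → ℂ) (z : ℂ) : ℂ :=
  δ + ∫ s in Set.Icc a b, f s * ((s : ℂ) - z)⁻¹

theorem Amplitude.bound_mul {a b : ℝ} {f : ℝ → ℂ} (hf : Amplitude a b f) {κ : ℝ → ℝ → ℂ}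
    {g : ℝ → ℝ} (hb : ∃ C, ∀ m ∈ Set.Icc a b, ∀ x, ‖κ m x‖ ≤ C * g x) (g0 : ∀ x, 0 ≤ g x) :
    ∃ C, 0 ≤ C ∧ ∀ m x, ‖f m * κ m x‖ ≤ C * g x := by
  obtain ⟨M, hM⟩ := hf.bdd
  obtain ⟨C, hC⟩ := hb
  refine ⟨max (M * C) 0, le_max_right _ _, fun m x => ?_⟩
  by_cases hm : m ∈ Set.Icc a b
  · rw [norm_mul]
    calc _ ≤ M * (C * g x) := mul_le_mul (hM m) (hC m hm x) (norm_nonneg _)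
          ((norm_nonneg _).trans (hM m))
      _ = M * C * g x := by ring
      _ ≤ _ := mul_le_mul_of_nonneg_right (le_max_left _ _) (g0 x)
  · rw [hf.supp m hm]; simpa using mul_nonneg (le_max_right _ _) (g0 x)

section
variable {a b c : ℝ} {ν : Measure ℝ} {g : ℝ → ℝ} {γ ω : ℝ → ℂ}

theorem GoodCurve.measurable_kernel (h : GoodCurve a b c ν g γ ω) {f : ℝ → ℂ}
    (hf : Amplitude a b f) :
    Measurable (Function.uncurry fun x s : ℝ => f s * ((s : ℂ) - γ x)⁻¹) := by
  have := h.measγ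
  have := hf.meas
  simp only [Function.uncurry_def]
  fun_prop

theorem GoodCurve.measurable_stieltjes (h : GoodCurve a b c ν g γ ω) (δ : ℂ) {f : ℝ → ℂ}
    (hf : Amplitude a b f) : Measurable fun x => stieltjes a b δ f (γ x) :=
  ((h.measurable_kernel hf).stronglyMeasurable.integral_prod_right
    (ν := volume.restrict (Set.Icc a b))).measurable.const_add δ

theorem GoodCurve.bounded_stieltjes (h : GoodCurve a b c ν g γ ω) (δ : ℂ) {f : ℝ → ℂ}
    (hf : Amplitude a b f) : ∃ C, ∀ x, ‖stieltjes a b δ f (γ x)‖ ≤ C := by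
  obtain ⟨C, hC0, hC⟩ := hf.bound_mul h.bound h.g0
  refine ⟨‖δ‖ + C * (volume.restrict (Set.Icc a b)).real Set.univ, fun x => ?_⟩
  refine (norm_add_le _ _).trans (add_le_add le_rfl ?_)
  exact norm_integral_le_of_norm_le_const (Filter.Eventually.of_forall fun s =>
    (hC s x).trans (by nlinarith [h.g1 x]))

theorem GoodCurve.integrable_base (h : GoodCurve a b c ν g γ ω) {s m : ℝ}
    (hs : s ∈ Set.Icc a b) (hm : m ∈ Set.Icc a b) :
    Integrable (fun x => ω x * ((s : ℂ) - γ x)⁻¹ * ((m : ℂ) + I * c - γ x)⁻¹) ν := by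
  obtain ⟨C, hC⟩ := h.bddω
  obtain ⟨D, hD⟩ := h.bound
  obtain ⟨D', hD'⟩ := h.bound'
  have := h.measγ
  have := h.measω
  refine Integrable.mono' (h.sq.const_mul (C * D * D'))
    (Measurable.aestronglyMeasurable (by fun_prop)) (Filter.Eventually.of_forall fun x => ?_)
  rw [norm_mul, norm_mul]
  calc _ ≤ C * (D * g x) * (D' * g x) := by
        have h1 := (norm_nonneg _).trans (hC x)
        have h2 := (norm_nonneg _).trans (hD s hs x)
        exact mul_le_mul (mul_le_mul (hC x) (hD s hs x) (norm_nonneg _) h1)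
          (hD' m hm x) (norm_nonneg _) (by positivity)
    _ = _ := by ring

/-- The one-variable contour integral equals the residue at `m' + ic`, for every good curve. -/
theorem GoodCurve.stieltjes_residue [SigmaFinite ν] (h : GoodCurve a b c ν g γ ω)
    (hc : c ≠ 0) (δ : ℂ) {f : ℝ → ℂ} (hf : Amplitude a b f) {m m' : ℝ}
    (hm : m ∈ Set.Icc a b) (hm' : m' ∈ Set.Icc a b) :
    Integrable (fun x => stieltjes a b δ f (γ x) *
      (ω x * ((m : ℂ) - γ x)⁻¹ * ((m' : ℂ) + I * c - γ x)⁻¹)) ν ∧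
    ∫ x, stieltjes a b δ f (γ x) *
      (ω x * ((m : ℂ) - γ x)⁻¹ * ((m' : ℂ) + I * c - γ x)⁻¹) ∂ν =
      -(2 * Real.pi * I) / ((m' : ℂ) + I * c - m) * stieltjes a b δ f ((m' : ℂ) + I * c) := by
  set κ : ℝ → ℂ := fun x => ω x * ((m : ℂ) - γ x)⁻¹ * ((m' : ℂ) + I * c - γ x)⁻¹ with hκ
  set ρ := volume.restrict (Set.Icc a b) with hρ
  have hκi : Integrable κ ν := h.integrable_base hm hm'
  have hκm : Measurable κ := by
    have := h.measγ
    have := h.measω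
    fun_prop
  have hne : ∀ s : ℝ, (m' : ℂ) + I * c - s ≠ 0 := fun s hs => hc (by
    have := congrArg im hs; simpa using this)
  obtain ⟨K, hK⟩ := h.bounded_stieltjes δ hf
  refine ⟨hκi.bdd_mul (h.measurable_stieltjes δ hf).aestronglyMeasurable
    (Filter.Eventually.of_forall hK), ?_⟩
  obtain ⟨C, hC0, hC⟩ := hf.bound_mul h.bound h.g0
  have hFi : Integrable (Function.uncurry fun x s : ℝ => f s * ((s : ℂ) - γ x)⁻¹ * κ x)
      (ν.prod ρ) := by
    refine (hκi.comp_fst ρ).bdd_mul (c := C) (h.measurable_kernel hf).aestronglyMeasurable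
      (Filter.Eventually.of_forall fun z => ?_)
    exact (hC z.2 z.1).trans (by nlinarith [h.g1 z.1])
  have hFl : Integrable (fun x => ∫ s, f s * ((s : ℂ) - γ x)⁻¹ * κ x ∂ρ) ν :=
    hFi.integral_prod_left
  have hsplit : ∀ x, stieltjes a b δ f (γ x) * κ x =
      δ * κ x + ∫ s, f s * ((s : ℂ) - γ x)⁻¹ * κ x ∂ρ := by
    intro x
    rw [stieltjes, add_mul, integral_mul_const]
  change ∫ x, stieltjes a b δ f (γ x) * κ x ∂ν = _
  simp only [hsplit]
  rw [integral_add (hκi.const_mul δ) hFl, integral_integral_swap hFi,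
    integral_const_mul, h.cauchy m hm m' hm', stieltjes, mul_add, mul_comm δ, ← integral_const_mul]
  congr 1
  -- For `s = m` the poles collide and partial fractions are not available.
  have hae : ∀ᵐ s ∂ρ, s ≠ m := by
    rw [ae_iff]; simp
  refine integral_congr_ae ?_
  filter_upwards [hae] with s hsm
  by_cases hs : s ∈ Set.Icc a b
  swap
  · simp [hf.supp s hs]
  have hms : (m : ℂ) - s ≠ 0 := sub_ne_zero.2 (by exact_mod_cast hsm.symm)
  have hpf : ∀ x, f s * ((s : ℂ) - γ x)⁻¹ * κ x = f s / (m - s) *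
      (ω x * ((s : ℂ) - γ x)⁻¹ * ((m' : ℂ) + I * c - γ x)⁻¹ - κ x) := by
    intro x
    have h1 : (s : ℂ) - γ x ≠ 0 := sub_ne_zero.2 (h.off s hs x).symm
    have h2 : (m : ℂ) - γ x ≠ 0 := sub_ne_zero.2 (h.off m hm x).symm
    have h3 : (m' : ℂ) + I * c - γ x ≠ 0 := sub_ne_zero.2 (h.off' m' hm' x).symm
    simp only [hκ]
    field_simp
    ring
  simp only [hpf]
  rw [integral_const_mul, integral_sub (h.integrable_base hs hm') hκi, h.cauchy s hs m' hm',
    h.cauchy m hm m' hm']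
  have h1 := hne s
  have h2 := hne m
  have h3 : (s : ℂ) - (m' + I * c) ≠ 0 := by rw [← neg_sub]; exact neg_ne_zero.2 h1
  field_simp
  ring
end

/-! ### The line and the circle are good curves -/

theorem goodCurve_line {a b c : ℝ} (hc : c ≠ 0) :
    GoodCurve a b c volume (fun t => Real.sqrt ((1 + t ^ 2)⁻¹))
      (fun t => (t : ℂ) + I * (c : ℂ) / 2) (fun _ => -(Real.sign c : ℂ)) := by
  have hM : ∀ m ∈ Set.Icc a b, |m| ≤ max |a| |b| := fun m hm =>
    abs_le_max_abs_abs hm.1 hm.2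
  have e1 : ∀ m t : ℝ, (m : ℂ) - (t + I * (c : ℂ) / 2) = m + I * ((-(c / 2) : ℝ) : ℂ) - t := by
    intro m t; push_cast; ring
  have e2 : ∀ m t : ℝ, (m : ℂ) + I * c - (t + I * (c : ℂ) / 2) = m + I * ((c / 2 : ℝ) : ℂ) - t := by
    intro m t; push_cast; ring
  have hb1 : ∃ C, ∀ m ∈ Set.Icc a b, ∀ t : ℝ, ‖((m : ℂ) - (t + I * (c : ℂ) / 2))⁻¹‖ ≤
      C * Real.sqrt ((1 + t ^ 2)⁻¹) := by
    obtain ⟨C, hC⟩ := resolvent_bound (max |a| |b|) (-(c / 2)) (by simpa using hc)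
    exact ⟨C, fun m hm t => by rw [e1]; exact hC m (hM m hm) t⟩
  have hb2 : ∃ C, ∀ m ∈ Set.Icc a b, ∀ t : ℝ, ‖((m : ℂ) + I * c - (t + I * (c : ℂ) / 2))⁻¹‖ ≤
      C * Real.sqrt ((1 + t ^ 2)⁻¹) := by
    obtain ⟨C, hC⟩ := resolvent_bound (max |a| |b|) (c / 2) (by simpa using hc)
    exact ⟨C, fun m hm t => by rw [e2]; exact hC m (hM m hm) t⟩
  have hsq : Integrable (fun t : ℝ => Real.sqrt ((1 + t ^ 2)⁻¹) ^ 2) := by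
    have : ∀ t : ℝ, Real.sqrt ((1 + t ^ 2)⁻¹) ^ 2 = (1 + t ^ 2)⁻¹ := fun t =>
      Real.sq_sqrt (by positivity)
    simp only [this]
    exact integrable_inv_one_add_sq
  refine ⟨by fun_prop, by fun_prop, ?_, ?_, ⟨_, fun _ => le_rfl⟩, hb1, hb2,
    fun t => Real.sqrt_nonneg _, ?_, hsq, ?_⟩
  · intro m _ t h
    exact hc (by have := congrArg im h; simpa using this)
  · intro m _ t h
    exact hc (by have := congrArg im h; simp at this; linarith)
  · intro t
    refine Real.sqrt_le_one.2 ?_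
    exact inv_le_one_of_one_le₀ (by nlinarith [sq_nonneg t])
  · intro s hs m hm
    obtain ⟨C, hC⟩ := hb1
    obtain ⟨D, hD⟩ := hb2
    have hi : Integrable fun t : ℝ => ((s : ℂ) + I * ((-(c / 2) : ℝ) : ℂ) - t)⁻¹ *
        ((m : ℂ) + I * ((c / 2 : ℝ) : ℂ) - t)⁻¹ := by
      refine Integrable.mono' (hsq.const_mul (C * D))
        (Measurable.aestronglyMeasurable (by fun_prop)) (Filter.Eventually.of_forall fun t => ?_)
      rw [← e1, ← e2, norm_mul]
      calc _ ≤ (C * Real.sqrt ((1 + t ^ 2)⁻¹)) * (D * Real.sqrt ((1 + t ^ 2)⁻¹)) :=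
            mul_le_mul (hC s hs t) (hD m hm t) (norm_nonneg _) ((norm_nonneg _).trans (hC s hs t))
        _ = _ := by ring
    have hne : (m : ℂ) + I * c - s ≠ 0 := fun h => hc (by
      have := congrArg im h; simpa using this)
    have hne' : (s : ℂ) - (m + I * c) ≠ 0 := by rw [← neg_sub]; exact neg_ne_zero.2 hne
    simp only [e1, e2, mul_assoc]
    rw [integral_const_mul]
    rcases hc.lt_or_gt with hneg | hpos
    · have hi' := hi
      simp only [mul_comm (((s : ℂ) + I * ((-(c / 2) : ℝ) : ℂ) - _)⁻¹)] at hi' ⊢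
      rw [integral_line (by simp; linarith) (by simp; linarith) hi', Real.sign_of_neg hneg]
      have : (s : ℂ) + I * ((-(c / 2) : ℝ) : ℂ) - (m + I * ((c / 2 : ℝ) : ℂ)) =
        s - (m + I * c) := by push_cast; ring
      rw [this]
      push_cast
      field_simp
      ring
    · rw [integral_line (by simpa using hpos) (by simpa using hpos) hi, Real.sign_of_pos hpos]
      have : (m : ℂ) + I * ((c / 2 : ℝ) : ℂ) - (s + I * ((-(c / 2) : ℝ) : ℂ)) =
        m + I * c - s := by push_cast; ring
      rw [this]
      push_cast
      field_simp

theorem goodCurve_circle {a b c R : ℝ} (hR1 : (b - a) / 2 < R) (hR0 : 0 < R) (hR2 : 2 * R < |c|) :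
    GoodCurve a b c (volume.restrict (Set.Icc 0 (2 * Real.pi))) (fun _ => 1)
      (circleMap (((a + b) / 2 : ℝ) : ℂ) R) (deriv (circleMap (((a + b) / 2 : ℝ) : ℂ) R)) := by
  set z₀ : ℂ := (((a + b) / 2 : ℝ) : ℂ) with hz
  have hin : ∀ m ∈ Set.Icc a b, ‖(m : ℂ) - z₀‖ ≤ (b - a) / 2 := by
    intro m hm
    rw [hz, ← ofReal_sub, norm_real, Real.norm_eq_abs, abs_le]
    constructor <;> linarith [hm.1, hm.2]
  have hout : ∀ m : ℝ, |c| ≤ ‖(m : ℂ) + I * c - z₀‖ := by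
    intro m
    have := abs_im_le_norm ((m : ℂ) + I * c - z₀)
    simpa [hz] using this
  have hγ : ∀ θ, ‖circleMap z₀ R θ - z₀‖ = R := fun θ => by simp [abs_of_pos hR0]
  have hd1 : ∀ m ∈ Set.Icc a b, ∀ θ, R - (b - a) / 2 ≤ ‖(m : ℂ) - circleMap z₀ R θ‖ := by
    intro m hm θ
    have h1 := norm_sub_norm_le (circleMap z₀ R θ - z₀) ((m : ℂ) - z₀)
    rw [hγ, sub_sub_sub_cancel_right, norm_sub_rev _ (m : ℂ)] at h1
    linarith [hin m hm]
  have hd2 : ∀ m ∈ Set.Icc a b, ∀ θ, R ≤ ‖(m : ℂ) + I * c - circleMap z₀ R θ‖ := by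
    intro m hm θ
    have h1 := norm_sub_norm_le ((m : ℂ) + I * c - z₀) (circleMap z₀ R θ - z₀)
    rw [hγ, sub_sub_sub_cancel_right] at h1
    linarith [hout m]
  refine ⟨(continuous_circleMap _ _).measurable, ?_, ?_, ?_, ⟨R, fun θ => ?_⟩,
    ⟨(R - (b - a) / 2)⁻¹, fun m hm θ => ?_⟩, ⟨R⁻¹, fun m hm θ => ?_⟩, fun _ => zero_le_one,
    fun _ => le_rfl, by simp, ?_⟩
  · exact measurable_deriv _
  · intro m hm θ h
    have := hd1 m hm θ
    rw [h] at this
    simp at this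
    linarith
  · intro m hm θ h
    have := hd2 m hm θ
    rw [h] at this
    simp at this
    linarith
  · simp [deriv_circleMap, abs_of_pos hR0]
  · rw [norm_inv, mul_one]
    exact inv_anti₀ (by linarith) (hd1 m hm θ)
  · rw [norm_inv, mul_one]
    exact inv_anti₀ hR0 (hd2 m hm θ)
  · intro s hs m hm
    have hne : ∀ z ∈ Metric.closedBall z₀ R, (m : ℂ) + I * c - z ≠ 0 := by
      intro z hzb h0
      have h1 := hout m
      rw [sub_eq_zero.1 h0] at h1
      rw [mem_closedBall_iff_norm] at hzb
      linarith
    have hd : DiffContOnCl ℂ (fun z => ((m : ℂ) + I * c - z)⁻¹) (Metric.ball z₀ R) := by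
      apply DifferentiableOn.diffContOnCl
      intro z hz'
      have := hne z (Metric.closure_ball_subset_closedBall hz')
      exact (DifferentiableAt.inv (by fun_prop) this).differentiableWithinAt
    have hsb : (s : ℂ) ∈ Metric.ball z₀ R := by
      rw [mem_ball_iff_norm]; exact (hin s hs).trans_lt hR1
    have := hd.circleIntegral_sub_inv_smul hsb
    rw [circleIntegral, intervalIntegral.integral_of_le Real.two_pi_pos.le,
      ← integral_Icc_eq_integral_Ioc] at this
    simp only [smul_eq_mul] at this
    rw [neg_div, div_eq_mul_inv, ← this, ← integral_neg]
    congr 1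
    funext θ
    rw [← neg_sub (s : ℂ), inv_neg]
    ring

/-! ### The kernel and the cyclic trace -/

theorem Amplitude.integrable_mul {a b : ℝ} {f : ℝ → ℂ} (hf : Amplitude a b f) {φ : ℝ → ℂ}
    (hφ : ContinuousOn φ (Set.Icc a b)) :
    Integrable (fun s => f s * φ s) (volume.restrict (Set.Icc a b)) := by
  obtain ⟨M, hM⟩ := hf.bdd
  exact Integrable.bdd_mul hφ.integrableOn_Icc hf.meas.aestronglyMeasurable
    (Filter.Eventually.of_forall hM)

theorem continuousOn_resolvent {a b : ℝ} {z : ℂ}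
    (hz : z ∉ (fun t : ℝ => (t : ℂ)) '' Set.Icc a b) :
    ContinuousOn (fun s : ℝ => ((s : ℂ) - z)⁻¹) (Set.Icc a b) := by
  refine ContinuousOn.inv₀ (by fun_prop) fun s hs h => hz ⟨s, hs, ?_⟩
  exact sub_eq_zero.1 h

section
variable {a b : ℝ} {N : ℕ} {el er fl fr : Fin N → ℝ → ℂ} {χ Ψ : ℂ → Matrix (Fin N) (Fin N) ℂ}

/-- The removable singularity of the kernel at `z = w`, made explicit:
`1 - Ψ z * χ w = Ψ z * (χ z - χ w)`, and the difference of the resolvents has the factor `z - w`. -/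
theorem resolvent_kernel (hel : ∀ k, Amplitude a b (el k)) (hfr : ∀ k, Amplitude a b (fr k))
    (hχ : ∀ z ∉ (fun t : ℝ => (t : ℂ)) '' Set.Icc a b, ∀ j k,
      χ z j k = stieltjes a b ((1 : Matrix (Fin N) (Fin N) ℂ) j k) (fun s => -(fr j s * el k s)) z)
    (hinv : ∀ z ∉ (fun t : ℝ => (t : ℂ)) '' Set.Icc a b, Ψ z * χ z = 1)
    {z w : ℂ} (hz : z ∉ (fun t : ℝ => (t : ℂ)) '' Set.Icc a b)
    (hw : w ∉ (fun t : ℝ => (t : ℂ)) '' Set.Icc a b) (hzw : z - w ≠ 0) (j l : Fin N) :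
    ((1 : Matrix (Fin N) (Fin N) ℂ) - Ψ z * χ w) j l / (z - w) =
      ∫ s in Set.Icc a b, ((∑ k, Ψ z j k * fr k s) * ((s : ℂ) - z)⁻¹) *
        (-el l s * ((s : ℂ) - w)⁻¹) := by
  have hneg : ∀ k, Amplitude a b (fun s => -(fr k s * el l s)) := by
    intro k
    obtain ⟨h1, ⟨M, h2⟩, h3⟩ := (hfr k).mul (hel l)
    exact ⟨h1.neg, ⟨M, fun t => by simpa using h2 t⟩, fun t ht => by simpa using h3 t ht⟩
  have hdiff : ∀ k, χ z k l - χ w k l = (z - w) *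
      ∫ s in Set.Icc a b, -(fr k s * el l s) * (((s : ℂ) - z)⁻¹ * ((s : ℂ) - w)⁻¹) := by
    intro k
    rw [hχ z hz, hχ w hw, stieltjes, stieltjes, add_sub_add_left_eq_sub,
      ← integral_sub ((hneg k).integrable_mul (continuousOn_resolvent hz))
        ((hneg k).integrable_mul (continuousOn_resolvent hw)), ← integral_const_mul]
    refine setIntegral_congr_fun measurableSet_Icc fun s hs => ?_
    have h1 : (s : ℂ) - z ≠ 0 := fun h => hz ⟨s, hs, sub_eq_zero.1 h⟩
    have h2 : (s : ℂ) - w ≠ 0 := fun h => hw ⟨s, hs, sub_eq_zero.1 h⟩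
    field_simp
    ring
  have hint : ∀ s, ((∑ k, Ψ z j k * fr k s) * ((s : ℂ) - z)⁻¹) * (-el l s * ((s : ℂ) - w)⁻¹) =
      ∑ k, Ψ z j k * (-(fr k s * el l s) * (((s : ℂ) - z)⁻¹ * ((s : ℂ) - w)⁻¹)) := by
    intro s
    rw [Finset.sum_mul, Finset.sum_mul]
    exact Finset.sum_congr rfl fun k _ => by ring
  simp only [hint]
  have hi : ∀ k, Integrable (fun s : ℝ => Ψ z j k *
      (-(fr k s * el l s) * (((s : ℂ) - z)⁻¹ * ((s : ℂ) - w)⁻¹)))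
      (volume.restrict (Set.Icc a b)) := fun k =>
    ((hneg k).integrable_mul
      ((continuousOn_resolvent hz).mul (continuousOn_resolvent hw))).const_mul _
  rw [integral_finsetSum _ fun k _ => hi k]
  rw [← hinv z hz, ← mul_sub, Matrix.mul_apply, Finset.sum_div]
  refine Finset.sum_congr rfl fun k _ => ?_
  rw [Matrix.sub_apply, hdiff, integral_const_mul]
  field_simp

/-- The cyclic trace over good curves is absolutely convergent, and its value does not depend on
the curves. -/
theorem trace_value (hel : ∀ k, Amplitude a b (el k)) (her : ∀ k, Amplitude a b (er k))
    (hfl : ∀ k, Amplitude a b (fl k)) (hfr : ∀ k, Amplitude a b (fr k))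
    (hχ : ∀ z ∉ (fun t : ℝ => (t : ℂ)) '' Set.Icc a b, ∀ j k,
      χ z j k = stieltjes a b ((1 : Matrix (Fin N) (Fin N) ℂ) j k) (fun s => -(fr j s * el k s)) z)
    (hΨ : ∀ z ∉ (fun t : ℝ => (t : ℂ)) '' Set.Icc a b, ∀ j k,
      Ψ z j k = stieltjes a b ((1 : Matrix (Fin N) (Fin N) ℂ) j k) (fun s => er j s * fl k s) z)
    (hinv : ∀ z ∉ (fun t : ℝ => (t : ℂ)) '' Set.Icc a b, Ψ z * χ z = 1)
    {n : ℕ} (c : Fin (n + 1) → ℝ) (hc : ∀ p, c p ≠ 0) (j l : Fin (n + 1) → Fin N)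
    {ν : Measure ℝ} [SigmaFinite ν] {g : ℝ → ℝ} {γ ω : Fin (n + 1) → ℝ → ℂ}
    (h : ∀ p, GoodCurve a b (c (p - 1)) ν g (γ p) (ω p))
    (hae : ∀ᵐ x ∂(Measure.pi fun _ : Fin (n + 1) => ν), ∀ p,
      γ p (x p) - γ (p + 1) (x (p + 1)) + I * c p ≠ 0) :
    Integrable (fun x : Fin (n + 1) → ℝ => ∏ p, ω p (x p) *
      (((1 : Matrix (Fin N) (Fin N) ℂ) -
        Ψ (γ p (x p)) * χ (γ (p + 1) (x (p + 1)) - I * c p)) (j p) (l p) /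
        (γ p (x p) - γ (p + 1) (x (p + 1)) + I * c p))) (Measure.pi fun _ => ν) ∧
    ∫ x : Fin (n + 1) → ℝ, ∏ p, ω p (x p) *
      (((1 : Matrix (Fin N) (Fin N) ℂ) -
        Ψ (γ p (x p)) * χ (γ (p + 1) (x (p + 1)) - I * c p)) (j p) (l p) /
        (γ p (x p) - γ (p + 1) (x (p + 1)) + I * c p)) ∂(Measure.pi fun _ => ν) =
    ∫ m : Fin (n + 1) → ℝ, ∏ p, ∑ k, fr k (m p) * -el (l (p - 1)) (m (p - 1)) *
      (-(2 * Real.pi * I) / ((m (p - 1) : ℂ) + I * c (p - 1) - m p) *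
        Ψ ((m (p - 1) : ℂ) + I * c (p - 1)) (j p) k)
      ∂(Measure.pi fun _ => volume.restrict (Set.Icc a b)) := by
  have h' : ∀ p, GoodCurve a b (c p) ν g (γ (p + 1)) (ω (p + 1)) := fun p => by
    simpa using h (p + 1)
  have hcut : ∀ p x, γ p x ∉ (fun t : ℝ => (t : ℂ)) '' Set.Icc a b := by
    rintro p x ⟨m, hm, hmx⟩
    exact (h p).off m hm x hmx.symm
  have hcut' : ∀ p x, γ (p + 1) x - I * c p ∉ (fun t : ℝ => (t : ℂ)) '' Set.Icc a b := by
    rintro p x ⟨m, hm, hmx⟩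
    exact (h' p).off' m hm x (by rw [eq_comm, ← eq_sub_iff_add_eq]; exact hmx)
  have hcutζ : ∀ (p) (m : ℝ), (m : ℂ) + I * c p ∉ (fun t : ℝ => (t : ℂ)) '' Set.Icc a b := by
    rintro p m ⟨s, -, hs⟩
    exact hc p (by have := congrArg im hs; simpa using this.symm)
  have hf : ∀ p k, Amplitude a b (fun s => er (j p) s * fl k s) := fun p k =>
    (her (j p)).mul (hfl k)
  -- The factorization `∫ U W` of the kernel given by `resolvent_kernel`.
  set U : Fin (n + 1) → ℝ → ℝ → ℂ := fun p m x =>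
    ω p x * ((∑ k, Ψ (γ p x) (j p) k * fr k m) * ((m : ℂ) - γ p x)⁻¹) with hU
  set W : Fin (n + 1) → ℝ → ℝ → ℂ := fun p m y =>
    -el (l p) m * ((m : ℂ) - (γ (p + 1) y - I * c p))⁻¹ with hW
  have hUm : ∀ p, Measurable (Function.uncurry (U p)) := by
    intro p
    have h1 := (h p).measγ
    have h2 := (h p).measω
    have h3 : ∀ k, Measurable fun x => Ψ (γ p x) (j p) k := fun k => by
      simp only [hΨ _ (hcut p _)]
      exact (h p).measurable_stieltjes _ (hf p k)
    have h4 := fun k => (hfr k).meas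
    have h5 : Measurable fun z : ℝ × ℝ => ∑ k, Ψ (γ p z.2) (j p) k * fr k z.1 :=
      Finset.measurable_fun_sum _ fun k _ =>
        ((h3 k).comp measurable_snd).mul ((h4 k).comp measurable_fst)
    have h6 : Measurable fun z : ℝ × ℝ => ((z.1 : ℂ) - γ p z.2)⁻¹ := by fun_prop
    exact (h2.comp measurable_snd).mul (h5.mul h6)
  have hWm : ∀ p, Measurable (Function.uncurry (W p)) := by
    intro p
    have h1 := (h' p).measγ
    have h4 := fun k => (hel k).meas
    simp only [hW, Function.uncurry_def]
    fun_prop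
  have hUb : ∀ p, ∃ C, ∀ m x, ‖U p m x‖ ≤ C * g x := by
    intro p
    obtain ⟨A, hA⟩ := (h p).bddω
    have hB : ∀ k, ∃ B, ∀ x, ‖Ψ (γ p x) (j p) k‖ ≤ B := fun k => by
      simp only [hΨ _ (hcut p _)]
      exact (h p).bounded_stieltjes _ (hf p k)
    choose B hB using hB
    choose D hD0 hD using fun k => (hfr k).bound_mul (h p).bound (h p).g0
    refine ⟨∑ k, A * (B k * D k), fun m x => ?_⟩
    have e : U p m x = ∑ k, ω p x * (Ψ (γ p x) (j p) k * (fr k m * ((m : ℂ) - γ p x)⁻¹)) := by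
      simp only [hU, Finset.mul_sum, Finset.sum_mul, mul_assoc]
    rw [e, Finset.sum_mul]
    refine (norm_sum_le _ _).trans (Finset.sum_le_sum fun k _ => ?_)
    rw [norm_mul, norm_mul]
    calc _ ≤ A * (B k * (D k * g x)) :=
          mul_le_mul (hA x) (mul_le_mul (hB k x) (hD k m x) (norm_nonneg _)
            ((norm_nonneg _).trans (hB k x))) (by positivity) ((norm_nonneg _).trans (hA x))
      _ = _ := by ring
  have hWb : ∀ p, ∃ C, ∀ m x, ‖W p m x‖ ≤ C * g x := by
    intro p
    obtain ⟨D, -, hD⟩ := (hel (l p)).bound_mul (h' p).bound' (h' p).g0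
    refine ⟨D, fun m x => ?_⟩
    have e : (m : ℂ) - (γ (p + 1) x - I * c p) = m + I * c p - γ (p + 1) x := by ring
    simp only [hW, e, neg_mul, norm_neg]
    exact hD m x
  choose C hC using hUb
  choose D hD using hWb
  obtain ⟨hint, hval⟩ := cyclic_fubini (Equiv.addRight (1 : Fin (n + 1))) ν
    (volume.restrict (Set.Icc a b)) U W hUm hWm g (h 0).sq C D hC hD
  have hEq : (fun x : Fin (n + 1) → ℝ => ∏ p, ∫ m in Set.Icc a b,
      U p m (x p) * W p m (x (Equiv.addRight (1 : Fin (n + 1)) p))) =ᵐ[Measure.pi fun _ => ν]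
      fun x => ∏ p, ω p (x p) *
      (((1 : Matrix (Fin N) (Fin N) ℂ) -
        Ψ (γ p (x p)) * χ (γ (p + 1) (x (p + 1)) - I * c p)) (j p) (l p) /
        (γ p (x p) - γ (p + 1) (x (p + 1)) + I * c p)) := by
    filter_upwards [hae] with x hx
    refine Finset.prod_congr rfl fun p _ => ?_
    have e : γ p (x p) - γ (p + 1) (x (p + 1)) + I * c p =
      γ p (x p) - (γ (p + 1) (x (p + 1)) - I * c p) := by ring
    have hxp := hx p
    rw [e] at hxp ⊢
    rw [resolvent_kernel hel hfr hχ hinv (hcut p _) (hcut' p _) hxp, ← integral_const_mul]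
    simp only [hU, hW, Equiv.coe_addRight, mul_assoc]
  refine ⟨hint.congr hEq, ?_⟩
  rw [← integral_congr_ae hEq, hval]
  congr 1
  funext m
  refine Finset.prod_congr rfl fun p _ => ?_
  have hs : (Equiv.addRight (1 : Fin (n + 1))).symm p = p - 1 := by
    simp [sub_eq_add_neg]
  rw [hs]
  by_cases hm' : m (p - 1) ∈ Set.Icc a b
  swap
  · simp [hW, (hel (l (p - 1))).supp _ hm']
  by_cases hm : m p ∈ Set.Icc a b
  swap
  · simp [hU, fun k => (hfr k).supp _ hm]
  have e : ∀ x, U p (m p) x * W (p - 1) (m (p - 1)) x =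
      ∑ k, fr k (m p) * -el (l (p - 1)) (m (p - 1)) *
        (stieltjes a b ((1 : Matrix (Fin N) (Fin N) ℂ) (j p) k) (fun s => er (j p) s * fl k s)
          (γ p x) * (ω p x * ((m p : ℂ) - γ p x)⁻¹ *
            ((m (p - 1) : ℂ) + I * c (p - 1) - γ p x)⁻¹)) := by
    intro x
    have e1 : (m (p - 1) : ℂ) - (γ p x - I * c (p - 1)) =
      m (p - 1) + I * c (p - 1) - γ p x := by ring
    simp only [hU, hW, sub_add_cancel, e1, Finset.mul_sum, Finset.sum_mul]
    refine Finset.sum_congr rfl fun k _ => ?_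
    rw [hΨ _ (hcut p x)]
    ring
  have hres := fun k => (h p).stieltjes_residue (hc (p - 1))
    ((1 : Matrix (Fin N) (Fin N) ℂ) (j p) k) (hf p k) hm hm'
  simp only [e]
  rw [integral_finsetSum _ fun k _ => (hres k).1.const_mul _]
  refine Finset.sum_congr rfl fun k _ => ?_
  rw [integral_const_mul, (hres k).2, hΨ _ (hcutζ (p - 1) _)]
end

/-- Almost everywhere on the shifted lines no denominator vanishes.  For a single variable
(`p = p + 1`) the denominator is the constant `i c p`; otherwise zeros lie on a hyperplane. -/
theorem ae_line_ne {n : ℕ} (c : Fin (n + 1) → ℝ) (hc : ∀ p, c p ≠ 0) :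
    ∀ᵐ t : Fin (n + 1) → ℝ, ∀ p, ((t p : ℂ) + I * (c (p - 1) : ℂ) / 2) -
      ((t (p + 1) : ℂ) + I * (c (p + 1 - 1) : ℂ) / 2) + I * c p ≠ 0 := by
  rw [ae_all_iff]
  intro p
  by_cases hp : p = p + 1
  · have hp' : p - 1 = p := by rw [sub_eq_iff_eq_add]; exact hp
    refine Filter.Eventually.of_forall fun t ht => hc p ?_
    rw [← hp, hp'] at ht
    have := congrArg im ht
    simpa using this
  · let L : (Fin (n + 1) → ℝ) →ₗ[ℝ] ℝ := LinearMap.proj (R := ℝ) (φ := fun _ => ℝ) p - LinearMap.proj (p + 1)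
    have hL : L.ker ≠ ⊤ := by
      intro h
      have h1 : Pi.single p (1 : ℝ) ∈ L.ker := h ▸ Submodule.mem_top
      simp [L, LinearMap.mem_ker, Ne.symm hp] at h1
    have h0 := Measure.addHaar_submodule volume L.ker hL
    filter_upwards [measure_eq_zero_iff_ae_notMem.1 h0] with t ht h
    apply ht
    have := congrArg re h
    simpa [L, LinearMap.mem_ker] using this

/-- Deformation of the contour traces to the real line (kernel-level content of
`det_Γ[I+M] = det_ℝ[I+N]`): the cyclic iterated contour integral over `Γⁿ` equals the
corresponding absolutely convergent integral over `ℝⁿ` with the contours shifted to the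
lines `ℝ ± ic/2`.  The circle `Γ` of center `(a+b)/2` and radius `R` is parametrized by
`circleMap`; the number of variables is `n+1` and indices are cyclic in `Fin (n+1)`. -/
theorem trace_identity_deformation_to_real_line
    (a b R : ℝ) (hab : a < b) (N : ℕ) (hN : 1 ≤ N) (n : ℕ)
    (EL ER FL FR : ℝ → Fin N → ℂ)
    (hEL : ContinuousOn EL (Set.Icc a b)) (hER : ContinuousOn ER (Set.Icc a b))
    (hFL : ContinuousOn FL (Set.Icc a b)) (hFR : ContinuousOn FR (Set.Icc a b))
    (χ Ψ : ℂ → Matrix (Fin N) (Fin N) ℂ)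
    (hχ : ∀ z ∉ (fun t : ℝ => (t : ℂ)) '' Set.Icc a b, ∀ j k,
      χ z j k = (1 : Matrix (Fin N) (Fin N) ℂ) j k -
        ∫ μ in a..b, FR μ j * EL μ k / ((μ : ℂ) - z))
    (hΨ : ∀ z ∉ (fun t : ℝ => (t : ℂ)) '' Set.Icc a b, ∀ j k,
      Ψ z j k = (1 : Matrix (Fin N) (Fin N) ℂ) j k +
        ∫ μ in a..b, ER μ j * FL μ k / ((μ : ℂ) - z))
    (hinv : ∀ z ∉ (fun t : ℝ => (t : ℂ)) '' Set.Icc a b,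
      χ z * Ψ z = 1 ∧ Ψ z * χ z = 1)
    (cs : Fin N → ℝ) (hcs : ∀ k, cs k ≠ 0)
    (v : Fin N → Fin N) (τ : Fin (n+1) → Fin N)
    (hR1 : (b - a) / 2 < R) (hR2 : ∀ k, 2 * R < |cs k|) :
    Integrable (fun t : Fin (n+1) → ℝ =>
        ∏ p : Fin (n+1),
          ((1 : Matrix (Fin N) (Fin N) ℂ) -
              Ψ ((t p : ℂ) + Complex.I * (cs (τ (p-1)) : ℂ) / 2) *
                χ ((t (p+1) : ℂ) - Complex.I * (cs (τ p) : ℂ) / 2)) (v (τ (p-1))) (τ p) /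
            (-(Real.sign (cs (τ p)) : ℂ) *
              ((t p : ℂ) - (t (p+1) : ℂ) +
                Complex.I * ((cs (τ (p-1)) : ℂ) + (cs (τ p) : ℂ)) / 2))) ∧
    ((2 * (Real.pi : ℂ) * Complex.I)⁻¹) ^ (n+1) *
      (∫ θ in Set.univ.pi fun _ : Fin (n+1) => Set.Icc (0 : ℝ) (2 * Real.pi),
        (∏ p : Fin (n+1), deriv (circleMap (((a + b) / 2 : ℝ) : ℂ) R) (θ p)) *
        ∏ p : Fin (n+1),
          ((1 : Matrix (Fin N) (Fin N) ℂ) -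
              Ψ (circleMap (((a + b) / 2 : ℝ) : ℂ) R (θ p)) *
                χ (circleMap (((a + b) / 2 : ℝ) : ℂ) R (θ (p+1)) -
                  Complex.I * (cs (τ p) : ℂ))) (v (τ (p-1))) (τ p) /
            (circleMap (((a + b) / 2 : ℝ) : ℂ) R (θ p) -
              circleMap (((a + b) / 2 : ℝ) : ℂ) R (θ (p+1)) +
              Complex.I * (cs (τ p) : ℂ)))
    = ((2 * (Real.pi : ℂ) * Complex.I)⁻¹) ^ (n+1) *
      ∫ t : Fin (n+1) → ℝ,
        ∏ p : Fin (n+1),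
          ((1 : Matrix (Fin N) (Fin N) ℂ) -
              Ψ ((t p : ℂ) + Complex.I * (cs (τ (p-1)) : ℂ) / 2) *
                χ ((t (p+1) : ℂ) - Complex.I * (cs (τ p) : ℂ) / 2)) (v (τ (p-1))) (τ p) /
            (-(Real.sign (cs (τ p)) : ℂ) *
              ((t p : ℂ) - (t (p+1) : ℂ) +
                Complex.I * ((cs (τ (p-1)) : ℂ) + (cs (τ p) : ℂ)) / 2)) := by
  set el : Fin N → ℝ → ℂ := fun k => (Set.Icc a b).indicator fun t => EL t k with hel
  set er : Fin N → ℝ → ℂ := fun k => (Set.Icc a b).indicator fun t => ER t k with her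
  set fl : Fin N → ℝ → ℂ := fun k => (Set.Icc a b).indicator fun t => FL t k with hfl
  set fr : Fin N → ℝ → ℂ := fun k => (Set.Icc a b).indicator fun t => FR t k with hfr
  have ael : ∀ k, Amplitude a b (el k) := amplitude_indicator hEL
  have aer : ∀ k, Amplitude a b (er k) := amplitude_indicator hER
  have afl : ∀ k, Amplitude a b (fl k) := amplitude_indicator hFL
  have afr : ∀ k, Amplitude a b (fr k) := amplitude_indicator hFR
  have hχ' : ∀ z ∉ (fun t : ℝ => (t : ℂ)) '' Set.Icc a b, ∀ j k,
      χ z j k = stieltjes a b ((1 : Matrix (Fin N) (Fin N) ℂ) j k)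
        (fun s => -(fr j s * el k s)) z := by
    intro z hz j k
    rw [hχ z hz, stieltjes, sub_eq_add_neg, intervalIntegral.integral_of_le hab.le,
      ← integral_Icc_eq_integral_Ioc, ← integral_neg]
    congr 1
    refine setIntegral_congr_fun measurableSet_Icc fun s hs => ?_
    simp [hfr, hel, hs, div_eq_mul_inv]
  have hΨ' : ∀ z ∉ (fun t : ℝ => (t : ℂ)) '' Set.Icc a b, ∀ j k,
      Ψ z j k = stieltjes a b ((1 : Matrix (Fin N) (Fin N) ℂ) j k)
        (fun s => er j s * fl k s) z := by
    intro z hz j k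
    rw [hΨ z hz, stieltjes, intervalIntegral.integral_of_le hab.le,
      ← integral_Icc_eq_integral_Ioc]
    congr 1
    refine setIntegral_congr_fun measurableSet_Icc fun s hs => ?_
    simp [hfl, her, hs, div_eq_mul_inv]
  have hR0 : 0 < R := by linarith
  -- Both families of curves are fed to the same evaluation, whose value mentions neither.
  obtain ⟨hline, hlineval⟩ := trace_value ael aer afl afr hχ' hΨ' (fun z hz => (hinv z hz).2)
    (fun p => cs (τ p)) (fun p => hcs _) (fun p => v (τ (p - 1))) τ (ν := volume)
    (fun p => goodCurve_line (a := a) (b := b) (hcs (τ (p - 1))))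
    (ae_line_ne (fun p => cs (τ p)) fun p => hcs _)
  obtain ⟨-, hcirc⟩ := trace_value ael aer afl afr hχ' hΨ' (fun z hz => (hinv z hz).2)
    (fun p => cs (τ p)) (fun p => hcs _) (fun p => v (τ (p - 1))) τ
    (fun p => goodCurve_circle (c := cs (τ (p - 1))) hR1 hR0 (hR2 _))
    (Filter.Eventually.of_forall fun θ p h => by
      have h1 : ‖I * (cs (τ p) : ℂ)‖ ≤ R + R := by
        rw [eq_neg_of_add_eq_zero_right h, norm_neg,
          ← sub_sub_sub_cancel_right _ _ (((a + b) / 2 : ℝ) : ℂ)]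
        refine (norm_sub_le _ _).trans (le_of_eq ?_)
        simp [abs_of_pos hR0]
      have h2 := hR2 (τ p)
      simp at h1
      linarith)
  -- The signs are attached to the index `p` in the statement and to `p - 1` in the curve weights;
  -- the cyclic shift of the product matches them.
  have hL : (fun t : Fin (n+1) → ℝ =>
        ∏ p : Fin (n+1),
          ((1 : Matrix (Fin N) (Fin N) ℂ) -
              Ψ ((t p : ℂ) + Complex.I * (cs (τ (p-1)) : ℂ) / 2) *
                χ ((t (p+1) : ℂ) - Complex.I * (cs (τ p) : ℂ) / 2)) (v (τ (p-1))) (τ p) /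
            (-(Real.sign (cs (τ p)) : ℂ) *
              ((t p : ℂ) - (t (p+1) : ℂ) +
                Complex.I * ((cs (τ (p-1)) : ℂ) + (cs (τ p) : ℂ)) / 2))) =
      fun t => ∏ p, -(Real.sign (cs (τ (p - 1))) : ℂ) *
        (((1 : Matrix (Fin N) (Fin N) ℂ) - Ψ ((t p : ℂ) + I * (cs (τ (p - 1)) : ℂ) / 2) *
          χ ((t (p + 1) : ℂ) + I * (cs (τ (p + 1 - 1)) : ℂ) / 2 - I * cs (τ p)))
            (v (τ (p - 1))) (τ p) /
          (((t p : ℂ) + I * (cs (τ (p - 1)) : ℂ) / 2) -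
            ((t (p + 1) : ℂ) + I * (cs (τ (p + 1 - 1)) : ℂ) / 2) + I * cs (τ p))) := by
    funext t
    have hsgn : ∏ p, (-(Real.sign (cs (τ p)) : ℂ))⁻¹ =
        ∏ p, -(Real.sign (cs (τ (p - 1))) : ℂ) := by
      rw [← Equiv.prod_comp (Equiv.addRight (1 : Fin (n + 1)))
        (fun p => -(Real.sign (cs (τ (p - 1))) : ℂ))]
      refine Finset.prod_congr rfl fun p _ => ?_
      rw [Equiv.coe_addRight, add_sub_cancel_right]
      rcases (hcs (τ p)).lt_or_gt with h | h
      · simp [Real.sign_of_neg h]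
      · simp [Real.sign_of_pos h]
    refine Eq.trans ?_ (Finset.prod_mul_distrib.trans (congrArg₂ _ hsgn.symm rfl)).symm
    rw [← Finset.prod_mul_distrib]
    refine Finset.prod_congr rfl fun p _ => ?_
    have e1 : (t (p + 1) : ℂ) + I * (cs (τ (p + 1 - 1)) : ℂ) / 2 - I * cs (τ p) =
        t (p + 1) - I * cs (τ p) / 2 := by
      rw [add_sub_cancel_right]; ring
    have e2 : (t p : ℂ) + I * (cs (τ (p - 1)) : ℂ) / 2 -
        ((t (p + 1) : ℂ) + I * (cs (τ (p + 1 - 1)) : ℂ) / 2) + I * cs (τ p) =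
        t p - t (p + 1) + I * ((cs (τ (p - 1)) : ℂ) + cs (τ p)) / 2 := by
      rw [add_sub_cancel_right]; ring
    rw [e1, e2, div_mul_eq_div_div_swap, div_eq_inv_mul]
  refine ⟨hL ▸ hline, ?_⟩
  congr 1
  rw [hL]
  refine Eq.trans ?_ (hcirc.trans hlineval.symm)
  rw [volume_pi, Measure.restrict_pi_pi]
  congr 1
  funext θ
  rw [← Finset.prod_mul_distrib]
end

section
/- If δ > 0, f : ℂ → ℂ is holomorphic on the half-plane {z : Im z < δ}, and there is a constant C with |f(z)| ≤ C/(1+|z|²) for all z with Im z < δ, then f is integrable on ℝ and ∫_{−∞}^{∞} f(t) dt = 0. -/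
/-!
Apply Cauchy's theorem to the square `[-R, R] × [-R, 0]`, whose top side is the segment `[-R, R]`
of the real axis. Every point of the other three sides has norm at least `R`, so `‖f‖ ≤ C / R ^ 2`
there, and their total length is `4 * R`. Hence the integral over `[-R, R]` has norm at most
`4 * C / R`. Integrability on `ℝ` follows from comparison with `C / (1 + t ^ 2)`, so these
truncated integrals converge to the integral over `ℝ`, which is therefore zero.
-/

open Complex MeasureTheory

/-- The bound on the integral over the top side of the square `[-R, R] × [-R, 0]` coming from the
other three sides. -/
lemma norm_integral_segment_le
    (δ : ℝ) (hδ : 0 < δ) (f : ℂ → ℂ)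
    (hf : DifferentiableOn ℂ f {z : ℂ | z.im < δ})
    (C : ℝ) (hC : ∀ z : ℂ, z.im < δ → ‖f z‖ ≤ C / (1 + ‖z‖ ^ 2)) (R : ℝ) (hR : 0 < R) :
    ‖∫ t : ℝ in (-R)..R, f (t : ℂ)‖ ≤ 4 * C / R := by
  have hC0 : 0 ≤ C := by
    have h := (norm_nonneg _).trans (hC 0 (by simpa using hδ))
    simpa using h
  have key : ∀ z : ℂ, z.im ≤ 0 → R ≤ ‖z‖ → ‖f z‖ ≤ C / R ^ 2 := fun z hz hzR => by
    refine (hC z (by linarith)).trans ?_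
    have : R ^ 2 ≤ ‖z‖ ^ 2 := by gcongr
    gcongr
    linarith
  have h := integral_boundary_rect_eq_zero_of_differentiableOn f (⟨-R, -R⟩ : ℂ) (⟨R, 0⟩ : ℂ)
    (hf.mono (by
      intro z hz
      have h2 := hz.2
      simp only [Set.mem_preimage, Set.uIcc_of_le (neg_nonpos.2 hR.le), Set.mem_Icc] at h2
      exact lt_of_le_of_lt h2.2 hδ))
  simp only [ofReal_zero, zero_mul, add_zero] at h
  have hb : ‖∫ x : ℝ in (-R)..R, f (x + ((-R : ℝ) : ℂ) * I)‖ ≤ C / R ^ 2 * |R - -R| := by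
    refine intervalIntegral.norm_integral_le_of_norm_le_const fun x _ => key _ ?_ ?_
    · simpa using hR.le
    · have := abs_im_le_norm ((x : ℂ) + ((-R : ℝ) : ℂ) * I)
      simpa [abs_of_pos hR] using this
  have hs : ∀ a : ℝ, |a| = R →
      ‖∫ y : ℝ in (-R)..0, f ((a : ℂ) + y * I)‖ ≤ C / R ^ 2 * |0 - -R| := fun a ha => by
    refine intervalIntegral.norm_integral_le_of_norm_le_const fun y hy => key _ ?_ ?_
    · rw [Set.uIoc_of_le (neg_nonpos.2 hR.le)] at hy
      simpa using hy.2
    · have := abs_re_le_norm ((a : ℂ) + y * I)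
      simpa [ha] using this
  have h1 := hs R (abs_of_pos hR)
  have h2 := hs (-R) (by rw [abs_neg, abs_of_pos hR])
  have e : ∫ t : ℝ in (-R)..R, f (t : ℂ) =
      (∫ x : ℝ in (-R)..R, f (x + ((-R : ℝ) : ℂ) * I)) +
        I • (∫ y : ℝ in (-R)..0, f ((R : ℂ) + y * I)) -
        I • (∫ y : ℝ in (-R)..0, f (((-R : ℝ) : ℂ) + y * I)) := by
    linear_combination -h
  rw [e]
  refine (norm_sub_le _ _).trans ((add_le_add_left (norm_add_le _ _) _).trans ?_)
  rw [norm_smul, norm_smul, norm_I, one_mul, one_mul]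
  rw [abs_of_pos (by linarith)] at hb h1 h2
  refine (add_le_add (add_le_add hb h1) h2).trans (le_of_eq ?_)
  field_simp
  ring

/-- Contour-collapse lemma: a function holomorphic on the half-plane `{Im z < δ}`
(with `δ > 0`) decaying like `C/(1+|z|²)` there is integrable on `ℝ` with
`∫_{-∞}^{∞} f(t) dt = 0`. -/
theorem integral_eq_zero_of_holomorphic_halfplane_decay
    (δ : ℝ) (hδ : 0 < δ) (f : ℂ → ℂ)
    (hf : DifferentiableOn ℂ f {z : ℂ | z.im < δ})
    (C : ℝ) (hC : ∀ z : ℂ, z.im < δ → ‖f z‖ ≤ C / (1 + ‖z‖ ^ 2)) :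
    Integrable (fun t : ℝ => f (t : ℂ)) ∧ (∫ t : ℝ, f (t : ℂ)) = 0 := by
  have hcont : Continuous (fun t : ℝ => f (t : ℂ)) :=
    hf.continuousOn.comp_continuous continuous_ofReal (fun t => by simpa using hδ)
  have hint : Integrable (fun t : ℝ => f (t : ℂ)) := by
    refine (integrable_inv_one_add_sq.const_mul C).mono' hcont.aestronglyMeasurable
      (Filter.Eventually.of_forall fun t => ?_)
    simpa [div_eq_mul_inv] using hC t (by simpa using hδ)
  refine ⟨hint, tendsto_nhds_unique (intervalIntegral_tendsto_integral hint
    Filter.tendsto_neg_atTop_atBot Filter.tendsto_id) ?_⟩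
  refine squeeze_zero_norm' ?_ (Filter.Tendsto.const_div_atTop Filter.tendsto_id (4 * C))
  filter_upwards [Filter.eventually_gt_atTop 0] with R hR
  exact norm_integral_segment_le δ hδ f hf C hC R hR
end

section
/- Let a < b be reals, let f : ℂ → ℂ be holomorphic on ℂ∖[a,b], let h > 0 and let Γ be the counterclockwise circle of center z₀ ∈ ℝ and radius R with [a,b] contained in the open disc of center z₀ and radius R. Suppose there are constants C > 0 and d > 0 with d ≤ h and d ≤ dist(Γ,[a,b]) such that |f(z)| ≤ C/(1+|z|²) for every z with dist(z,[a,b]) ≥ d. Then t ↦ f(t−ih) and t ↦ f(t+ih) are integrable on ℝ and ∮_Γ f(z) dz = ∫_{−∞}^{∞} f(t−ih) dt − ∫_{−∞}^{∞} f(t+ih) dt. -/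
/-!
All three integrals vanish. A function that is holomorphic outside a disc has the same integral
over all larger concentric circles, and quadratic decay makes the integral over the circle of
radius `r` of order `1 / r`; hence the loop integral is zero
(`circleIntegral_eq_zero_of_quadratic_decay`). Likewise, on a half-plane `h ≤ im z`, Cauchy's theorem
on the rectangle `[-T, T] × [h, h + T]` trades the bottom side for three sides of total length `4T`
on which `‖z‖ ≥ T`, so the integral over the bottom side is of order `1 / T` and the integral over
the whole line is zero (`integral_line_eq_zero_of_quadratic_decay`). The lower line is reduced to
the upper one by `z ↦ -z`.
-/

open Complex MeasureTheory

open Filter Topology in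
lemma eq_zero_of_eventually_norm_le_div {x : ℂ} {K : ℝ}
    (hx : ∀ᶠ T : ℝ in atTop, ‖x‖ ≤ K / T) : x = 0 := by
  have h0 : Tendsto (fun T : ℝ => K / T) atTop (𝓝 0) := tendsto_const_nhds.div_atTop tendsto_id
  exact norm_le_zero_iff.mp (ge_of_tendsto h0 hx)

lemma div_one_add_sq_le {C T x : ℝ} (hC : 0 ≤ C) (hT : 0 < T) (hx : T ≤ x) :
    C / (1 + x ^ 2) ≤ C / T ^ 2 := by
  gcongr
  nlinarith

lemma integrable_line_of_quadratic_decay {f : ℂ → ℂ} {C h : ℝ} (hC : 0 ≤ C)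
    (hf : ∀ z : ℂ, h ≤ z.im → DifferentiableAt ℂ f z)
    (hdecay : ∀ z : ℂ, h ≤ z.im → ‖f z‖ ≤ C / (1 + ‖z‖ ^ 2)) :
    Integrable (fun t : ℝ => f ((t : ℂ) + I * (h : ℂ))) := by
  have hcont : Continuous (fun t : ℝ => f ((t : ℂ) + I * (h : ℂ))) := by
    refine continuous_iff_continuousAt.mpr fun t => ?_
    refine ContinuousAt.comp (f := fun t : ℝ => (t : ℂ) + I * (h : ℂ)) (g := f) ?_ ?_
    · exact (hf _ (by simp)).continuousAt
    · fun_prop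
  refine (integrable_inv_one_add_sq.const_mul C).mono' hcont.aestronglyMeasurable
    (Filter.Eventually.of_forall fun t => ?_)
  have hle : |t| ≤ ‖(t : ℂ) + I * (h : ℂ)‖ := by
    simpa using Complex.abs_re_le_norm ((t : ℂ) + I * (h : ℂ))
  calc _ ≤ C / (1 + ‖(t : ℂ) + I * (h : ℂ)‖ ^ 2) := hdecay _ (by simp)
    _ ≤ C / (1 + |t| ^ 2) := by gcongr
    _ = C * (1 + t ^ 2)⁻¹ := by rw [sq_abs, div_eq_mul_inv]

/-- Cauchy's theorem on `[-T, T] × [h, h + T]`, with the vertical and top sides estimated. -/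
lemma norm_integral_segment_le_s16 {f : ℂ → ℂ} {C h T : ℝ} (hC : 0 ≤ C) (hh : 0 < h) (hT : 0 < T)
    (hf : ∀ z : ℂ, h ≤ z.im → DifferentiableAt ℂ f z)
    (hdecay : ∀ z : ℂ, h ≤ z.im → ‖f z‖ ≤ C / (1 + ‖z‖ ^ 2)) :
    ‖∫ t in (-T)..T, f ((t : ℂ) + I * (h : ℂ))‖ ≤ 4 * C / T := by
  have key := Complex.integral_boundary_rect_eq_zero_of_differentiableOn f
    (⟨-T, h⟩ : ℂ) (⟨T, h + T⟩ : ℂ) (by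
      intro z hz
      refine (hf z ?_).differentiableWithinAt
      have := hz.2
      simp only [Set.mem_preimage, Set.uIcc_of_le (by linarith : h ≤ h + T)] at this
      exact this.1)
  dsimp only at key
  have bound : ∀ z : ℂ, h ≤ z.im → T ≤ ‖z‖ → ‖f z‖ ≤ C / T ^ 2 := fun z hz hTz =>
    (hdecay z hz).trans (div_one_add_sq_le hC hT hTz)
  have him : ∀ y ∈ Set.uIoc h (h + T), h ≤ y := fun y hy => by
    rw [Set.uIoc_of_le (by linarith)] at hy; exact hy.1.le
  have top : ‖∫ x in (-T)..T, f (x + (h + T : ℝ) * I)‖ ≤ C / T ^ 2 * |T - -T| := by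
    refine intervalIntegral.norm_integral_le_of_norm_le_const fun x _ => bound _ ?_ ?_
    · simp [hT.le]
    · refine le_trans ?_ (Complex.abs_im_le_norm _)
      refine le_trans ?_ (le_abs_self _)
      simp [hh.le]
  have right : ‖∫ y in h..(h + T), f ((T : ℝ) + y * I)‖ ≤ C / T ^ 2 * |h + T - h| := by
    refine intervalIntegral.norm_integral_le_of_norm_le_const fun y hy => bound _ ?_ ?_
    · simpa using him y hy
    · refine le_trans ?_ (Complex.abs_re_le_norm _)
      simp [le_abs_self]
  have left : ‖∫ y in h..(h + T), f ((-T : ℝ) + y * I)‖ ≤ C / T ^ 2 * |h + T - h| := by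
    refine intervalIntegral.norm_integral_le_of_norm_le_const fun y hy => bound _ ?_ ?_
    · simpa using him y hy
    · refine le_trans ?_ (Complex.abs_re_le_norm _)
      simp [le_abs_self]
  have e : (∫ t in (-T)..T, f ((t : ℂ) + I * (h : ℂ))) =
      (∫ x in (-T)..T, f (x + (h + T : ℝ) * I)) - I • (∫ y in h..(h + T), f ((T : ℝ) + y * I))
        + I • (∫ y in h..(h + T), f ((-T : ℝ) + y * I)) := by
    simp only [mul_comm I (h : ℂ)]
    linear_combination key
  rw [e]
  refine (norm_add_le _ _).trans ((add_le_add_left (norm_sub_le _ _) _).trans ?_)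
  rw [norm_smul, norm_smul, Complex.norm_I, one_mul, one_mul]
  rw [sub_neg_eq_add, abs_of_pos (by linarith)] at top
  rw [add_sub_cancel_left, abs_of_pos hT] at left right
  have e2 : 4 * C / T = C / T ^ 2 * (T + T) + C / T ^ 2 * T + C / T ^ 2 * T := by
    field_simp; ring
  linarith

lemma integral_line_eq_zero_of_quadratic_decay {f : ℂ → ℂ} {C h : ℝ} (hC : 0 ≤ C) (hh : 0 < h)
    (hf : ∀ z : ℂ, h ≤ z.im → DifferentiableAt ℂ f z)
    (hdecay : ∀ z : ℂ, h ≤ z.im → ‖f z‖ ≤ C / (1 + ‖z‖ ^ 2)) :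
    ∫ t : ℝ, f ((t : ℂ) + I * (h : ℂ)) = 0 := by
  have lim := intervalIntegral_tendsto_integral
    (integrable_line_of_quadratic_decay hC hf hdecay)
    Filter.tendsto_neg_atTop_atBot Filter.tendsto_id
  have lim0 : Filter.Tendsto (fun T : ℝ => 4 * C / T) Filter.atTop (nhds 0) :=
    tendsto_const_nhds.div_atTop Filter.tendsto_id
  refine tendsto_nhds_unique lim (squeeze_zero_norm' ?_ lim0)
  filter_upwards [Filter.eventually_gt_atTop 0] with T hT
  exact norm_integral_segment_le_s16 hC hh hT hf hdecay

/-- Expand the circle of radius `R` to radius `r → ∞`; the decay bound is only needed on circles of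
radius at least `R + d`. -/
lemma circleIntegral_eq_zero_of_quadratic_decay {f : ℂ → ℂ} {c : ℂ} {C R d : ℝ} (hC : 0 ≤ C)
    (hR : 0 < R) (hd : 0 ≤ d) (hf : ∀ z : ℂ, R ≤ dist z c → DifferentiableAt ℂ f z)
    (hdecay : ∀ z : ℂ, R + d ≤ dist z c → ‖f z‖ ≤ C / (1 + ‖z‖ ^ 2)) :
    (∮ z in C(c, R), f z) = 0 := by
  refine eq_zero_of_eventually_norm_le_div (K := 8 * Real.pi * C) ?_
  filter_upwards [Filter.eventually_ge_atTop (R + d), Filter.eventually_ge_atTop (2 * ‖c‖)]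
    with r hr hrc
  have hr0 : 0 < r := by linarith
  have hdiff : ∀ z ∈ Metric.closedBall c r \ Metric.ball c R, DifferentiableAt ℂ f z :=
    fun z hz => hf z (by simpa using hz.2)
  have hann := Complex.circleIntegral_eq_of_differentiable_on_annulus_off_countable
    hR (by linarith : R ≤ r) Set.countable_empty
    (fun z hz => (hdiff z hz).continuousAt.continuousWithinAt)
    (fun z hz => hdiff z ⟨Metric.ball_subset_closedBall hz.1.1,
      fun hz' => hz.1.2 (Metric.ball_subset_closedBall hz')⟩)
  rw [← hann]
  have hb : ∀ z ∈ Metric.sphere c r, ‖f z‖ ≤ C / (r / 2) ^ 2 := by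
    intro z hz
    have hz' : dist z c = r := hz
    refine (hdecay z (by linarith)).trans (div_one_add_sq_le hC (by linarith) ?_)
    -- `‖z‖ ≥ r - ‖c‖ ≥ r / 2`
    rw [dist_eq_norm] at hz'
    linarith [norm_sub_le z c]
  refine (circleIntegral.norm_integral_le_of_norm_le_const hr0.le hb).trans_eq ?_
  field_simp
  ring

/-- Contour-deformation lemma: a counterclockwise loop integral around `[a,b] ⊂ ℝ` of a
quadratically decaying function holomorphic off the segment equals the difference of its
integrals over the horizontal lines `ℝ - ih` and `ℝ + ih`. -/
theorem circleIntegral_eq_diff_of_line_integrals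
    (a b : ℝ) (hab : a < b) (f : ℂ → ℂ)
    (hf : DifferentiableOn ℂ f ((fun t : ℝ => (t : ℂ)) '' Set.Icc a b)ᶜ)
    (h : ℝ) (hh : 0 < h) (z₀ R : ℝ)
    (hΓ : ∀ t ∈ Set.Icc a b, dist ((t : ℂ)) ((z₀ : ℝ) : ℂ) < R)
    (C d : ℝ) (hC : 0 < C) (hd : 0 < d) (hdh : d ≤ h)
    (hdΓ : ∀ z ∈ Metric.sphere ((z₀ : ℝ) : ℂ) R,
      d ≤ Metric.infDist z ((fun t : ℝ => (t : ℂ)) '' Set.Icc a b))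
    (hdecay : ∀ z : ℂ, d ≤ Metric.infDist z ((fun t : ℝ => (t : ℂ)) '' Set.Icc a b) →
      ‖f z‖ ≤ C / (1 + ‖z‖ ^ 2)) :
    Integrable (fun t : ℝ => f ((t : ℂ) - Complex.I * (h : ℂ))) ∧
    Integrable (fun t : ℝ => f ((t : ℂ) + Complex.I * (h : ℂ))) ∧
    (∮ z in C(((z₀ : ℝ) : ℂ), R), f z) =
      (∫ t : ℝ, f ((t : ℂ) - Complex.I * (h : ℂ))) -
        ∫ t : ℝ, f ((t : ℂ) + Complex.I * (h : ℂ)) := by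
  set S : Set ℂ := (fun t : ℝ => (t : ℂ)) '' Set.Icc a b with hS
  have hopen : IsOpen Sᶜ :=
    (isCompact_Icc.image Complex.continuous_ofReal).isClosed.isOpen_compl
  have hne : S.Nonempty := (Set.nonempty_Icc.mpr hab.le).image _
  have hdiff : ∀ z ∉ S, DifferentiableAt ℂ f z := fun z hz =>
    hf.differentiableAt (hopen.mem_nhds hz)
  have hR : 0 < R := dist_nonneg.trans_lt (hΓ a ⟨le_rfl, hab.le⟩)
  have him : ∀ z : ℂ, h ≤ |z.im| → d ≤ Metric.infDist z S := by
    intro z hz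
    refine (Metric.le_infDist hne).mpr ?_
    rintro _ ⟨t, -, rfl⟩
    have := Complex.abs_im_le_norm (z - (t : ℂ))
    rw [Complex.sub_im, Complex.ofReal_im, sub_zero] at this
    rw [dist_eq_norm]
    linarith
  have hS_of : ∀ z : ℂ, d ≤ Metric.infDist z S → z ∉ S := by
    intro z hz hzS
    rw [Metric.infDist_zero_of_mem hzS] at hz
    linarith
  have hup : ∀ z : ℂ, h ≤ z.im → d ≤ Metric.infDist z S := fun z hz =>
    him z (hz.trans (le_abs_self _))
  have hlow : ∀ z : ℂ, h ≤ z.im → d ≤ Metric.infDist (-z) S := fun z hz =>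
    him (-z) (by simpa using hz.trans (le_abs_self _))
  have fd : ∀ z : ℂ, h ≤ z.im → DifferentiableAt ℂ f z := fun z hz =>
    hdiff z (hS_of z (hup z hz))
  have fb : ∀ z : ℂ, h ≤ z.im → ‖f z‖ ≤ C / (1 + ‖z‖ ^ 2) := fun z hz => hdecay z (hup z hz)
  have gd : ∀ z : ℂ, h ≤ z.im → DifferentiableAt ℂ (fun z => f (-z)) z := fun z hz =>
    DifferentiableAt.comp z (hdiff (-z) (hS_of _ (hlow z hz))) differentiableAt_id.neg
  have gb : ∀ z : ℂ, h ≤ z.im → ‖f (-z)‖ ≤ C / (1 + ‖z‖ ^ 2) := fun z hz => by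
    simpa using hdecay (-z) (hlow z hz)
  have hrefl : (fun t : ℝ => f ((t : ℂ) - I * (h : ℂ))) =
      fun t : ℝ => (fun s : ℝ => f (-((s : ℂ) + I * (h : ℂ)))) (-t) := by
    funext t
    congr 1
    push_cast
    ring
  refine ⟨?_, integrable_line_of_quadratic_decay hC.le fd fb, ?_⟩
  · rw [hrefl]
    exact (integrable_line_of_quadratic_decay hC.le gd gb).comp_neg
  · rw [hrefl, integral_neg_eq_self (fun s : ℝ => f (-((s : ℂ) + I * (h : ℂ)))) volume,
      integral_line_eq_zero_of_quadratic_decay hC.le hh gd gb,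
      integral_line_eq_zero_of_quadratic_decay hC.le hh fd fb, sub_zero]
    refine circleIntegral_eq_zero_of_quadratic_decay hC.le hR hd.le (fun z hz => hdiff z ?_)
      (fun z hz => hdecay z ((Metric.le_infDist hne).mpr ?_))
    · rintro ⟨t, ht, rfl⟩
      exact absurd (hΓ t ht) (not_lt.mpr hz)
    · rintro _ ⟨t, ht, rfl⟩
      linarith [hΓ t ht, dist_triangle z (t : ℂ) (z₀ : ℂ)]
end
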